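/- arXiv:2604.20187 — 3 statements merged into one kernel-verified Lean document; each statement's English description precedes it below -/
import Mathlib

section
/- Let k > 0 and R > 0. For x, y ∈ ℝ³ with x ≠ y write Φ(x,y) := e^{ik|x−y|}/(4π|x−y|) and j₀(s) := sin(s)/s. For y, z in the open ball B_R(0) ⊂ ℝ³ define I(y,z) := ∫_{∂B_R(0)} Φ(x,y) · D_ν[x ↦ j₀(k|x−z|)](x) ds(x), where D_ν denotes the directional derivative along the outward unit normal ν_x = x/R of the sphere ∂B_R(0) and ds is the surface measure on ∂B_R(0). Then the reciprocity relation I(y,z) = I(z,y) holds for all y, z ∈ B_R(0). -/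
open MeasureTheory Real Filter
open scoped RealInnerProductSpace Topology

abbrev E3 := EuclideanSpace ℝ (Fin 3)
abbrev S2 := Metric.sphere (0 : EuclideanSpace ℝ (Fin 3)) 1

/-- action of an isometry on the sphere -/
noncomputable def sphMap (Q : E3 ≃ₗᵢ[ℝ] E3) (w : S2) : S2 := ⟨Q w, by simp⟩

lemma sphMap_cont (Q : E3 ≃ₗᵢ[ℝ] E3) : Continuous (sphMap Q) := by
  unfold sphMap
  exact Continuous.subtype_mk (Q.continuous.comp continuous_subtype_val) _

open scoped Pointwise in
lemma sph_inv (Q : E3 ≃ₗᵢ[ℝ] E3) :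
    MeasurePreserving (sphMap Q) (volume : Measure E3).toSphere (volume : Measure E3).toSphere := by
  refine ⟨(sphMap_cont Q).measurable, ?_⟩
  ext s hs
  rw [Measure.map_apply (sphMap_cont Q).measurable hs, Measure.toSphere_apply' _ hs,
    Measure.toSphere_apply' _ ((sphMap_cont Q).measurable hs)]
  congr 1
  have hp : MeasurePreserving Q.toHomeomorph.toMeasurableEquiv (volume : Measure E3) volume :=
    Q.measurePreserving
  rw [← hp.measure_preimage_equiv (Set.Ioo (0:ℝ) 1 • ((fun x : S2 => (x : E3)) '' s))]
  congr 1
  ext v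
  simp only [Set.mem_smul, Set.mem_image, Set.mem_preimage]
  constructor
  · rintro ⟨r, hr, _, ⟨w, hw, rfl⟩, rfl⟩
    exact ⟨r, hr, _, ⟨sphMap Q w, hw, rfl⟩, (Q.map_smul r (w : E3)).symm⟩
  · rintro ⟨r, hr, _, ⟨w, hw, rfl⟩, h⟩
    refine ⟨r, hr, _, ⟨sphMap Q.symm w, ?_, rfl⟩, ?_⟩
    · have : sphMap Q (sphMap Q.symm w) = w := by ext; simp [sphMap]
      rwa [this]
    · apply Q.injective
      simp only [sphMap, map_smul, LinearIsometryEquiv.apply_symm_apply]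
      exact h

lemma sph_int (Q : E3 ≃ₗᵢ[ℝ] E3) (f : S2 → ℂ) :
    ∫ w, f (sphMap Q w) ∂(volume : Measure E3).toSphere = ∫ w, f w ∂(volume : Measure E3).toSphere := by
  have h := sph_inv Q
  refine h.integral_comp' (f := MeasurableEquiv.mk ⟨sphMap Q, sphMap Q.symm, ?_, ?_⟩ ?_ ?_) f
  · intro w; ext; simp [sphMap]
  · intro w; ext; simp [sphMap]
  · exact (sphMap_cont Q).measurable
  · exact (sphMap_cont Q.symm).measurable

/-- the kernel and its derivatives -/
noncomputable def G (c s : ℂ) : ℂ := Complex.exp (c * s ^ (1/2 : ℂ)) / s ^ (1/2 : ℂ)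
noncomputable def G1 (c s : ℂ) : ℂ :=
  Complex.exp (c * s ^ (1/2 : ℂ)) * (c * s ^ (1/2 : ℂ) - 1) / (2 * (s ^ (1/2 : ℂ))^3)
noncomputable def G2 (c s : ℂ) : ℂ :=
  Complex.exp (c * s ^ (1/2 : ℂ)) * (c^2 * (s ^ (1/2 : ℂ))^2 - 3 * c * s ^ (1/2 : ℂ) + 3)
    / (4 * (s ^ (1/2 : ℂ))^5)

lemma sqrt_ne {s : ℂ} (hs : s ∈ Complex.slitPlane) : s ^ (1/2 : ℂ) ≠ 0 := by
  have := Complex.slitPlane_ne_zero hs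
  simp [Complex.cpow_eq_zero_iff, this]

lemma sqrt_sq (s : ℂ) : (s ^ (1/2 : ℂ))^2 = s := by
  rw [one_div]; exact_mod_cast Complex.cpow_nat_inv_pow s (n := 2) (by norm_num)

lemma sqrt_der {s : ℂ} (hs : s ∈ Complex.slitPlane) :
    HasDerivAt (fun s : ℂ => s ^ (1/2 : ℂ)) (1 / (2 * s ^ (1/2 : ℂ))) s := by
  have h := (hasDerivAt_id' s).cpow_const (c := (1/2 : ℂ)) hs
  convert h using 1
  have h0 := Complex.slitPlane_ne_zero hs
  have hq := sqrt_ne hs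
  have : s ^ ((1/2 : ℂ) - 1) = s ^ (1/2 : ℂ) / s := by
    rw [Complex.cpow_sub _ _ h0, Complex.cpow_one]
  rw [this]
  have h2 := sqrt_sq s
  field_simp
  exact h2.symm

lemma G_der (c : ℂ) {s : ℂ} (hs : s ∈ Complex.slitPlane) : HasDerivAt (G c) (G1 c s) s := by
  have hq := sqrt_ne hs
  have hd := sqrt_der hs
  have := ((hd.const_mul c).cexp).div hd hq
  refine (this.congr_deriv ?_)
  unfold G1
  field_simp

lemma G1_der (c : ℂ) {s : ℂ} (hs : s ∈ Complex.slitPlane) : HasDerivAt (G1 c) (G2 c s) s := by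
  have hq := sqrt_ne hs
  have hd := sqrt_der hs
  have := (((hd.const_mul c).cexp).mul ((hd.const_mul c).sub_const 1)).div ((hd.pow 3).const_mul 2)
    (by simpa using hq)
  refine (this.congr_deriv ?_)
  unfold G2
  field_simp
  simp only [Pi.mul_apply, Pi.pow_apply]
  field_simp
  ring

lemma G2_cont (c : ℂ) : ContinuousOn (G2 c) Complex.slitPlane := by
  intro s hs
  have hq := sqrt_ne hs
  have hd := (sqrt_der hs).continuousAt
  unfold G2
  refine ContinuousAt.continuousWithinAt ?_
  refine ContinuousAt.div (by fun_prop) (by fun_prop) (by simpa using hq)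

lemma G_ode (c : ℂ) {s : ℂ} (hs : s ∈ Complex.slitPlane) :
    4 * s * G2 c s + 6 * G1 c s = c^2 * G c s := by
  have hq := sqrt_ne hs
  have h2 := sqrt_sq s
  unfold G G1 G2
  nth_rewrite 1 [← h2]
  field_simp
  ring

lemma slit {α β γ : ℝ} (hα : 0 < α) (hγ : 0 ≤ γ) (hβ : β^2 ≤ α * γ) {t : ℂ} (ht : ‖t‖^2 * γ < α) :
    (α : ℂ) - 2 * t * β + t^2 * γ ∈ Complex.slitPlane := by
  rw [Complex.mem_slitPlane_iff_not_le_zero, Complex.le_def]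
  rintro ⟨h1, h2⟩
  rw [← Complex.normSq_eq_norm_sq, Complex.normSq_apply] at ht
  simp [pow_two] at h1 h2
  set p := t.re
  set q := t.im
  have h3 : q * (p * γ - β) = 0 := by linarith
  rcases mul_eq_zero.1 h3 with h | h
  · rw [h] at h1 ht
    have h4 : (2*p*β)^2 ≤ 4 * (p^2*γ) * α := by nlinarith [mul_le_mul_of_nonneg_left hβ (sq_nonneg p)]
    have h5 : (α + p^2*γ)^2 ≤ (2*p*β)^2 := by
      have : 0 ≤ p^2*γ := by positivity
      apply pow_le_pow_left₀ (by positivity)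
      nlinarith
    nlinarith
  · have : β = p * γ := by linarith
    rw [this] at h1
    nlinarith

noncomputable abbrev sg : Measure S2 := (volume : Measure E3).toSphere

lemma derParam {U : Set ℂ} (hU : IsOpen U) {F F' : ℂ → S2 → ℂ}
    (hF : ∀ t ∈ U, Continuous (F t))
    (hF' : ContinuousOn (Function.uncurry F') (U ×ˢ Set.univ))
    (hd : ∀ t ∈ U, ∀ w, HasDerivAt (fun t => F t w) (F' t w) t) {t : ℂ} (ht : t ∈ U) :
    HasDerivAt (fun t => ∫ w, F t w ∂sg) (∫ w, F' t w ∂sg) t := by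
  obtain ⟨K, hKn, hKU, hK⟩ := local_compact_nhds (hU.mem_nhds ht)
  have hc : IsCompact (K ×ˢ (Set.univ : Set S2)) := hK.prod isCompact_univ
  obtain ⟨M, hM⟩ := hc.exists_bound_of_continuousOn (hF'.mono (Set.prod_mono hKU le_rfl))
  refine (hasDerivAt_integral_of_dominated_loc_of_deriv_le (bound := fun _ => M) hKn ?_ ?_ ?_ ?_ ?_ ?_).2
  · filter_upwards [hU.mem_nhds ht] with x hx using (hF x hx).aestronglyMeasurable
  · exact (hF t ht).integrable_of_hasCompactSupport (HasCompactSupport.of_compactSpace _)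
  · have : Continuous (F' t) := by
      have := hF'.comp_continuous (f := fun w : S2 => (t, w)) (by fun_prop) (fun w => ⟨ht, trivial⟩)
      exact this
    exact this.aestronglyMeasurable
  · exact ae_of_all _ fun w x hx => hM (x, w) ⟨hx, trivial⟩
  · exact integrable_const _
  · exact ae_of_all _ fun w x hx => hd x (hKU hx) w

lemma contParam {X : Type*} [TopologicalSpace X] [FirstCountableTopology X] {A : Set X}
    {F : X → S2 → ℂ}
    (hF : ContinuousOn (Function.uncurry F) (A ×ˢ Set.univ)) :
    ContinuousOn (fun x => ∫ w, F x w ∂sg) A := 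
  continuousOn_integral_of_compact_support (k := Set.univ) isCompact_univ hF (by simp)

/-- complexified squared distance -/
noncomputable def PP (a v : E3) (t : ℂ) : ℂ :=
  ((‖a‖^2 : ℝ) : ℂ) - 2 * t * ((⟪a, v⟫ : ℝ) : ℂ) + t^2 * ((‖v‖^2 : ℝ) : ℂ)
noncomputable def PP1 (a v : E3) (t : ℂ) : ℂ :=
  - 2 * ((⟪a, v⟫ : ℝ) : ℂ) + 2 * t * ((‖v‖^2 : ℝ) : ℂ)

lemma PP_real (a v : E3) (t : ℝ) : PP a v t = ((‖a - t • v‖^2 : ℝ) : ℂ) := by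
  unfold PP
  rw [norm_sub_sq_real, inner_smul_right, norm_smul]
  simp [mul_pow]
  norm_cast
  simp
  ring

lemma PP_slit {a v : E3} {t : ℂ} (ha : a ≠ 0) (h : ‖t‖ * ‖v‖ < ‖a‖) : PP a v t ∈ Complex.slitPlane := by
  have h0 : 0 < ‖a‖ := norm_pos_iff.2 ha
  refine slit (by positivity) (by positivity) ?_ ?_
  · rw [← mul_pow, sq_le_sq, abs_of_nonneg (by positivity : 0 ≤ ‖a‖ * ‖v‖)]
    exact abs_real_inner_le_norm a v
  · rw [← mul_pow]
    exact pow_lt_pow_left₀ h (by positivity) (by norm_num)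

lemma PP_der (a v : E3) (t : ℂ) : HasDerivAt (PP a v) (PP1 a v t) t := by
  have h := (((hasDerivAt_id' t).const_mul 2).mul_const ((⟪a, v⟫ : ℝ) : ℂ)).const_sub ((‖a‖^2 : ℝ) : ℂ)
  have h2 := ((hasDerivAt_id' t).pow 2).mul_const ((‖v‖^2 : ℝ) : ℂ)
  refine (h.add h2).congr_deriv ?_
  unfold PP1; simp

lemma PP1_der (a v : E3) (t : ℂ) : HasDerivAt (PP1 a v) (2 * ((‖v‖^2 : ℝ) : ℂ)) t := by
  have h2 := (((hasDerivAt_id' t).const_mul 2).mul_const ((‖v‖^2 : ℝ) : ℂ)).const_add (- 2 * ((⟪a, v⟫ : ℝ) : ℂ))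
  refine h2.congr_deriv ?_
  simp

noncomputable def F0 (c : ℂ) (f : S2 → ℂ) (a v : S2 → E3) (t : ℂ) : ℂ :=
  ∫ w, f w * G c (PP (a w) (v w) t) ∂sg
noncomputable def F1 (c : ℂ) (f : S2 → ℂ) (a v : S2 → E3) (t : ℂ) : ℂ :=
  ∫ w, f w * (G1 c (PP (a w) (v w) t) * PP1 (a w) (v w) t) ∂sg
noncomputable def F2 (c : ℂ) (f : S2 → ℂ) (a v : S2 → E3) (t : ℂ) : ℂ :=
  ∫ w, f w * (G2 c (PP (a w) (v w) t) * PP1 (a w) (v w) t * PP1 (a w) (v w) t +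
    G1 c (PP (a w) (v w) t) * (2 * ((‖v w‖^2 : ℝ) : ℂ))) ∂sg

section
variable {c : ℂ} {f : S2 → ℂ} {a v : S2 → E3} {δ : ℝ}

lemma PPc (ha : Continuous a) (hv : Continuous v) :
    Continuous (fun p : ℂ × S2 => PP (a p.2) (v p.2) p.1) := by
  unfold PP; fun_prop
lemma PP1c (ha : Continuous a) (hv : Continuous v) :
    Continuous (fun p : ℂ × S2 => PP1 (a p.2) (v p.2) p.1) := by
  unfold PP1; fun_prop

lemma PPs (h0 : ∀ w, a w ≠ 0) (hδ : ∀ w, δ * ‖v w‖ ≤ ‖a w‖) {t : ℂ} (ht : t ∈ Metric.ball (0:ℂ) δ) (w : S2) :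
    PP (a w) (v w) t ∈ Complex.slitPlane := by
  apply PP_slit (h0 w)
  rw [mem_ball_zero_iff] at ht
  rcases (norm_nonneg (v w)).eq_or_lt with h | h
  · rw [← h]; simpa using h0 w
  · exact (mul_lt_mul_of_pos_right ht h).trans_le (hδ w)

lemma Gc {g : ℂ → ℂ} (hg : ContinuousOn g Complex.slitPlane) (ha : Continuous a) (hv : Continuous v)
    (h0 : ∀ w, a w ≠ 0) (hδ : ∀ w, δ * ‖v w‖ ≤ ‖a w‖) :
    ContinuousOn (fun p : ℂ × S2 => g (PP (a p.2) (v p.2) p.1)) (Metric.ball (0:ℂ) δ ×ˢ Set.univ) :=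
  hg.comp (PPc ha hv).continuousOn (fun p hp => PPs h0 hδ hp.1 p.2)

lemma G_c : ContinuousOn (G c) Complex.slitPlane := fun _ hs => (G_der c hs).continuousAt.continuousWithinAt
lemma G1_c : ContinuousOn (G1 c) Complex.slitPlane := fun _ hs => (G1_der c hs).continuousAt.continuousWithinAt

lemma slice {g : ℂ × S2 → ℂ} {U : Set ℂ} (hg : ContinuousOn g (U ×ˢ Set.univ)) {t : ℂ} (ht : t ∈ U) :
    Continuous (fun w => g (t, w)) :=
  hg.comp_continuous (f := fun w : S2 => (t, w)) (by fun_prop) (fun w => ⟨ht, trivial⟩)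

lemma F0_der (hf : Continuous f) (ha : Continuous a) (hv : Continuous v)
    (h0 : ∀ w, a w ≠ 0) (hδ : ∀ w, δ * ‖v w‖ ≤ ‖a w‖) {t : ℂ} (ht : t ∈ Metric.ball (0:ℂ) δ) :
    HasDerivAt (F0 c f a v) (F1 c f a v t) t := by
  have hf2 : Continuous (fun p : ℂ × S2 => f p.2) := by fun_prop
  refine derParam (U := Metric.ball 0 δ) (F := fun t w => f w * G c (PP (a w) (v w) t))
    (F' := fun t w => f w * (G1 c (PP (a w) (v w) t) * PP1 (a w) (v w) t))
    Metric.isOpen_ball ?_ ?_ ?_ ht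
  · intro t ht
    exact slice (hf2.continuousOn.mul (Gc G_c ha hv h0 hδ)) ht
  · exact hf2.continuousOn.mul ((Gc G1_c ha hv h0 hδ).mul (PP1c ha hv).continuousOn)
  · intro t ht w
    exact ((G_der c (PPs h0 hδ ht w)).comp t (PP_der _ _ t)).const_mul (f w)

lemma F1_der (hf : Continuous f) (ha : Continuous a) (hv : Continuous v)
    (h0 : ∀ w, a w ≠ 0) (hδ : ∀ w, δ * ‖v w‖ ≤ ‖a w‖) {t : ℂ} (ht : t ∈ Metric.ball (0:ℂ) δ) :
    HasDerivAt (F1 c f a v) (F2 c f a v t) t := by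
  have hf2 : Continuous (fun p : ℂ × S2 => f p.2) := by fun_prop
  have hv2 : Continuous (fun p : ℂ × S2 => (2 * ((‖v p.2‖^2 : ℝ) : ℂ))) := by fun_prop
  refine derParam (U := Metric.ball 0 δ)
    (F := fun t w => f w * (G1 c (PP (a w) (v w) t) * PP1 (a w) (v w) t))
    (F' := fun t w => f w * (G2 c (PP (a w) (v w) t) * PP1 (a w) (v w) t * PP1 (a w) (v w) t +
    G1 c (PP (a w) (v w) t) * (2 * ((‖v w‖^2 : ℝ) : ℂ))))
    Metric.isOpen_ball ?_ ?_ ?_ ht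
  · intro t ht
    exact slice (hf2.continuousOn.mul ((Gc G1_c ha hv h0 hδ).mul (PP1c ha hv).continuousOn)) ht
  · exact hf2.continuousOn.mul ((((Gc (G2_cont c) ha hv h0 hδ).mul (PP1c ha hv).continuousOn).mul
      (PP1c ha hv).continuousOn).add ((Gc G1_c ha hv h0 hδ).mul hv2.continuousOn))
  · intro t ht w
    exact (((G1_der c (PPs h0 hδ ht w)).comp t (PP_der _ _ t)).mul (PP1_der _ _ t)).const_mul (f w)
end

/-- second derivative test -/
lemma snd_test {f f' : ℝ → ℝ} {w : ℝ} (hm : IsLocalMax f 0) (h1 : ∀ᶠ t in 𝓝 (0:ℝ), HasDerivAt f (f' t) t)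
    (h2 : HasDerivAt f' w 0) : w ≤ 0 := by
  by_contra! hw
  have hd : deriv f =ᶠ[𝓝 0] f' := h1.mono fun t ht => ht.deriv
  have hdd : deriv (deriv f) 0 = w := by rw [hd.deriv_eq, h2.deriv]
  have hmin := isLocalMin_of_deriv_deriv_pos (f := f) (x₀ := 0) (by rw [hdd]; exact hw) hm.deriv_eq_zero
    h1.self_of_nhds.continuousAt
  have hcst : f =ᶠ[𝓝 0] fun _ => f 0 := by
    filter_upwards [hm, hmin] with t h3 h4 using le_antisymm h3 h4
  have : deriv (deriv f) 0 = 0 := by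
    have : deriv f =ᶠ[𝓝 0] fun _ => 0 := by
      filter_upwards [hcst.eventuallyEq_nhds] with t ht
      rw [ht.deriv_eq]; simp
    rw [this.deriv_eq]; simp
  linarith

noncomputable def ee (i : Fin 3) : E3 := EuclideanSpace.single i 1

def Helm (k : ℝ) (u : E3 → ℂ) (x : E3) : Prop :=
  ∃ (f' : Fin 3 → ℝ → ℂ) (w : Fin 3 → ℂ),
    (∀ i, ∀ᶠ t in 𝓝 (0:ℝ), HasDerivAt (fun s : ℝ => u (x + s • ee i)) (f' i t) t) ∧
    (∀ i, HasDerivAt (f' i) (w i) 0) ∧ ∑ i, w i = -(k:ℂ)^2 * u x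

lemma Helm.sub {k : ℝ} {u v : E3 → ℂ} {x : E3} (hu : Helm k u x) (hv : Helm k v x) :
    Helm k (fun x => u x - v x) x := by
  obtain ⟨f, w, h1, h2, h3⟩ := hu
  obtain ⟨g, w', h1', h2', h3'⟩ := hv
  refine ⟨fun i t => f i t - g i t, fun i => w i - w' i, fun i => ?_, fun i => (h2 i).sub (h2' i), ?_⟩
  · filter_upwards [h1 i, h1' i] with t a b using a.sub b
  · rw [Finset.sum_sub_distrib, h3, h3']; ring

lemma Helm.const_mul {k : ℝ} {u : E3 → ℂ} {x : E3} (hu : Helm k u x) (b : ℂ) :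
    Helm k (fun x => b * u x) x := by
  obtain ⟨f, w, h1, h2, h3⟩ := hu
  refine ⟨fun i t => b * f i t, fun i => b * w i, fun i => ?_, fun i => (h2 i).const_mul b, ?_⟩
  · filter_upwards [h1 i] with t a using a.const_mul b
  · rw [← Finset.mul_sum, h3]; ring

lemma norm_line (x : E3) (i : Fin 3) (t : ℝ) : ‖x + t • ee i‖^2 = ‖x‖^2 + 2 * t * x i + t^2 := by
  rw [norm_add_sq_real, inner_smul_right, norm_smul]
  simp [ee, EuclideanSpace.inner_single_right]
  ring

lemma maxp {k r : ℝ} (hk : 0 < k) (hr : 0 < r) (hrk : r^2 * k^2 < 6) {u : E3 → ℂ}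
    (hc : ContinuousOn u (Metric.closedBall 0 r)) (hb : ∀ x, ‖x‖ = r → u x = 0)
    (hH : ∀ x, ‖x‖ < r → Helm k u x) {x : E3} (hx : ‖x‖ ≤ r) : (u x).re ≤ 0 := by
  obtain ⟨A, hA1, hA2⟩ : ∃ A, r^2 < A ∧ A * k^2 < 6 := by
    obtain ⟨A, h1, h2⟩ := exists_between ((lt_div_iff₀ (by positivity)).2 hrk)
    exact ⟨A, h1, (lt_div_iff₀ (by positivity)).1 h2⟩
  have hφ : ∀ x ∈ Metric.closedBall (0:E3) r, 0 < A - ‖x‖^2 := by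
    intro x hx
    rw [mem_closedBall_zero_iff] at hx
    have := pow_le_pow_left₀ (norm_nonneg x) hx 2
    linarith
  obtain ⟨x0, hx0, hmax⟩ := (isCompact_closedBall (0:E3) r).exists_isMaxOn
    (f := fun x => (u x).re / (A - ‖x‖^2)) ⟨0, by simp [hr.le]⟩
    ((Complex.continuous_re.comp_continuousOn hc).div (by fun_prop) (fun x hx => (hφ x hx).ne'))
  set m := (u x0).re / (A - ‖x0‖^2) with hm
  have hall : ∀ x ∈ Metric.closedBall (0:E3) r, (u x).re ≤ m * (A - ‖x‖^2) := by
    intro x hx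
    have := hmax hx
    exact (div_le_iff₀ (hφ x hx)).1 this
  have hu0 : (u x0).re = m * (A - ‖x0‖^2) := by
    rw [hm]; field_simp [(hφ x0 hx0).ne']
  have hxm : x ∈ Metric.closedBall (0:E3) r := by simpa using hx
  suffices hm0 : m ≤ 0 from (hall x hxm).trans (mul_nonpos_of_nonpos_of_nonneg hm0 (hφ x hxm).le)
  by_contra! hmp
  have hlt : ‖x0‖ < r := by
    rcases (mem_closedBall_zero_iff.1 hx0).lt_or_eq with h | h
    · exact h
    · have := hb x0 h
      rw [this] at hu0
      have := mul_pos hmp (hφ x0 hx0)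
      simp at hu0; rcases hu0 with h | h <;> simp_all
  obtain ⟨f, w, h1, h2, h3⟩ := hH x0 hlt
  have hwi : ∀ i, (w i).re + 2 * m ≤ 0 := by
    intro i
    refine snd_test (f := fun t => (u (x0 + t • ee i)).re - m * (A - (‖x0‖^2 + 2 * t * x0 i + t^2)))
      (f' := fun t => (f i t).re + m * (2 * x0 i + 2 * t)) ?_ ?_ ?_
    · have hcont : Continuous (fun t : ℝ => x0 + t • ee i) := by fun_prop
      have hev : ∀ᶠ t in 𝓝 (0:ℝ), x0 + t • ee i ∈ Metric.ball (0:E3) r := by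
        apply hcont.continuousAt.eventually_mem
        apply Metric.isOpen_ball.mem_nhds
        simpa using hlt
      filter_upwards [hev] with t ht
      have := hall _ (Metric.ball_subset_closedBall ht)
      rw [norm_line] at this
      simp [hu0]
      linarith
    · filter_upwards [h1 i] with t ht
      have hre := (Complex.reCLM.hasFDerivAt.comp_hasDerivAt t ht)
      have hp := ((((hasDerivAt_id' t).const_mul 2).mul_const (x0 i)).const_add (‖x0‖^2)).add ((hasDerivAt_id' t).pow 2)
      refine (hre.sub ((hp.const_sub A).const_mul m)).congr_deriv ?_
      simp; ring
    · have hre := (Complex.reCLM.hasFDerivAt.comp_hasDerivAt 0 (h2 i))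
      have hp := (((hasDerivAt_id' (0:ℝ)).const_mul 2).const_add (2 * x0 i)).const_mul m
      refine (hre.add hp).congr_deriv ?_
      simp; ring
  have hs : (w 0).re + (w 1).re + (w 2).re = -k^2 * (u x0).re := by
    have := congrArg Complex.re h3
    rw [Fin.sum_univ_three] at this
    have e : (-(k:ℂ)^2 * u x0).re = -k^2 * (u x0).re := by
      rw [← Complex.re_ofReal_mul]; norm_cast
    rw [← e, ← this]; simp
  have ha := hwi 0
  have hb := hwi 1
  have hc := hwi 2
  have h6 : 6 * m ≤ k^2 * (m * (A - ‖x0‖^2)) := by rw [← hu0]; linarith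
  have h7 : k^2 * (m * (A - ‖x0‖^2)) ≤ m * (A * k^2) := by
    have : 0 ≤ k^2 * m * ‖x0‖^2 := by positivity
    linarith
  have h8 := mul_lt_mul_of_pos_left hA2 hmp
  linarith

lemma uniq {k r : ℝ} (hk : 0 < k) (hr : 0 < r) (hrk : r^2 * k^2 < 6) {u : E3 → ℂ}
    (hc : ContinuousOn u (Metric.closedBall 0 r)) (hb : ∀ x, ‖x‖ = r → u x = 0)
    (hH : ∀ x, ‖x‖ < r → Helm k u x) {x : E3} (hx : ‖x‖ ≤ r) : u x = 0 := by
  have key : ∀ b : ℂ, (b * u x).re ≤ 0 := fun b =>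
    maxp hk hr hrk (u := fun x => b * u x) (hc.const_smul b) (fun x hx => by simp [hb x hx])
      (fun x hx => (hH x hx).const_mul b) hx
  have h1 := key 1
  have h2 := key (-1)
  have h3 := key Complex.I
  have h4 := key (-Complex.I)
  simp at h1 h2 h3 h4
  apply Complex.ext <;> simp <;> linarith

noncomputable def KK (c : ℂ) (R : ℝ) (y : E3) (w : S2) : ℂ := G c ((‖R • (w : E3) - y‖^2 : ℝ) : ℂ)

noncomputable def T (c d : ℂ) (R ρ : ℝ) (y z : E3) : ℂ := ∫ w, KK c R y w * KK d ρ z w ∂sg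

lemma T_comm (c d : ℂ) (R ρ : ℝ) (y z : E3) : T c d R ρ y z = T d c ρ R z y := by
  unfold T; simp_rw [mul_comm]

lemma sph_norm (w : S2) : ‖(w : E3)‖ = 1 := by simp

lemma dist_low {ρ : ℝ} (hρ : 0 < ρ) (z : E3) (w : S2) : ρ - ‖z‖ ≤ ‖ρ • (w : E3) - z‖ := by
  have := norm_sub_norm_le (ρ • (w : E3)) z
  rwa [norm_smul, sph_norm, mul_one, Real.norm_of_nonneg hρ.le] at this

lemma KK_contOn (c : ℂ) {R : ℝ} (hR : 0 < R) :
    ContinuousOn (Function.uncurry (KK c R)) (Metric.ball (0:E3) R ×ˢ Set.univ) := by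
  refine G_c.comp (f := fun p : E3 × S2 => ((‖R • (p.2 : E3) - p.1‖^2 : ℝ) : ℂ))
    (Continuous.continuousOn (by fun_prop)) ?_
  rintro ⟨y, w⟩ ⟨hy, -⟩
  have h1 := dist_low hR y w
  have h2 := mem_ball_zero_iff.1 hy
  rw [Complex.ofReal_mem_slitPlane]
  have : 0 < ‖R • (w : E3) - y‖ := by simp only at h2; linarith
  positivity

lemma KK_cont (c : ℂ) {R : ℝ} (hR : 0 < R) {y : E3} (hy : ‖y‖ < R) : Continuous (KK c R y) :=
  (KK_contOn c hR).comp_continuous (f := fun w : S2 => (y, w)) (by fun_prop)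
    (fun w => ⟨by simpa using hy, trivial⟩)

lemma T_cont (c d : ℂ) {R ρ : ℝ} (hR : 0 < R) (hρ : 0 < ρ) {y : E3} (hy : ‖y‖ < R) :
    ContinuousOn (T c d R ρ y) (Metric.ball 0 ρ) := by
  refine contParam (F := fun z w => KK c R y w * KK d ρ z w) ?_
  have : Continuous (fun p : E3 × S2 => KK c R y p.2) := (KK_cont c hR hy).comp continuous_snd
  exact this.continuousOn.mul (KK_contOn d hρ)

lemma T_inv (c d : ℂ) (R ρ : ℝ) (y z : E3) (Q : E3 ≃ₗᵢ[ℝ] E3) :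
    T c d R ρ (Q y) (Q z) = T c d R ρ y z := by
  unfold T
  rw [← sph_int Q]
  congr 1
  ext w
  have : ∀ (c : ℂ) (R : ℝ) (y : E3), KK c R (Q y) (sphMap Q w) = KK c R y w := by
    intro c R y
    unfold KK sphMap
    simp only
    rw [← map_smul, ← map_sub, Q.norm_map]
  rw [this, this]

lemma T_swap (c d : ℂ) (R ρ : ℝ) {y z : E3} (h : ‖y‖ = ‖z‖) : T c d R ρ y z = T c d R ρ z y := by
  have h1 := Submodule.reflection_sub h
  have h2 : (ℝ ∙ (y - z))ᗮ.reflection z = y := by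
    have h3 := congrArg (ℝ ∙ (y - z))ᗮ.reflection h1
    rw [Submodule.reflection_reflection] at h3
    exact h3.symm
  have := T_inv c d R ρ y z (ℝ ∙ (y - z))ᗮ.reflection
  rw [h1, h2] at this
  exact this.symm

lemma KK_PP (c : ℂ) (ρ : ℝ) (z a v : E3) (w : S2) (t : ℝ) (h : ρ • (w : E3) - z = a - t • v) :
    KK c ρ z w = G c (PP a v t) := by
  unfold KK; rw [PP_real, h]

lemma T_helm {k : ℝ} (c d : ℂ) (hd : d^2 = -(k:ℂ)^2) {R ρ : ℝ} (hR : 0 < R) (hρ : 0 < ρ) {y z : E3}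
    (hy : ‖y‖ < R) (hz : ‖z‖ < ρ) : Helm k (T c d R ρ y) z := by
  have hf := KK_cont c hR hy
  have ha : Continuous (fun w : S2 => ρ • (w : E3) - z) := by fun_prop
  have h0 : ∀ w : S2, ρ • (w : E3) - z ≠ 0 := fun w => by
    have := dist_low hρ z w
    rw [← norm_pos_iff]; linarith
  have hee : ∀ i, ‖ee i‖ = 1 := fun i => by simp [ee]
  have hδ : ∀ i, ∀ w : S2, (ρ - ‖z‖) * ‖(fun _ : S2 => ee i) w‖ ≤ ‖ρ • (w : E3) - z‖ := fun i w => by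
    simp only [hee, mul_one]; exact dist_low hρ z w
  have hF : ∀ i, (fun s : ℝ => T c d R ρ y (z + s • ee i)) = fun s : ℝ =>
      F0 d (KK c R y) (fun w => ρ • (w : E3) - z) (fun _ => ee i) (s : ℂ) := by
    intro i; ext s
    unfold T F0
    congr 1; ext w
    rw [KK_PP d ρ _ (ρ • (w : E3) - z) (ee i) w s (by abel)]
  have hball : ∀ᶠ t : ℝ in 𝓝 (0:ℝ), (t:ℂ) ∈ Metric.ball (0:ℂ) (ρ - ‖z‖) := by
    apply Complex.continuous_ofReal.continuousAt.eventually_mem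
    apply Metric.isOpen_ball.mem_nhds
    simpa using hz
  refine ⟨fun i t => F1 d (KK c R y) (fun w => ρ • (w : E3) - z) (fun _ => ee i) (t : ℂ),
    fun i => F2 d (KK c R y) (fun w => ρ • (w : E3) - z) (fun _ => ee i) ((0:ℝ) : ℂ), fun i => ?_, fun i => ?_, ?_⟩
  · rw [hF]
    filter_upwards [hball] with t ht
    exact (F0_der hf ha continuous_const h0 (hδ i) ht).comp_ofReal
  · exact (F1_der hf ha continuous_const h0 (hδ i) hball.self_of_nhds).comp_ofReal
  · unfold F2
    rw [← integral_finsetSum]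
    · rw [← hd]
      unfold T
      rw [← integral_const_mul]
      congr 1; ext w
      have hs : ((‖ρ • (w : E3) - z‖^2 : ℝ) : ℂ) ∈ Complex.slitPlane := by
        rw [Complex.ofReal_mem_slitPlane]
        have := norm_pos_iff.2 (h0 w)
        positivity
      have ode := G_ode d hs
      have hP : ∀ i, PP (ρ • (w : E3) - z) (ee i) ((0:ℝ) : ℂ) = ((‖ρ • (w : E3) - z‖^2 : ℝ) : ℂ) := by
        intro i; rw [PP_real]; simp
      have hP1 : ∀ i, PP1 (ρ • (w : E3) - z) (ee i) ((0:ℝ) : ℂ) = -2 * (((ρ • (w : E3) - z) i : ℝ) : ℂ) := by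
        intro i; unfold PP1; simp [ee, EuclideanSpace.inner_single_right]
      simp only [hP, hP1, hee]
      rw [show KK d ρ z w = G d ((‖ρ • (w : E3) - z‖^2 : ℝ) : ℂ) from rfl]
      have hn : ((‖ρ • (w : E3) - z‖^2 : ℝ) : ℂ) = (((ρ • (w : E3) - z) 0 : ℝ) : ℂ)^2 +
          (((ρ • (w : E3) - z) 1 : ℝ) : ℂ)^2 + (((ρ • (w : E3) - z) 2 : ℝ) : ℂ)^2 := by
        rw [EuclideanSpace.norm_sq_eq, Fin.sum_univ_three]
        simp only [Real.norm_eq_abs, sq_abs]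
        push_cast; rfl
      rw [Fin.sum_univ_three]
      generalize (((ρ • (w : E3) - z) 0 : ℝ) : ℂ) = a0 at *
      generalize (((ρ • (w : E3) - z) 1 : ℝ) : ℂ) = a1 at *
      generalize (((ρ • (w : E3) - z) 2 : ℝ) : ℂ) = a2 at *
      generalize ((‖ρ • (w : E3) - z‖^2 : ℝ) : ℂ) = s at *
      have : d^2 * (KK c R y w * G d s) = KK c R y w * (4 * s * G2 d s + 6 * G1 d s) := by
        rw [ode]; ring
      rw [this]
      have h4 : 4 * s * G2 d s = 4 * (a0^2+a1^2+a2^2) * G2 d s := by rw [hn]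
      rw [h4]
      push_cast
      ring
    · intro i _
      apply Continuous.integrable_of_hasCompactSupport _ (HasCompactSupport.of_compactSpace _)
      have hf2 : Continuous (fun p : ℂ × S2 => KK c R y p.2) := by fun_prop
      have hv2 : Continuous (fun p : ℂ × S2 => (2 * ((‖ee i‖^2 : ℝ) : ℂ))) := by fun_prop
      have hv : Continuous (fun _ : S2 => ee i) := continuous_const
      exact slice (hf2.continuousOn.mul ((((Gc (G2_cont d) ha hv h0 (hδ i)).mul (PP1c ha hv).continuousOn).mul
      (PP1c ha hv).continuousOn).add ((Gc G1_c ha hv h0 (hδ i)).mul hv2.continuousOn))) hball.self_of_nhds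

/-- antisymmetrization vanishes for small arguments -/
lemma T_small {k : ℝ} (hk : 0 < k) (c d : ℂ) (hc : c^2 = -(k:ℂ)^2) (hd : d^2 = -(k:ℂ)^2) {R ρ : ℝ} (hR : 0 < R)
    (hρ : 0 < ρ) {y z : E3} (hy : ‖y‖ < R) (hy' : ‖y‖ < ρ) (hyk : ‖y‖^2 * k^2 < 6) (hz : ‖z‖ ≤ ‖y‖) :
    T c d R ρ y z = T c d R ρ z y := by
  rcases (norm_nonneg y).eq_or_lt with h | h
  · have h1 : y = 0 := norm_eq_zero.1 h.symm
    have h2 : z = 0 := norm_eq_zero.1 (le_antisymm (by rwa [h]) (norm_nonneg _))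
    rw [h1, h2]
  · refine sub_eq_zero.1 (uniq (u := fun z => T c d R ρ y z - T c d R ρ z y) hk h hyk ?_ ?_ ?_ hz)
    · simp_rw [T_comm c d R ρ _ y]
      apply ContinuousOn.sub
      · exact (T_cont c d hR hρ hy).mono (Metric.closedBall_subset_ball hy')
      · exact (T_cont d c hρ hR hy').mono (Metric.closedBall_subset_ball hy)
    · intro x hx
      rw [T_swap c d R ρ hx, sub_self]
    · intro x hx
      simp_rw [T_comm c d R ρ _ y]
      exact (T_helm c d hd hR hρ hy (hx.trans hy')).sub (T_helm d c hc hρ hR hy' (hx.trans hy))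

/-- continuation -/
lemma T_ext (c d : ℂ) {R ρ m : ℝ} (hm : 0 < m) (hmR : m ≤ R) (hmρ : m ≤ ρ) {y : E3}
    (hy : ‖y‖ < m) {ε : ℝ} (hε : 0 < ε) (h : ∀ z, ‖z‖ < ε → T c d R ρ y z = T c d R ρ z y) {z : E3} (hz : ‖z‖ < m) :
    T c d R ρ y z = T c d R ρ z y := by
  have hR : 0 < R := hm.trans_le hmR
  have hρ : 0 < ρ := hm.trans_le hmρ
  rcases eq_or_ne z 0 with rfl | hz0
  · exact h 0 (by simpa using hε)
  have hzp : 0 < ‖z‖ := norm_pos_iff.2 hz0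
  set δ := m / ‖z‖ with hδ
  have hδ1 : 1 < δ := (one_lt_div hzp).2 hz
  have hδz : δ * ‖z‖ = m := by rw [hδ]; field_simp
  have key : ∀ (c d : ℂ) (R ρ : ℝ), 0 < R → 0 < ρ → m ≤ R → m ≤ ρ →
      DifferentiableOn ℂ (F0 d (KK c R y) (fun w => ρ • (w : E3)) (fun _ => z)) (Metric.ball 0 δ) ∧
      ∀ t : ℝ, F0 d (KK c R y) (fun w => ρ • (w : E3)) (fun _ => z) t = T c d R ρ y (t • z) := by
    intro c d R ρ hR hρ hmR hmρ
    refine ⟨fun t ht => ?_, fun t => ?_⟩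
    · refine (F0_der (KK_cont c hR (hy.trans_le hmR)) (by fun_prop) continuous_const ?_ ?_ ht).differentiableAt.differentiableWithinAt
      · intro w h0
        have := dist_low hρ 0 w
        simp [h0] at this
        linarith
      · intro w
        have := dist_low hρ 0 w
        simp only [norm_zero, sub_zero] at this
        simp only [hδz]; linarith
    · unfold F0 T
      congr 1; ext w
      rw [KK_PP d ρ _ (ρ • (w : E3)) z w t rfl]
  obtain ⟨k1, k1'⟩ := key c d R ρ hR hρ hmR hmρ
  obtain ⟨k2, k2'⟩ := key d c ρ R hρ hR hmρ hmR
  have han := (k1.sub k2).analyticOnNhd Metric.isOpen_ball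
  have h0 : (0:ℂ) ∈ Metric.ball (0:ℂ) δ := by simp; linarith
  have hz := han.eqOn_zero_of_preconnected_of_frequently_eq_zero
    (convex_ball (0:ℂ) δ).isPreconnected h0 ?_
  · have h1 : (1:ℂ) ∈ Metric.ball (0:ℂ) δ := by simpa using hδ1
    have := hz h1
    have e1 := k1' 1
    have e2 := k2' 1
    rw [T_comm d c] at e2
    simp only [Complex.ofReal_one, one_smul] at e1 e2
    simp only [Pi.sub_apply, e1, e2, Pi.zero_apply] at this
    exact sub_eq_zero.1 this
  · have hfr : ∃ᶠ t in 𝓝[≠] (0:ℝ), T c d R ρ y (t • z) - T c d R ρ (t • z) y = 0 := by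
      apply Eventually.frequently
      apply nhdsWithin_le_nhds
      have hcont : Continuous (fun t : ℝ => ‖t • z‖) := by fun_prop
      have : ∀ᶠ t in 𝓝 (0:ℝ), ‖t • z‖ < ε := hcont.continuousAt.eventually_lt_const (by simpa using hε)
      filter_upwards [this] with t ht
      rw [h _ ht, sub_self]
    have htend : Tendsto (fun t : ℝ => (t : ℂ)) (𝓝[≠] 0) (𝓝[≠] 0) := by
      apply tendsto_nhdsWithin_of_tendsto_nhds_of_eventually_within
      · exact (Complex.continuous_ofReal.tendsto' 0 0 (by simp)).mono_left nhdsWithin_le_nhds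
      · filter_upwards [self_mem_nhdsWithin] with t ht
        simpa using ht
    refine htend.frequently (hfr.mono fun t ht => ?_)
    simp only [Pi.sub_apply]
    rw [k1', k2', T_comm d c]
    exact ht

lemma T_symm {k : ℝ} (hk : 0 < k) (c d : ℂ) (hc : c^2 = -(k:ℂ)^2) (hd : d^2 = -(k:ℂ)^2) {R ρ m : ℝ} (hm : 0 < m)
    (hmR : m ≤ R) (hmρ : m ≤ ρ) {y z : E3} (hy : ‖y‖ < m) (hz : ‖z‖ < m) :
    T c d R ρ y z = T c d R ρ z y := by
  have hR : 0 < R := hm.trans_le hmR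
  have hρ : 0 < ρ := hm.trans_le hmρ
  obtain ⟨ε, hε, hεm, hεk⟩ : ∃ ε, 0 < ε ∧ ε ≤ m ∧ ε^2 * k^2 < 6 := by
    refine ⟨min m (1/k), lt_min hm (by positivity), min_le_left _ _, ?_⟩
    have h1 : min m (1/k) * k ≤ 1 := by
      calc _ ≤ (1/k) * k := by gcongr; exact min_le_right _ _
        _ = 1 := by field_simp
    have h2 : 0 ≤ min m (1/k) * k := by positivity
    rw [← mul_pow]
    nlinarith
  have hs : ∀ y : E3, ‖y‖ < ε → ‖y‖^2 * k^2 < 6 := fun y hy =>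
    lt_of_le_of_lt (by gcongr) hεk
  have s1 : ∀ y z : E3, ‖y‖ < ε → ‖z‖ < ε → T c d R ρ y z = T c d R ρ z y := by
    intro y z hy hz
    rcases le_total ‖z‖ ‖y‖ with h | h
    · exact T_small hk c d hc hd hR hρ (by linarith) (by linarith) (hs y hy) h
    · exact (T_small hk c d hc hd hR hρ (by linarith) (by linarith) (hs z hz) h).symm
  have s2 : ∀ y z : E3, ‖y‖ < ε → ‖z‖ < m → T c d R ρ y z = T c d R ρ z y := fun y z hy hz =>
    T_ext c d hm hmR hmρ (by linarith) hε (fun z hz => s1 y z hy hz) hz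
  exact T_ext c d hm hmR hmρ hy hε (fun z' hz' => (s2 z' y hz' hy).symm) hz

/-- the derivative version -/
noncomputable def W (c d : ℂ) (R : ℝ) (y z : E3) : ℂ :=
  F1 d (KK c R y) (fun w => R • (w : E3) - z) (fun w => -(w : E3)) 0

lemma W_aux (d : ℂ) {R : ℝ} (z : E3) (w : S2) (t : ℝ) :
    KK d (R + t) z w = G d (PP (R • (w : E3) - z) (-(w : E3)) t) :=
  KK_PP d _ _ _ _ w t (by rw [add_smul, smul_neg]; abel)

lemma W_der (c d : ℂ) {R : ℝ} (hR : 0 < R) {y z : E3} (hy : ‖y‖ < R) (hz : ‖z‖ < R) :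
    HasDerivAt (fun t : ℝ => T c d R (R + t) y z) (W c d R y z) 0 := by
  have h := F0_der (c := d) (δ := R - ‖z‖) (t := ((0:ℝ):ℂ)) (KK_cont c hR hy)
    (a := fun w => R • (w : E3) - z) (v := fun w => -(w : E3)) (by fun_prop) (by fun_prop)
    (fun w => by
      have := dist_low hR z w
      rw [← norm_pos_iff]; linarith)
    (fun w => by
      have := dist_low hR z w
      simpa using this) (by simpa using hz)
  have h2 := h.comp_ofReal
  unfold W
  rw [Complex.ofReal_zero] at h2
  convert h2 using 1
  ext t
  unfold T F0
  congr 1; ext w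
  rw [W_aux]

lemma W_symm {k : ℝ} (hk : 0 < k) (c d : ℂ) (hc : c^2 = -(k:ℂ)^2) (hd : d^2 = -(k:ℂ)^2) {R : ℝ} (hR : 0 < R)
    {y z : E3} (hy : ‖y‖ < R) (hz : ‖z‖ < R) : W c d R y z = W c d R z y := by
  refine (W_der c d hR hy hz).unique ((W_der c d hR hz hy).congr_of_eventuallyEq ?_)
  obtain ⟨m, h1, h2⟩ := exists_between (max_lt hy hz)
  have hym := (le_max_left _ _).trans_lt h1
  have hzm := (le_max_right _ _).trans_lt h1
  have : ∀ᶠ t in 𝓝 (0:ℝ), m - R < t := lt_mem_nhds (by linarith)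
  filter_upwards [this] with t ht
  exact T_symm hk c d hc hd ((norm_nonneg y).trans_lt hym) h2.le (by linarith) hym hzm

lemma G_real (c : ℂ) {r : ℝ} (hr : 0 < r) : G c ((r^2 : ℝ) : ℂ) = Complex.exp (c * r) / r := by
  have : (((r^2 : ℝ) : ℂ)) ^ (1/2 : ℂ) = (r : ℂ) := by
    have h := Complex.ofReal_cpow (sq_nonneg r) (1/2)
    rw [← Real.sqrt_eq_rpow, Real.sqrt_sq hr.le] at h
    rw [h]; norm_num
  unfold G; rw [this]

lemma j_eq {k r : ℝ} (hk : 0 < k) (hr : 0 < r) : ((Real.sin (k * r) / (k * r) : ℝ) : ℂ) =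
    1 / (2 * Complex.I * k) * (G (Complex.I * k) ((r^2 : ℝ) : ℂ) - G (-(Complex.I * k)) ((r^2 : ℝ) : ℂ)) := by
  rw [G_real _ hr, G_real _ hr]
  have : (k:ℂ) ≠ 0 := by exact_mod_cast hk.ne'
  have : (r:ℂ) ≠ 0 := by exact_mod_cast hr.ne'
  push_cast
  rw [Complex.sin]
  have e1 : -(k * r : ℂ) * Complex.I = -(Complex.I * k) * r := by ring
  have e2 : (k * r : ℂ) * Complex.I = (Complex.I * k) * r := by ring
  rw [e1, e2]
  field_simp
  rw [Complex.I_sq]; ring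

lemma fd {k R : ℝ} (hk : 0 < k) (hR : 0 < R) {z : E3} (hz : ‖z‖ < R) (w : S2) :
    fderiv ℝ (fun x : E3 => ((Real.sin (k * ‖x - z‖) / (k * ‖x - z‖) : ℝ) : ℂ)) (R • (w : E3)) (w : E3) =
    1 / (2 * Complex.I * k) *
      (G1 (Complex.I * k) (PP (R • (w : E3) - z) (-(w : E3)) 0) * PP1 (R • (w : E3) - z) (-(w : E3)) 0
      - G1 (-(Complex.I * k)) (PP (R • (w : E3) - z) (-(w : E3)) 0) * PP1 (R • (w : E3) - z) (-(w : E3)) 0) := by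
  have hlow := dist_low hR z w
  have hpos : 0 < ‖R • (w : E3) - z‖ := by linarith
  have hdiff : DifferentiableAt ℝ (fun x : E3 => ((Real.sin (k * ‖x - z‖) / (k * ‖x - z‖) : ℝ) : ℂ)) (R • (w : E3)) := by
    have hn : DifferentiableAt ℝ (fun x : E3 => ‖x - z‖) (R • (w : E3)) :=
      (differentiableAt_id.sub_const z).norm ℝ (norm_pos_iff.1 hpos)
    have hr : DifferentiableAt ℝ (fun x : E3 => Real.sin (k * ‖x - z‖) / (k * ‖x - z‖)) (R • (w : E3)) := by
      have hg : DifferentiableAt ℝ (fun s : ℝ => Real.sin (k * s) / (k * s)) ‖R • (w : E3) - z‖ :=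
        DifferentiableAt.fun_div (by fun_prop) (by fun_prop) (mul_pos hk hpos).ne'
      exact hg.comp (R • (w : E3)) hn
    exact Complex.ofRealCLM.differentiableAt.comp _ hr
  have hline : HasDerivAt (fun t : ℝ => (R + t) • (w : E3)) (w : E3) 0 := by
    have := ((hasDerivAt_id' (0:ℝ)).const_add R).smul_const (w : E3)
    simpa using this
  have h1 : HasDerivAt (fun t : ℝ => ((Real.sin (k * ‖(R + t) • (w : E3) - z‖) / (k * ‖(R + t) • (w : E3) - z‖) : ℝ) : ℂ))
      (fderiv ℝ (fun x : E3 => ((Real.sin (k * ‖x - z‖) / (k * ‖x - z‖) : ℝ) : ℂ)) (R • (w : E3)) (w : E3)) 0 := by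
    have hfd := hdiff.hasFDerivAt
    refine HasFDerivAt.comp_hasDerivAt (l := fun x : E3 => ((Real.sin (k * ‖x - z‖) / (k * ‖x - z‖) : ℝ) : ℂ)) 0 ?_ hline
    simpa using hfd
  have hsl : PP (R • (w : E3) - z) (-(w : E3)) ((0:ℝ):ℂ) ∈ Complex.slitPlane := by
    apply PP_slit (norm_pos_iff.1 hpos); simpa using hpos
  have h2 : ∀ c, HasDerivAt (fun t : ℝ => G c (PP (R • (w : E3) - z) (-(w : E3)) t))
      (G1 c (PP (R • (w : E3) - z) (-(w : E3)) ((0:ℝ):ℂ)) * PP1 (R • (w : E3) - z) (-(w : E3)) ((0:ℝ):ℂ)) 0 := by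
    intro c
    exact (HasDerivAt.comp (h₂ := G c) ((0:ℝ):ℂ) (G_der c hsl) (PP_der _ _ _)).comp_ofReal
  have h3 := ((h2 (Complex.I * k)).sub (h2 (-(Complex.I * k)))).const_mul (1 / (2 * Complex.I * k))
  rw [Complex.ofReal_zero] at h3
  refine h1.unique (h3.congr_of_eventuallyEq ?_)
  have : ∀ᶠ t in 𝓝 (0:ℝ), ‖z‖ - R < t := lt_mem_nhds (by linarith)
  filter_upwards [this] with t ht
  have hp : 0 < ‖(R + t) • (w : E3) - z‖ := by
    have := dist_low (ρ := R + t) (by linarith [norm_nonneg z]) z w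
    linarith
  simp only [Pi.sub_apply]
  rw [← W_aux, ← W_aux, j_eq hk hp]
  rfl

lemma W_int (c d : ℂ) {R : ℝ} (hR : 0 < R) {y z : E3} (hy : ‖y‖ < R) (hz : ‖z‖ < R) :
    Integrable (fun w : S2 => KK c R y w * (G1 d (PP (R • (w : E3) - z) (-(w : E3)) 0) *
      PP1 (R • (w : E3) - z) (-(w : E3)) 0)) sg := by
  apply Continuous.integrable_of_hasCompactSupport _ (HasCompactSupport.of_compactSpace _)
  have hK := KK_cont c hR hy
  have hf2 : Continuous (fun p : ℂ × S2 => KK c R y p.2) := by fun_prop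
  have ha : Continuous (fun w : S2 => R • (w : E3) - z) := by fun_prop
  have hv : Continuous (fun w : S2 => -(w : E3)) := by fun_prop
  refine slice (U := Metric.ball 0 (R - ‖z‖)) (hf2.continuousOn.mul ((Gc G1_c ha hv ?_ ?_).mul (PP1c ha hv).continuousOn)) (by simpa using hz)
  · intro w
    have := dist_low hR z w
    rw [← norm_pos_iff]; linarith
  · intro w
    have := dist_low hR z w
    simpa using this

/-- **Reciprocity relation** (Lemma 2.1, 3D case). For `k, R > 0`, with
`Φ(x,y) = e^{ik|x-y|}/(4π|x-y|)` the outgoing fundamental solution of the Helmholtz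
equation and `j₀(s) = sin s / s` the spherical Bessel function of order zero, the kernel
`I(y,z) = ∫_{∂B_R(0)} Φ(x,y) ∂_{ν_x} j₀(k|x-z|) ds(x)` (surface integral over the sphere
of radius `R`, parametrized as `x = Rω` with surface element `R² dσ(ω)` and outward unit
normal `ν_x = ω`) satisfies `I(y,z) = I(z,y)` for all `y, z` in the open ball `B_R(0)`. -/
theorem reciprocity_relation_3d (k R : ℝ) (hk : 0 < k) (hR : 0 < R)
    (σ : Measure (Metric.sphere (0 : EuclideanSpace ℝ (Fin 3)) 1))
    (hσ : σ = (volume : Measure (EuclideanSpace ℝ (Fin 3))).toSphere)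
    (Φ : EuclideanSpace ℝ (Fin 3) → EuclideanSpace ℝ (Fin 3) → ℂ)
    (hΦ : ∀ x y, Φ x y =
      Complex.exp (Complex.I * (k : ℂ) * (‖x - y‖ : ℂ)) / (4 * (π : ℂ) * (‖x - y‖ : ℂ)))
    (j₀ : ℝ → ℝ) (hj₀ : ∀ s, j₀ s = Real.sin s / s)
    (Iker : EuclideanSpace ℝ (Fin 3) → EuclideanSpace ℝ (Fin 3) → ℂ)
    (hIker : ∀ y z, Iker y z =
      ∫ ω : Metric.sphere (0 : EuclideanSpace ℝ (Fin 3)) 1,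
        (R ^ 2 : ℝ) •
          (Φ (R • (ω : EuclideanSpace ℝ (Fin 3))) y *
            fderiv ℝ (fun x : EuclideanSpace ℝ (Fin 3) => (j₀ (k * ‖x - z‖) : ℂ))
              (R • (ω : EuclideanSpace ℝ (Fin 3))) (ω : EuclideanSpace ℝ (Fin 3))) ∂σ)
    (y z : EuclideanSpace ℝ (Fin 3))
    (hy : y ∈ Metric.ball (0 : EuclideanSpace ℝ (Fin 3)) R)
    (hz : z ∈ Metric.ball (0 : EuclideanSpace ℝ (Fin 3)) R) :
    Iker y z = Iker z y := by
  have hfun : j₀ = fun s => Real.sin s / s := funext hj₀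
  subst hσ
  subst hfun
  have key : ∀ y z : E3, ‖y‖ < R → ‖z‖ < R → Iker y z =
      (R^2 / (4 * π) : ℂ) * (1 / (2 * Complex.I * k)) *
        (W (Complex.I * k) (Complex.I * k) R y z - W (Complex.I * k) (-(Complex.I * k)) R y z) := by
    intro y z hy hz
    rw [hIker]
    unfold W F1
    rw [← integral_sub (W_int _ _ hR hy hz) (W_int _ _ hR hy hz), ← integral_const_mul]
    congr 1
    ext w
    have hp : 0 < ‖R • (w : E3) - y‖ := by
      have := dist_low hR y w
      linarith
    have hK : KK (Complex.I * k) R y w = _ := G_real (Complex.I * k) hp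
    rw [hΦ, fd hk hR hz w, hK, Complex.real_smul]
    have : (‖R • (w : E3) - y‖ : ℂ) ≠ 0 := by exact_mod_cast hp.ne'
    have : (k : ℂ) ≠ 0 := by exact_mod_cast hk.ne'
    have : (π : ℂ) ≠ 0 := by exact_mod_cast Real.pi_ne_zero
    push_cast
    field_simp
  have hy' := mem_ball_zero_iff.1 hy
  have hz' := mem_ball_zero_iff.1 hz
  have hc : (Complex.I * k)^2 = -(k:ℂ)^2 := by rw [mul_pow, Complex.I_sq]; ring
  have hd : (-(Complex.I * k))^2 = -(k:ℂ)^2 := by rw [neg_sq, hc]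
  rw [key y z hy' hz', key z y hz' hy', W_symm hk _ _ hc hc hR hy' hz', W_symm hk _ _ hc hd hR hy' hz']
end

section
/- Let S : ℝ³ → ℝ be smooth with compact support contained in the open ball B_R(0), and let p(x,t) := (t/(4π)) ∫_{S²} S(x + tω) dσ(ω) be the Kirchhoff solution of the wave equation with zero initial value and initial velocity S. Then for every y ∈ B_R(0), S(y) = ∫_{∂B_R(0)} [((x−y)·ν_x)/(2π|x−y|²)] · ( ∂_t p(x,|x−y|)/|x−y| − ∂_{tt} p(x,|x−y|) ) ds(x), where ν_x = x/R is the outward unit normal of the sphere ∂B_R(0) and ds its surface measure. -/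
open MeasureTheory Real Filter
open scoped RealInnerProductSpace Topology


local notation "E3" => EuclideanSpace ℝ (Fin 3)
local notation "Sph" => Metric.sphere (0 : EuclideanSpace ℝ (Fin 3)) 1
local notation "sig" => Measure.toSphere (volume : Measure (EuclideanSpace ℝ (Fin 3)))

lemma nf_pow_integral (g : ℝ → ℝ) :
    ∫ r : Set.Ioi (0:ℝ), g r ∂(Measure.volumeIoiPow 2) = ∫ r in Set.Ioi (0:ℝ), r ^ 2 * g r := by
  simp only [Measure.volumeIoiPow, ENNReal.ofReal]
  rw [integral_withDensity_eq_integral_smul,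
        integral_subtype_comap measurableSet_Ioi fun a ↦ Real.toNNReal (a ^ 2) • g a,
        setIntegral_congr_fun measurableSet_Ioi fun x hx ↦ ?_]
  · simp only [NNReal.smul_def, Real.coe_toNNReal _ (sq_nonneg _), smul_eq_mul]
  · exact (measurable_subtype_coe.pow_const _).real_toNNReal

lemma nf_polar_prod (f : E3 → ℝ) :
    ∫ x, f x = ∫ q : Sph × Set.Ioi (0:ℝ), f ((q.2 : ℝ) • (q.1 : E3))
      ∂((sig).prod (Measure.volumeIoiPow 2)) := by
  have h := (volume : Measure E3).measurePreserving_homeomorphUnitSphereProd.integral_comp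
        (Homeomorph.measurableEmbedding _) (fun q => f ((q.2 : ℝ) • (q.1 : E3)))
  have h3 : Module.finrank ℝ E3 - 1 = 2 := by simp
  rw [h3] at h
  have e : ∫ x, f x = ∫ x : ({0}ᶜ : Set E3), f x ∂((volume : Measure E3).comap (↑)) := by
    rw [integral_subtype_comap (measurableSet_singleton _).compl f, restrict_compl_singleton]
  rw [← h, e]
  refine integral_congr_ae (Eventually.of_forall fun x => ?_)
  have hx : (x : E3) ≠ 0 := x.2
  simp [smul_smul, hx]

lemma nf_polar_integrable (f : E3 → ℝ) (hf : Integrable f) :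
    Integrable (fun q : Sph × Set.Ioi (0:ℝ) => f ((q.2 : ℝ) • (q.1 : E3)))
      ((sig).prod (Measure.volumeIoiPow 2)) := by
  have h := (volume : Measure E3).measurePreserving_homeomorphUnitSphereProd.integrable_comp_emb
        (Homeomorph.measurableEmbedding _) (g := fun q => f ((q.2 : ℝ) • (q.1 : E3)))
  have h3 : Module.finrank ℝ E3 - 1 = 2 := by simp
  rw [h3] at h
  rw [← h]
  rw [← restrict_compl_singleton (μ := (volume : Measure E3)) 0, ← IntegrableOn,
    integrableOn_iff_comap_subtypeVal (by measurability)] at hf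
  refine hf.congr (Eventually.of_forall fun x => ?_)
  have hx : (x : E3) ≠ 0 := x.2
  simp [smul_smul, hx]

lemma nf_polar_mul (k : E3 → ℝ) (h : ℝ → ℝ) :
    ∫ x : E3, k (‖x‖⁻¹ • x) * h ‖x‖ =
      (∫ w : Sph, k w ∂sig) * ∫ r in Set.Ioi (0:ℝ), r ^ 2 * h r := by
  rw [nf_polar_prod, ← nf_pow_integral,
    ← integral_prod_mul (μ := sig) (ν := Measure.volumeIoiPow 2) (fun w : Sph => k w)
      (fun r : Set.Ioi (0:ℝ) => h r)]
  refine integral_congr_ae (Eventually.of_forall fun x => ?_)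
  have h1 : ‖(x.1 : E3)‖ = 1 := by simp
  have h2 : (0:ℝ) < x.2 := x.2.2
  simp [norm_smul, smul_smul, h2.ne', abs_of_pos h2]

lemma nf_polar (f : E3 → ℝ) (hf : Integrable f) :
    ∫ x, f x = ∫ w : Sph, (∫ r in Set.Ioi (0:ℝ), r ^ 2 * f (r • (w : E3))) ∂sig := by
  rw [nf_polar_prod, integral_prod _ (nf_polar_integrable f hf)]
  refine integral_congr_ae (Eventually.of_forall fun w => ?_)
  exact nf_pow_integral (fun r => f (r • (w : E3)))

lemma nf_polar' (f : E3 → ℝ) (hf : Integrable f) :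
    ∫ x, f x = ∫ r in Set.Ioi (0:ℝ), r ^ 2 * (∫ w : Sph, f (r • (w : E3)) ∂sig) := by
  rw [nf_polar_prod, integral_prod_symm _ (nf_polar_integrable f hf)]
  exact nf_pow_integral (fun r => ∫ w : Sph, f (r • (w : E3)) ∂sig)

lemma nf_gauss_pow (n : ℕ) :
    ∫ r in Set.Ioi (0:ℝ), r ^ n * exp (-r^2) = (1/2) * Gamma ((n+1)/2) := by
  have := integral_rpow_mul_exp_neg_rpow (p := 2) (q := n) (by norm_num)
    (by have : (0:ℝ) ≤ n := n.cast_nonneg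
        linarith)
  rw [← this]
  refine setIntegral_congr_fun measurableSet_Ioi fun x hx => ?_
  simp

lemma nf_gauss_pos (n : ℕ) : 0 < ∫ r in Set.Ioi (0:ℝ), r ^ n * exp (-r^2) := by
  rw [nf_gauss_pow]
  have := Gamma_pos_of_pos (s := ((n:ℝ)+1)/2) (by positivity)
  positivity

lemma nf_gauss_rec (n : ℕ) : ∫ r in Set.Ioi (0:ℝ), r ^ (n+2) * exp (-r^2) =
   ((n+1)/2) * ∫ r in Set.Ioi (0:ℝ), r ^ n * exp (-r^2) := by
  rw [nf_gauss_pow, nf_gauss_pow]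
  have := Gamma_add_one (s := ((n:ℝ)+1)/2) (by positivity)
  push_cast
  rw [show ((n:ℝ)+2+1)/2 = (n+1)/2+1 by ring, this]
  ring

/-- rotation invariance -/
lemma nf_invariant (L : E3 ≃ₗᵢ[ℝ] E3) (k : E3 → ℝ) :
    ∫ w : Sph, k (L w) ∂sig = ∫ w : Sph, k w ∂sig := by
  have h1 := nf_polar_mul (fun x => k (L x)) (fun r => exp (-r^2))
  have h2 := nf_polar_mul k (fun r => exp (-r^2))
  have h3 : ∫ x : E3, k (L (‖x‖⁻¹ • x)) * exp (-‖x‖^2) =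
      ∫ x : E3, k (‖x‖⁻¹ • x) * exp (-‖x‖^2) := by
    rw [← L.measurePreserving.integral_comp L.toHomeomorph.measurableEmbedding
      (fun x => k (‖x‖⁻¹ • x) * exp (-‖x‖^2))]
    simp
  rw [h1, h2] at h3
  exact mul_right_cancel₀ (nf_gauss_pos 2).ne' h3

lemma nf_gauss_odd (n : ℕ) (hn : Odd n) : ∫ x : ℝ, x ^ n * exp (-x^2) = 0 := by
  have h := integral_neg_eq_self (fun x : ℝ => x ^ n * exp (-x^2)) volume
  simp only [hn.neg_pow, even_two.neg_pow, neg_mul, integral_neg] at h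
  linarith

lemma nf_gauss_even (n : ℕ) (hn : Even n) : ∫ x : ℝ, x ^ n * exp (-x^2) =
    2 * ∫ r in Set.Ioi (0:ℝ), r ^ n * exp (-r^2) := by
  rw [← integral_comp_abs (f := fun x : ℝ => x ^ n * exp (-x^2))]
  simp [hn.pow_abs]

lemma nf_gauss3 (n : ℕ) : ∫ x : E3, (x 0) ^ n * exp (-‖x‖^2) =
    π * ∫ x : ℝ, x ^ n * exp (-x^2) := by
  rw [← (PiLp.volume_preserving_toLp (Fin 3)).integral_comp
    (MeasurableEquiv.toLp 2 (Fin 3 → ℝ)).measurableEmbedding]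
  have := integral_fintype_prod_volume_eq_prod (ι := Fin 3) (𝕜 := ℝ)
    (f := fun i (x:ℝ) => if i = 0 then x ^ n * exp (-x^2) else exp (-x^2))
  have hg : ∫ x : ℝ, exp (-x^2) = √π := by
    have := integral_gaussian 1
    simpa using this
  simp only [Fin.prod_univ_three] at this
  simp only [if_true, Fin.reduceEq, if_false, Fin.isValue, hg] at this
  rw [mul_assoc _ (√π), mul_self_sqrt pi_pos.le] at this
  rw [mul_comm, ← this]
  refine integral_congr_ae (Eventually.of_forall fun x => ?_)
  simp [EuclideanSpace.norm_sq_eq, Fin.sum_univ_three, exp_add]; ring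


lemma nf_moment (n : ℕ) : ∫ w : Sph, ((w : E3) 0) ^ n ∂sig = 2 * π * ∫ u in (-1:ℝ)..1, u ^ n := by
  have h := nf_polar_mul (fun x => (x 0) ^ n) (fun r => r ^ n * exp (-r^2))
  have h1 : ∫ x : E3, ((‖x‖⁻¹ • x) 0) ^ n * (‖x‖ ^ n * exp (-‖x‖^2)) =
      ∫ x : E3, (x 0) ^ n * exp (-‖x‖^2) := by
    refine integral_congr_ae (Eventually.of_forall fun x => ?_)
    by_cases hx : x = 0
    · subst hx
      rcases n.eq_zero_or_pos with rfl | hn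
      · simp
      · simp [hn.ne']
    · have : ‖x‖ ≠ 0 := norm_ne_zero_iff.2 hx
      simp only [PiLp.smul_apply, smul_eq_mul, mul_pow, inv_pow]
      field_simp
  rw [h1, nf_gauss3] at h
  have h2 : ∫ r in Set.Ioi (0:ℝ), r ^ 2 * (r ^ n * exp (-r^2)) =
      ((n+1)/2) * ∫ r in Set.Ioi (0:ℝ), r ^ n * exp (-r^2) := by
    rw [← nf_gauss_rec]
    congr 1; ext r; ring
  rw [h2] at h
  have hp := nf_gauss_pos n
  have hn : (0:ℝ) < n + 1 := by positivity
  rw [integral_pow]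
  rcases n.even_or_odd with he | ho
  · rw [nf_gauss_even n he] at h
    set K := ∫ r in Set.Ioi (0:ℝ), r ^ n * exp (-r^2)
    rw [Odd.neg_one_pow (he.add_one), one_pow]
    have : (∫ w : Sph, ((w : E3) 0) ^ n ∂sig) * ((n+1)/2) = 2 * π := by
      apply mul_right_cancel₀ hp.ne'
      linarith
    field_simp at this ⊢
    linarith
  · rw [nf_gauss_odd n ho, mul_zero] at h
    rw [Even.neg_one_pow (ho.add_one), one_pow]
    have := (mul_eq_zero.1 h.symm).resolve_right (by positivity)
    rw [this]; simp

lemma nf_int_sph (k : Sph → ℝ) (hk : Continuous k) : Integrable k sig :=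
  hk.integrable_of_hasCompactSupport (HasCompactSupport.of_compactSpace k)

lemma nf_total : (sig).real Set.univ = 4 * π := by
  have := nf_moment 0
  simp only [pow_zero, integral_const, smul_eq_mul, mul_one, intervalIntegral.integral_const] at this
  rw [this]; ring

lemma nf_arch_poly (P : Polynomial ℝ) :
    ∫ w : Sph, P.eval ((w : E3) 0) ∂sig = 2 * π * ∫ u in (-1:ℝ)..1, P.eval u := by
  induction P using Polynomial.induction_on' with
  | add p q hp hq =>
    simp only [Polynomial.eval_add]
    rw [integral_add, intervalIntegral.integral_add, hp, hq]
    · ring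
    · exact p.continuous.intervalIntegrable _ _
    · exact q.continuous.intervalIntegrable _ _
    · exact nf_int_sph _ (by fun_prop)
    · exact nf_int_sph _ (by fun_prop)
  | monomial n a =>
    simp only [Polynomial.eval_monomial]
    rw [integral_const_mul, intervalIntegral.integral_const_mul, nf_moment]
    ring

lemma nf_arch0 (g : ℝ → ℝ) (hg : Continuous g) :
    ∫ w : Sph, g ((w : E3) 0) ∂sig = 2 * π * ∫ u in (-1:ℝ)..1, g u := by
  refine eq_of_forall_dist_le fun ε hε => ?_
  obtain ⟨P, hP⟩ := exists_polynomial_near_of_continuousOn (-1) 1 g hg.continuousOn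
    (ε / (8 * π)) (by positivity)
  have hb : ∀ w : Sph, |(w : E3) 0| ≤ 1 := fun w => by
    have := EuclideanSpace.norm_sq_eq (w : E3)
    rw [show ‖(w : E3)‖ = 1 by simp, Fin.sum_univ_three] at this
    simp only [norm_eq_abs, sq_abs] at this
    rw [abs_le_one_iff_mul_self_le_one]
    nlinarith [sq_nonneg ((w : E3) 1), sq_nonneg ((w : E3) 2)]
  have e1 : |(∫ w : Sph, g ((w : E3) 0) ∂sig) - ∫ w : Sph, P.eval ((w : E3) 0) ∂sig| ≤ ε / 2 := by
    rw [← integral_sub (nf_int_sph _ (by fun_prop)) (nf_int_sph _ (by fun_prop))]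
    have := norm_integral_le_of_norm_le_const (μ := sig) (C := ε / (8 * π))
      (f := fun w : Sph => g ((w : E3) 0) - P.eval ((w : E3) 0))
      (Eventually.of_forall fun w => by
        rw [norm_eq_abs, abs_sub_comm]
        exact (hP _ (abs_le.1 (hb w))).le)
    rw [nf_total, norm_eq_abs] at this
    refine this.trans (le_of_eq ?_)
    field_simp; norm_num
  have e2 : |(∫ u in (-1:ℝ)..1, g u) - ∫ u in (-1:ℝ)..1, P.eval u| ≤ ε / (4 * π) := by
    rw [← intervalIntegral.integral_sub (hg.intervalIntegrable _ _)
      (P.continuous.intervalIntegrable _ _)]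
    have := intervalIntegral.norm_integral_le_of_norm_le_const (a := -1) (b := 1)
      (C := ε / (8 * π)) (f := fun u => g u - P.eval u)
      (fun u hu => by
        rw [Set.uIoc_of_le (by norm_num)] at hu
        rw [norm_eq_abs, abs_sub_comm]
        exact (hP _ ⟨hu.1.le, hu.2⟩).le)
    rw [norm_eq_abs] at this
    refine this.trans (le_of_eq ?_)
    norm_num
    field_simp; norm_num
  rw [nf_arch_poly] at e1
  rw [Real.dist_eq]
  set a := ∫ w : Sph, g ((w : E3) 0) ∂sig
  set b := ∫ u in (-1:ℝ)..1, g u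
  set c := ∫ u in (-1:ℝ)..1, P.eval u
  have e3 : |2 * π * c - 2 * π * b| ≤ ε / 2 := by
    rw [← mul_sub, abs_mul, abs_of_pos (by positivity), abs_sub_comm]
    calc _ ≤ 2 * π * (ε / (4 * π)) := by gcongr
      _ = ε / 2 := by field_simp; norm_num
  have := abs_sub_le a (2 * π * c) (2 * π * b)
  linarith

lemma nf_arch (θ : E3) (hθ : ‖θ‖ = 1) (g : ℝ → ℝ) (hg : Continuous g) :
    ∫ w : Sph, g ⟪(w : E3), θ⟫ ∂sig = 2 * π * ∫ u in (-1:ℝ)..1, g u := by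
  obtain ⟨b, hb⟩ := Orthonormal.exists_orthonormalBasis_extension_of_card_eq (𝕜 := ℝ) (E := E3)
    (ι := Fin 3) (by simp) (v := fun _ => θ) (s := {0})
    (by
      constructor
      · intro i; simpa using hθ
      · intro i j hij
        exact absurd (Subsingleton.elim i j) hij)
  have hb0 := hb 0 rfl
  rw [← nf_arch0 g hg, ← nf_invariant b.repr (fun x => g (x 0))]
  refine integral_congr_ae (Eventually.of_forall fun w => ?_)
  simp only [b.repr_apply_apply, hb0]
  rw [real_inner_comm]

lemma nf_arch_vec (θ y : E3) (hθ : ‖θ‖ = 1) (g : ℝ → ℝ) (hg : Continuous g) :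
    ∫ w : Sph, ⟪y, (w : E3)⟫ * g ⟪(w : E3), θ⟫ ∂sig =
      ⟪y, θ⟫ * (2 * π * ∫ u in (-1:ℝ)..1, u * g u) := by
  have h := nf_invariant (Submodule.reflection (ℝ ∙ θ))
    (fun x => ⟪y, x⟫ * g ⟪x, θ⟫)
  have hr : ∀ x : E3, (Submodule.reflection (ℝ ∙ θ)) x = (2 * ⟪θ, x⟫) • θ - x := fun x => by
    rw [Submodule.reflection_apply, Submodule.starProjection_unit_singleton _ hθ, two_smul, two_mul,
      add_smul]
  have hr2 : ∀ x : E3, ⟪(2 * ⟪θ, x⟫) • θ - x, θ⟫ = ⟪x, θ⟫ := fun x => by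
    rw [inner_sub_left, real_inner_smul_left, real_inner_self_eq_norm_sq, hθ, real_inner_comm]
    ring
  simp only [hr, hr2] at h
  have h2 : ∀ w : Sph, ⟪y, (2 * ⟪θ, (w : E3)⟫) • θ - (w : E3)⟫ * g ⟪(w : E3), θ⟫ =
     2 * ⟪y, θ⟫ * (⟪(w : E3), θ⟫ * g ⟪(w : E3), θ⟫) - ⟪y, (w : E3)⟫ * g ⟪(w : E3), θ⟫ := fun w => by
    rw [inner_sub_right, real_inner_smul_right, real_inner_comm (w : E3) θ]
    ring
  simp only [h2] at h
  rw [integral_sub (nf_int_sph _ (by fun_prop)) (nf_int_sph _ (by fun_prop)),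
    integral_const_mul, nf_arch θ hθ (fun u => u * g u) (by fun_prop)] at h
  linarith

lemma nf_arch_full (θ y : E3) (hθ : ‖θ‖ = 1) (R : ℝ) (g : ℝ → ℝ) (hg : Continuous g) :
    ∫ w : Sph, (R - ⟪y, (w : E3)⟫) * g ⟪(w : E3), θ⟫ ∂sig =
      2 * π * ∫ u in (-1:ℝ)..1, (R - ⟪y, θ⟫ * u) * g u := by
  have h1 : ∀ w : Sph, (R - ⟪y, (w : E3)⟫) * g ⟪(w : E3), θ⟫ =
    R * g ⟪(w : E3), θ⟫ - ⟪y, (w : E3)⟫ * g ⟪(w : E3), θ⟫ := fun w => by ring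
  have h2 : ∀ u : ℝ, (R - ⟪y, θ⟫ * u) * g u = R * g u - ⟪y, θ⟫ * (u * g u) := fun w => by ring
  simp only [h1, h2]
  rw [integral_sub (nf_int_sph _ (by fun_prop)) (nf_int_sph _ (by fun_prop)),
    intervalIntegral.integral_sub (Continuous.intervalIntegrable (by fun_prop) _ _)
     (Continuous.intervalIntegrable (by fun_prop) _ _), integral_const_mul,
     intervalIntegral.integral_const_mul, intervalIntegral.integral_const_mul,
     nf_arch θ hθ g hg, nf_arch_vec θ y hθ g hg]
  ring


lemma nf_cont_int {X : Type*} [TopologicalSpace X] [FirstCountableTopology X]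
    [LocallyCompactSpace X] (F : X → Sph → ℝ) (hF : Continuous (Function.uncurry F)) :
    Continuous (fun x => ∫ w, F x w ∂sig) := by
  have := continuous_parametric_integral_of_continuous (μ := sig) hF (s := Set.univ) isCompact_univ
  simpa using this

lemma nf_deriv_int (F F' : ℝ → Sph → ℝ) (hF : Continuous (Function.uncurry F))
    (hF' : Continuous (Function.uncurry F')) (h : ∀ t w, HasDerivAt (fun t => F t w) (F' t w) t)
    (t : ℝ) : HasDerivAt (fun t => ∫ w, F t w ∂sig) (∫ w, F' t w ∂sig) t := by
  obtain ⟨C, hC⟩ := ((isCompact_closedBall t 1).prod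
    (isCompact_univ (X := Sph))).bddAbove_image hF'.norm.continuousOn
  have c1 : ∀ t, Continuous (F t) := fun t => hF.comp (by fun_prop : Continuous fun w : Sph => (t, w))
  have c2 : ∀ t, Continuous (F' t) := fun t =>
    hF'.comp (by fun_prop : Continuous fun w : Sph => (t, w))
  refine (hasDerivAt_integral_of_dominated_loc_of_deriv_le (bound := fun _ => C)
    (Metric.closedBall_mem_nhds t one_pos)
    (Eventually.of_forall fun t => (c1 t).aestronglyMeasurable)
    (nf_int_sph _ (c1 t)) (c2 t).aestronglyMeasurable
    (Eventually.of_forall fun w s hs => hC ?_) (integrable_const _)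
    (Eventually.of_forall fun w s hs => h s w)).2
  exact ⟨(s, w), ⟨hs, trivial⟩, rfl⟩

lemma nf_p_derivs (S : E3 → ℝ) (hS : ContDiff ℝ (⊤ : ℕ∞) S) (p : E3 → ℝ → ℝ)
    (hp : ∀ x t, p x t = (t / (4 * π)) * ∫ ω : Sph, S (x + t • (ω : E3)) ∂sig) :
    ∃ p1 p2 : E3 → ℝ → ℝ, Continuous (Function.uncurry p) ∧ Continuous (Function.uncurry p1) ∧
      Continuous (Function.uncurry p2) ∧ (∀ x t, HasDerivAt (p x) (p1 x t) t) ∧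
      (∀ x t, HasDerivAt (p1 x) (p2 x t) t) := by
  have hS2 : ContDiff ℝ 2 S := contDiff_infty.1 hS 2
  have hd1 : Differentiable ℝ S := hS2.differentiable (by norm_num)
  have hS1 : ContDiff ℝ 1 (fderiv ℝ S) := hS2.fderiv_right (by norm_num)
  have hd2 : Differentiable ℝ (fderiv ℝ S) := hS1.differentiable (by norm_num)
  have hc0 : Continuous S := hS2.continuous
  have hc1 : Continuous (fderiv ℝ S) := hS1.continuous
  have hc2 : Continuous (fderiv ℝ (fderiv ℝ S)) := hS1.continuous_fderiv (by norm_num)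
  let N0 : E3 → ℝ → ℝ := fun x t => ∫ w : Sph, S (x + t • (w : E3)) ∂sig
  let N1 : E3 → ℝ → ℝ := fun x t => ∫ w : Sph, fderiv ℝ S (x + t • (w : E3)) w ∂sig
  let N2 : E3 → ℝ → ℝ := fun x t =>
    ∫ w : Sph, fderiv ℝ (fderiv ℝ S) (x + t • (w : E3)) w w ∂sig
  have k0 : Continuous (Function.uncurry N0) :=
    nf_cont_int (fun (z : E3 × ℝ) (w : Sph) => S (z.1 + z.2 • (w : E3))) (by fun_prop)
  have k1 : Continuous (Function.uncurry N1) :=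
    nf_cont_int (fun (z : E3 × ℝ) (w : Sph) => fderiv ℝ S (z.1 + z.2 • (w : E3)) w) (by fun_prop)
  have k2 : Continuous (Function.uncurry N2) :=
    nf_cont_int (fun (z : E3 × ℝ) (w : Sph) =>
      fderiv ℝ (fderiv ℝ S) (z.1 + z.2 • (w : E3)) w w) (by fun_prop)
  have hl : ∀ (x : E3) (w : Sph) t, HasDerivAt (fun t : ℝ => x + t • (w : E3)) (w : E3) t :=
    fun x w t => by
      simpa using ((hasDerivAt_id t).smul_const (w : E3)).const_add x
  have d0 : ∀ x t, HasDerivAt (N0 x) (N1 x t) t := fun x t => by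
    refine nf_deriv_int (fun t (w : Sph) => S (x + t • (w : E3)))
      (fun t (w : Sph) => fderiv ℝ S (x + t • (w : E3)) w) (by fun_prop) (by fun_prop)
      (fun t w => ?_) t
    exact (hd1 _).hasFDerivAt.comp_hasDerivAt t (hl x w t)
  have d1 : ∀ x t, HasDerivAt (N1 x) (N2 x t) t := fun x t => by
    refine nf_deriv_int (fun t (w : Sph) => fderiv ℝ S (x + t • (w : E3)) w)
      (fun t (w : Sph) => fderiv ℝ (fderiv ℝ S) (x + t • (w : E3)) w w) (by fun_prop) (by fun_prop)
      (fun t w => ?_) t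
    have := (hd2 _).hasFDerivAt.comp_hasDerivAt t (hl x w t)
    have h2 := this.clm_apply (hasDerivAt_const t (w : E3))
    simpa using h2
  have hpe : p = fun x t => t / (4 * π) * N0 x t := by
    funext x t; exact hp x t
  refine ⟨fun x t => (N0 x t + t * N1 x t) / (4 * π), fun x t => (2 * N1 x t + t * N2 x t) / (4 * π),
    ?_, ?_, ?_, ?_, ?_⟩
  · rw [hpe]
    exact (continuous_snd.div_const _).mul k0
  · exact (k0.add (continuous_snd.mul k1)).div_const _
  · exact ((k1.const_mul 2).add (continuous_snd.mul k2)).div_const _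
  · intro x t
    rw [hpe]
    have := ((hasDerivAt_id t).div_const (4 * π)).mul (d0 x t)
    convert! this using 1
    simp; ring
  · intro x t
    have := ((d0 x t).add ((hasDerivAt_id t).mul (d1 x t))).div_const (4 * π)
    convert! this using 1
    simp; ring

lemma nf_ibp (f f1 f2 ψ0 ψ1 ψ2 : ℝ → ℝ) (hf : ∀ t, HasDerivAt f (f1 t) t)
    (hf1 : ∀ t, HasDerivAt f1 (f2 t) t) (hf2 : Continuous f2)
    (h0 : ∀ t, HasDerivAt ψ0 (ψ1 t) t) (h1 : ∀ t, HasDerivAt ψ1 (ψ2 t) t) (h2 : Continuous ψ2)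
    (r T : ℝ) (hr : 0 < r) (hT : r ≤ T) (z0 : ψ0 0 = 0) (z1 : ψ1 0 = 0)
    (z0' : ψ0 (T^2 - r^2) = 0) (z1' : ψ1 (T^2-r^2) = 0) :
    ∫ t in r..T, (f2 t / (2 * t) - f1 t / (2 * t^2)) * ψ0 (t^2 - r^2) =
    ∫ t in r..T, f t * (2 * t * ψ2 (t^2 - r^2)) := by
  have cf : Continuous f := continuous_iff_continuousAt.2 fun t => (hf t).continuousAt
  have cf1 : Continuous f1 := continuous_iff_continuousAt.2 fun t => (hf1 t).continuousAt
  have c0 : Continuous ψ0 := continuous_iff_continuousAt.2 fun t => (h0 t).continuousAt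
  have hne : ∀ t ∈ Set.uIcc r T, t ≠ 0 := fun t ht => by
    rw [Set.uIcc_of_le hT] at ht
    linarith [ht.1]
  have i1 : IntervalIntegrable (fun t => (f2 t / (2 * t) - f1 t / (2 * t^2)) * ψ0 (t^2 - r^2))
      volume r T := by
    apply ContinuousOn.intervalIntegrable
    refine ContinuousOn.mul (ContinuousOn.sub ?_ ?_) (by fun_prop)
    · refine ContinuousOn.div (by fun_prop) (by fun_prop) fun t ht => ?_
      have := hne t ht
      positivity
    · refine ContinuousOn.div (by fun_prop) (by fun_prop) fun t ht => ?_
      have := hne t ht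
      positivity
  have i2 : IntervalIntegrable (fun t => f t * (2 * t * ψ2 (t^2 - r^2))) volume r T :=
    Continuous.intervalIntegrable (by fun_prop) _ _
  rw [← sub_eq_zero, ← intervalIntegral.integral_sub i1 i2]
  rw [intervalIntegral.integral_eq_sub_of_hasDerivAt
    (f := fun t => f1 t / (2 * t) * ψ0 (t^2-r^2) - f t * ψ1 (t^2-r^2)) (fun t ht => ?_) (i1.sub i2)]
  · simp [z0, z1, z0', z1']
  · have hq : HasDerivAt (fun t : ℝ => t^2 - r^2) (2 * t) t := by
      simpa using (hasDerivAt_pow 2 t).sub_const (r^2)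
    have ht0 := hne t ht
    have a1 := ((hf1 t).div ((hasDerivAt_id t).const_mul 2) (by simpa using ht0)).mul
      ((h0 (t^2-r^2)).comp t hq)
    have a2 := (hf t).mul ((h1 (t^2-r^2)).comp t hq)
    convert! a1.sub a2 using 1
    simp
    field_simp
    ring

lemma nf_ftc (R β c a : ℝ) (ha : a ≠ 0) (ψ0 ψ1 ψ2 : ℝ → ℝ)
    (h0 : ∀ t, HasDerivAt ψ0 (ψ1 t) t) (h1 : ∀ t, HasDerivAt ψ1 (ψ2 t) t) (h2 : Continuous ψ2)
    (z0 : ψ0 (c - a) = 0) (z1 : ψ1 (c - a) = 0) :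
    ∫ u in (-1:ℝ)..1, (R - β * u) * ψ2 (c - a * u) =
      (R + β) * ψ1 (c + a) / a - β * ψ0 (c + a) / a^2 := by
  rw [intervalIntegral.integral_eq_sub_of_hasDerivAt
    (f := fun u => -((R - β * u) * ψ1 (c - a * u) / a) + β * ψ0 (c - a * u) / a^2)
    (fun u hu => ?_) (Continuous.intervalIntegrable (by fun_prop) _ _)]
  · simp [z0, z1]; ring
  · have hq : HasDerivAt (fun u : ℝ => c - a * u) (-a) u := by
      simpa using ((hasDerivAt_id u).const_mul a).const_sub c
    have hq2 : HasDerivAt (fun u : ℝ => R - β * u) (-β) u := by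
      simpa using ((hasDerivAt_id u).const_mul β).const_sub R
    have a1 := (((hq2.mul ((h1 (c - a * u)).comp u hq)).div_const a).neg).add
      ((((h0 (c - a * u)).comp u hq).const_mul β).div_const (a^2))
    convert! a1 using 1
    simp
    field_simp
    ring

lemma nf_bump : ∃ ψ0 ψ1 ψ2 : ℝ → ℝ, (∀ t, HasDerivAt ψ0 (ψ1 t) t) ∧
    (∀ t, HasDerivAt ψ1 (ψ2 t) t) ∧ Continuous ψ2 ∧ (∀ t, t ≤ 0 ∨ 1 ≤ t → ψ0 t = 0) ∧
    (∀ t, t ≤ 0 ∨ 1 ≤ t → ψ1 t = 0) ∧ (∀ t, t ≤ 0 ∨ 1 ≤ t → ψ2 t = 0) ∧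
    0 < ∫ t in (0:ℝ)..1, ψ0 t := by
  let f : ContDiffBump (1/2:ℝ) := ⟨1/6, 1/3, by norm_num, by norm_num⟩
  have hf : ContDiff ℝ 2 f := f.contDiff
  have hf1 : ContDiff ℝ 1 (deriv f) := by
    have := (contDiff_succ_iff_deriv (n := 1) (f := f)).1 (by exact_mod_cast hf)
    exact this.2.2
  have ts : ∀ t, t ≤ 0 ∨ 1 ≤ t → t ∉ tsupport f := by
    intro t ht
    rw [f.tsupport_eq, Metric.mem_closedBall, Real.dist_eq]
    simp only [f, not_le]
    rw [lt_abs]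
    rcases ht with h | h
    · right; linarith
    · left; linarith
  refine ⟨f, deriv f, deriv (deriv f), fun t => (hf.differentiable (by norm_num) t).hasDerivAt,
    fun t => (hf1.differentiable (by norm_num) t).hasDerivAt, hf1.continuous_deriv (by norm_num),
    fun t ht => image_eq_zero_of_notMem_tsupport (ts t ht),
    fun t ht => ?_, fun t ht => ?_, ?_⟩
  · exact image_eq_zero_of_notMem_tsupport (fun h => ts t ht (tsupport_deriv_subset h))
  · exact image_eq_zero_of_notMem_tsupport (fun h => ts t ht (tsupport_deriv_subset (tsupport_deriv_subset h)))
  · refine intervalIntegral.integral_pos one_pos f.continuous.continuousOn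
      (fun t _ => f.nonneg) ⟨1/2, by norm_num, ?_⟩
    exact f.pos_of_mem_ball (by simp [f])


lemma nf_inner_bound (y : E3) (w : Sph) : |⟪y, (w : E3)⟫| ≤ ‖y‖ := by
  have := abs_real_inner_le_norm y (w : E3)
  simpa using this

lemma nf_r_bound (R : ℝ) (hR : 0 < R) (y : E3) (w : Sph) : R - ‖y‖ ≤ ‖R • (w : E3) - y‖ := by
  have := norm_sub_norm_le (R • (w : E3)) y
  rw [norm_smul, norm_eq_abs, abs_of_pos hR] at this
  simpa using this

/-- slice formula (a) -/
lemma nf_stepA (S : E3 → ℝ) (hS : Continuous S) (hsupp : HasCompactSupport S) (p : E3 → ℝ → ℝ)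
    (hp : ∀ x t, p x t = (t / (4 * π)) * ∫ ω : Sph, S (x + t • (ω : E3)) ∂sig)
    (x y : E3) (ψ2 : ℝ → ℝ) (h2 : Continuous ψ2) (r T : ℝ) (hr : r = ‖x - y‖) (hrT : r ≤ T)
    (z : ∀ t, t ≤ 0 ∨ T^2 - r^2 ≤ t → ψ2 t = 0) :
    ∫ t in r..T, p x t * (2 * t * ψ2 (t^2 - r^2)) =
      (1 / (2 * π)) * ∫ w : E3, S (y + w) * ψ2 (‖w‖^2 + 2 * ⟪y, w⟫ - 2 * ⟪x, w⟫) := by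
  have hr0 : 0 ≤ r := hr ▸ norm_nonneg _
  have hcs : HasCompactSupport (fun z : E3 => S (x + z) * ψ2 (‖z‖^2 - r^2)) :=
    (hsupp.comp_homeomorph (Homeomorph.addLeft x)).mul_right
  have hint : Integrable (fun z : E3 => S (x + z) * ψ2 (‖z‖^2 - r^2)) :=
    Continuous.integrable_of_hasCompactSupport (by fun_prop) hcs
  have e1 : ∫ w : E3, S (y + w) * ψ2 (‖w‖^2 + 2 * ⟪y, w⟫ - 2 * ⟪x, w⟫) =
      ∫ z : E3, S (x + z) * ψ2 (‖z‖^2 - r^2) := by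
    rw [← integral_add_right_eq_self (fun z : E3 => S (x + z) * ψ2 (‖z‖^2 - r^2)) (y - x)]
    refine integral_congr_ae (Eventually.of_forall fun w => ?_)
    simp only
    rw [show x + (w + (y - x)) = y + w by abel, norm_add_sq_real, hr, norm_sub_rev y x,
      inner_sub_right, real_inner_comm, real_inner_comm x w]
    congr 2; ring
  rw [e1, nf_polar' _ hint, intervalIntegral.integral_of_le hrT, ← integral_const_mul]
  symm
  rw [setIntegral_eq_of_subset_of_forall_sdiff_eq_zero (s := Set.Ioc r T) measurableSet_Ioi
    (fun t ht => lt_of_le_of_lt hr0 ht.1)]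
  · refine setIntegral_congr_fun measurableSet_Ioc fun t ht => ?_
    have ht0 : 0 < t := lt_of_le_of_lt hr0 ht.1
    have : ∀ w : Sph, ‖t • (w : E3)‖ = t := fun w => by simp [norm_smul, abs_of_pos ht0]
    simp only [this]
    rw [hp, integral_mul_const]
    field_simp
    ring
  · intro t ht
    have ht0 : 0 < t := ht.1
    have : ∀ w : Sph, ‖t • (w : E3)‖ = t := fun w => by simp [norm_smul, abs_of_pos ht0]
    simp only [this]
    rw [z]
    · simp
    · by_cases h : t ≤ r
      · left; nlinarith
      · right
        have : T < t := by
          by_contra h'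
          exact ht.2 ⟨not_le.1 h, not_lt.1 h'⟩
        nlinarith

lemma nf_stepB (S : E3 → ℝ) (hS : Continuous S) (hsupp : HasCompactSupport S)
    (R : ℝ) (y : E3) (ψ2 : ℝ → ℝ) (h2 : Continuous ψ2) :
    ∫ v : Sph, (R - ⟪y, (v : E3)⟫) *
      (∫ w : E3, S (y + w) * ψ2 (‖w‖^2 + 2 * ⟪y, w⟫ - 2 * ⟪R • (v : E3), w⟫)) ∂sig =
    ∫ θ : Sph, (∫ ρ in Set.Ioi (0:ℝ), ρ^2 * (S (y + ρ • (θ : E3)) *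
      ∫ v : Sph, (R - ⟪y, (v : E3)⟫) *
        ψ2 (ρ^2 + 2 * ρ * ⟪y, (θ : E3)⟫ - 2 * R * ρ * ⟪(v : E3), (θ : E3)⟫) ∂sig)) ∂sig := by
  have hcs : HasCompactSupport (fun z : E3 => S (y + z)) :=
    (hsupp.comp_homeomorph (Homeomorph.addLeft y))
  let F : Sph → E3 → ℝ := fun v w => (R - ⟪y, (v : E3)⟫) *
      (S (y + w) * ψ2 (‖w‖^2 + 2 * ⟪y, w⟫ - 2 * ⟪R • (v : E3), w⟫))
  have hFc : Continuous (Function.uncurry F) := by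
    simp only [F, Function.uncurry_def]
    fun_prop
  have hFi : Integrable (Function.uncurry F) ((sig).prod volume) := by
    refine hFc.integrable_of_hasCompactSupport ?_
    refine HasCompactSupport.intro (isCompact_univ.prod hcs) fun q hq => ?_
    have : q.2 ∉ tsupport (fun z : E3 => S (y + z)) := fun h => hq ⟨trivial, h⟩
    have := image_eq_zero_of_notMem_tsupport this
    simp [F, Function.uncurry_def, this]
  have e1 := integral_integral_swap hFi
  simp only [F, integral_const_mul] at e1
  rw [e1]
  have e2 : ∀ w : E3, ∫ v : Sph, (R - ⟪y, (v : E3)⟫) *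
      (S (y + w) * ψ2 (‖w‖^2 + 2 * ⟪y, w⟫ - 2 * ⟪R • (v : E3), w⟫)) ∂sig =
      S (y + w) * ∫ v : Sph, (R - ⟪y, (v : E3)⟫) *
       ψ2 (‖w‖^2 + 2 * ⟪y, w⟫ - 2 * ⟪R • (v : E3), w⟫) ∂sig := fun w => by
    rw [← integral_const_mul]
    congr 1; ext v; ring
  simp only [e2]
  have hG : Continuous fun w : E3 => ∫ v : Sph, (R - ⟪y, (v : E3)⟫) *
       ψ2 (‖w‖^2 + 2 * ⟪y, w⟫ - 2 * ⟪R • (v : E3), w⟫) ∂sig :=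
    nf_cont_int (fun (w : E3) (v : Sph) => (R - ⟪y, (v : E3)⟫) *
       ψ2 (‖w‖^2 + 2 * ⟪y, w⟫ - 2 * ⟪R • (v : E3), w⟫)) (by fun_prop)
  have hI : Integrable fun w : E3 => S (y + w) * ∫ v : Sph, (R - ⟪y, (v : E3)⟫) *
       ψ2 (‖w‖^2 + 2 * ⟪y, w⟫ - 2 * ⟪R • (v : E3), w⟫) ∂sig :=
    Continuous.integrable_of_hasCompactSupport
      ((hS.comp (continuous_const.add continuous_id)).mul hG) hcs.mul_right
  rw [nf_polar _ hI]
  refine integral_congr_ae (Eventually.of_forall fun θ => ?_)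
  refine setIntegral_congr_fun measurableSet_Ioi fun ρ hρ => ?_
  have hρ0 : 0 < ρ := hρ
  have : ‖ρ • (θ : E3)‖ = ρ := by simp [norm_smul, abs_of_pos hρ0]
  simp only [this, real_inner_smul_left, real_inner_smul_right]
  congr 3; ext v; congr 2; ring

lemma nf_stepC (S : E3 → ℝ) (R : ℝ) (hR : 0 < R)
    (hsub : tsupport S ⊆ Metric.ball (0 : E3) R) (y : E3)
    (ψ0 ψ1 ψ2 : ℝ → ℝ)
    (h0 : ∀ t, HasDerivAt ψ0 (ψ1 t) t) (h1 : ∀ t, HasDerivAt ψ1 (ψ2 t) t) (h2 : Continuous ψ2)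
    (z0 : ∀ t ≤ 0, ψ0 t = 0) (z1 : ∀ t ≤ 0, ψ1 t = 0) (θ : Sph) (ρ : ℝ) (hρ : 0 < ρ) :
    ρ^2 * (S (y + ρ • (θ : E3)) *
      ∫ v : Sph, (R - ⟪y, (v : E3)⟫) *
        ψ2 (ρ^2 + 2 * ρ * ⟪y, (θ : E3)⟫ - 2 * R * ρ * ⟪(v : E3), (θ : E3)⟫) ∂sig) =
    2 * π * (S (y + ρ • (θ : E3)) *
      (ρ * (R + ⟪y, (θ : E3)⟫) * ψ1 (ρ^2 + 2 * (R + ⟪y, (θ : E3)⟫) * ρ) / (2 * R)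
        - ⟪y, (θ : E3)⟫ * ψ0 (ρ^2 + 2 * (R + ⟪y, (θ : E3)⟫) * ρ) / (4 * R^2))) := by
  by_cases hs : S (y + ρ • (θ : E3)) = 0
  · simp [hs]
  have hb : ‖y + ρ • (θ : E3)‖ < R := by
    have := hsub (subset_tsupport S hs)
    simpa using this
  have hθ : ‖(θ : E3)‖ = 1 := by simp
  have hle : 2 * ⟪y, (θ : E3)⟫ + ρ ≤ 2 * R := by
    have a1 := (abs_le.1 (nf_inner_bound y θ)).2
    have a2 := (abs_le.1 (nf_inner_bound (y + ρ • (θ : E3)) θ)).2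
    rw [inner_add_left, real_inner_smul_left, real_inner_self_eq_norm_sq, hθ] at a2
    linarith
  set β := ⟪y, (θ : E3)⟫ with hβ
  rw [nf_arch_full (θ : E3) y hθ R (fun u => ψ2 (ρ^2 + 2 * ρ * β - 2 * R * ρ * u)) (by fun_prop)]
  have hneg : ρ^2 + 2 * ρ * β - 2 * R * ρ ≤ 0 := by nlinarith
  rw [← hβ, nf_ftc R β (ρ^2 + 2 * ρ * β) (2 * R * ρ) (by positivity) ψ0 ψ1 ψ2 h0 h1 h2
    (z0 _ hneg) (z1 _ hneg)]
  rw [show ρ^2 + 2 * ρ * β + 2 * R * ρ = ρ^2 + 2 * (R + β) * ρ by ring]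
  field_simp
  ring

lemma nf_identity (S : E3 → ℝ) (hS : Continuous S) (hsupp : HasCompactSupport S)
    (R : ℝ) (hR : 0 < R) (hsub : tsupport S ⊆ Metric.ball (0 : E3) R) (p p1 p2 : E3 → ℝ → ℝ)
    (hp : ∀ x t, p x t = (t / (4 * π)) * ∫ ω : Sph, S (x + t • (ω : E3)) ∂sig)
    (d1 : ∀ x t, HasDerivAt (p x) (p1 x t) t) (d2 : ∀ x t, HasDerivAt (p1 x) (p2 x t) t)
    (hc2 : Continuous (Function.uncurry p2))
    (y : E3) (hy : ‖y‖ < R) (ψ0 ψ1 ψ2 : ℝ → ℝ)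
    (h0 : ∀ t, HasDerivAt ψ0 (ψ1 t) t) (h1 : ∀ t, HasDerivAt ψ1 (ψ2 t) t) (h2 : Continuous ψ2)
    (ε L : ℝ) (hL : 0 < L) (hε : ε ≤ 2 * (R - ‖y‖) * L)
    (z0 : ∀ t, t ≤ 0 ∨ ε ≤ t → ψ0 t = 0) (z1 : ∀ t, t ≤ 0 ∨ ε ≤ t → ψ1 t = 0)
    (z2 : ∀ t, t ≤ 0 ∨ ε ≤ t → ψ2 t = 0) :
    ∫ v : Sph, (R - ⟪y, (v : E3)⟫) * (∫ t in ‖R • (v : E3) - y‖..(‖R • (v : E3) - y‖ + L),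
      (p2 (R • (v : E3)) t / (2 * t) - p1 (R • (v : E3)) t / (2 * t^2)) *
        ψ0 (t^2 - ‖R • (v : E3) - y‖^2)) ∂sig =
    ∫ θ : Sph, (∫ ρ in (0:ℝ)..L, S (y + ρ • (θ : E3)) *
      (ρ * (R + ⟪y, (θ : E3)⟫) * ψ1 (ρ^2 + 2 * (R + ⟪y, (θ : E3)⟫) * ρ) / (2 * R)
        - ⟪y, (θ : E3)⟫ * ψ0 (ρ^2 + 2 * (R + ⟪y, (θ : E3)⟫) * ρ) / (4 * R^2))) ∂sig := by
  have hA : ∀ v : Sph, (∫ t in ‖R • (v : E3) - y‖..(‖R • (v : E3) - y‖ + L),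
      (p2 (R • (v : E3)) t / (2 * t) - p1 (R • (v : E3)) t / (2 * t^2)) *
        ψ0 (t^2 - ‖R • (v : E3) - y‖^2)) = (1 / (2 * π)) *
        ∫ w : E3, S (y + w) * ψ2 (‖w‖^2 + 2 * ⟪y, w⟫ - 2 * ⟪R • (v : E3), w⟫) := fun v => by
    have hr := nf_r_bound R hR y v
    set r := ‖R • (v : E3) - y‖ with hrd
    have hT : ε ≤ (r + L)^2 - r^2 := by nlinarith
    rw [nf_ibp (p (R • (v : E3))) _ _ ψ0 ψ1 ψ2 (d1 _) (d2 _)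
      (hc2.comp (by fun_prop : Continuous fun t : ℝ => (R • (v : E3), t))) h0 h1 h2 r (r + L)
      (by linarith) (by linarith) (z0 _ (Or.inl le_rfl)) (z1 _ (Or.inl le_rfl))
      (z0 _ (Or.inr hT)) (z1 _ (Or.inr hT))]
    exact nf_stepA S hS hsupp p hp _ y ψ2 h2 r (r + L) hrd (by linarith)
      (fun t ht => z2 t (ht.imp_right fun h => hT.trans h))
  simp only [hA]
  have e : ∀ v : Sph, ∀ I : ℝ, (R - ⟪y, (v : E3)⟫) * (1 / (2 * π) * I) =
     1 / (2 * π) * ((R - ⟪y, (v : E3)⟫) * I) := fun v I => by ring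
  simp only [e]
  rw [integral_const_mul, nf_stepB S hS hsupp R y ψ2 h2, ← integral_const_mul]
  refine integral_congr_ae (Eventually.of_forall fun θ => ?_)
  simp only
  rw [intervalIntegral.integral_of_le hL.le]
  rw [setIntegral_congr_fun measurableSet_Ioi (fun ρ hρ => nf_stepC S R hR hsub y ψ0 ψ1 ψ2 h0 h1 h2
    (fun t ht => z0 t (Or.inl ht)) (fun t ht => z1 t (Or.inl ht)) θ ρ hρ), integral_const_mul,
    ← mul_assoc]
  rw [show 1 / (2 * π) * (2 * π) = 1 by field_simp, one_mul]
  refine setIntegral_eq_of_subset_of_forall_sdiff_eq_zero measurableSet_Ioi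
    (fun t ht => ht.1) fun ρ hρ => ?_
  have hρ0 : 0 < ρ := hρ.1
  have hρL : L < ρ := by
    by_contra h
    exact hρ.2 ⟨hρ0, not_lt.1 h⟩
  have hB := (abs_le.1 (nf_inner_bound y θ)).1
  have : ε ≤ ρ^2 + 2 * (R + ⟪y, (θ : E3)⟫) * ρ := by
    have : (R - ‖y‖) * L ≤ (R + ⟪y, (θ : E3)⟫) * ρ := by
      apply mul_le_mul <;> linarith
    nlinarith
  rw [z0 _ (Or.inr this), z1 _ (Or.inr this)]
  simp


lemma nf_m0 (ψ0 : ℝ → ℝ) (h0 : Continuous ψ0) (z0 : ∀ t, t ≤ 0 ∨ 1 ≤ t → ψ0 t = 0)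
    (a K : ℝ) (ha : 0 < a) (hK : 1 ≤ 2 * a * K) :
    ∫ κ in (0:ℝ)..K, ψ0 (2 * a * κ) = (∫ t in (0:ℝ)..1, ψ0 t) / (2 * a) := by
  rw [intervalIntegral.integral_comp_mul_left _ (by positivity), mul_zero,
    ← intervalIntegral.integral_add_adjacent_intervals (b := 1) (h0.intervalIntegrable _ _)
      (h0.intervalIntegrable _ _)]
  have : ∫ x in (1:ℝ)..(2 * a * K), ψ0 x = ∫ x in (1:ℝ)..(2 * a * K), (0:ℝ) := by
    refine intervalIntegral.integral_congr fun t ht => ?_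
    rw [Set.uIcc_of_le hK] at ht
    exact z0 t (Or.inr ht.1)
  rw [this]
  simp
  field_simp

lemma nf_m1 (ψ0 ψ1 : ℝ → ℝ) (h0 : ∀ t, HasDerivAt ψ0 (ψ1 t) t) (h1 : Continuous ψ1)
    (z0 : ∀ t, t ≤ 0 ∨ 1 ≤ t → ψ0 t = 0)
    (a K : ℝ) (ha : 0 < a) (hK : 1 ≤ 2 * a * K) :
    ∫ κ in (0:ℝ)..K, κ * ψ1 (2 * a * κ) = - (∫ t in (0:ℝ)..1, ψ0 t) / (4 * a^2) := by
  have c0 : Continuous ψ0 := continuous_iff_continuousAt.2 fun t => (h0 t).continuousAt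
  have hm := nf_m0 ψ0 c0 z0 a K ha hK
  have : ∫ κ in (0:ℝ)..K, (ψ0 (2 * a * κ) + (2 * a) * (κ * ψ1 (2 * a * κ))) = 0 := by
    rw [intervalIntegral.integral_eq_sub_of_hasDerivAt (f := fun κ => κ * ψ0 (2 * a * κ))
      (fun κ _ => ?_) (Continuous.intervalIntegrable (by fun_prop) _ _)]
    · simp [z0 _ (Or.inr hK)]
    · have hq : HasDerivAt (fun κ : ℝ => 2 * a * κ) (2 * a) κ := by
        simpa using (hasDerivAt_id κ).const_mul (2 * a)
      have := (hasDerivAt_id κ).mul ((h0 (2 * a * κ)).comp κ hq)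
      convert! this using 1
      simp; ring
  rw [intervalIntegral.integral_add (Continuous.intervalIntegrable (by fun_prop) _ _)
    (Continuous.intervalIntegrable (by fun_prop) _ _), intervalIntegral.integral_const_mul, hm] at this
  have h2 : ∫ κ in (0:ℝ)..K, κ * ψ1 (2 * a * κ) = -((∫ t in (0:ℝ)..1, ψ0 t) / (2 * a)) / (2 * a) := by
    rw [eq_div_iff (by positivity)]; linarith
  rw [h2]; field_simp; norm_num

lemma nf_cont2 (F : ℝ → Sph → ℝ → ℝ)
    (hF : Continuous fun q : (ℝ × Sph) × ℝ => F q.1.1 q.1.2 q.2) (K : ℝ) :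
    Continuous fun ε : ℝ => ∫ v : Sph, (∫ κ in (0:ℝ)..K, F ε v κ) ∂sig := by
  refine nf_cont_int (fun ε v => ∫ κ in (0:ℝ)..K, F ε v κ) ?_
  exact intervalIntegral.continuous_parametric_intervalIntegral_of_continuous'
    (f := fun (q : ℝ × Sph) κ => F q.1 q.2 κ) hF 0 K

lemma nf_limit (S : E3 → ℝ) (hS : Continuous S) (hsupp : HasCompactSupport S)
    (R : ℝ) (hR : 0 < R) (hsub : tsupport S ⊆ Metric.ball (0 : E3) R) (p p1 p2 : E3 → ℝ → ℝ)
    (hp : ∀ x t, p x t = (t / (4 * π)) * ∫ ω : Sph, S (x + t • (ω : E3)) ∂sig)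
    (d1 : ∀ x t, HasDerivAt (p x) (p1 x t) t) (d2 : ∀ x t, HasDerivAt (p1 x) (p2 x t) t)
    (hc1 : Continuous (Function.uncurry p1)) (hc2 : Continuous (Function.uncurry p2))
    (y : E3) (hy : ‖y‖ < R) :
    ∫ v : Sph, (R - ⟪y, (v : E3)⟫) * ((p2 (R • (v : E3)) ‖R • (v : E3) - y‖ / (2 * ‖R • (v : E3) - y‖)
      - p1 (R • (v : E3)) ‖R • (v : E3) - y‖ / (2 * ‖R • (v : E3) - y‖^2)) /
        (2 * ‖R • (v : E3) - y‖)) ∂sig = - (π / (2 * R^2)) * S y := by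
  obtain ⟨ψ0, ψ1, ψ2, h0, h1, h2, z0, z1, z2, hm⟩ := nf_bump
  set m := ∫ t in (0:ℝ)..1, ψ0 t with hmd
  have c0 : Continuous ψ0 := continuous_iff_continuousAt.2 fun t => (h0 t).continuousAt
  have c1 : Continuous ψ1 := continuous_iff_continuousAt.2 fun t => (h1 t).continuousAt
  set δ := R - ‖y‖ with hδ
  have hδ0 : 0 < δ := by linarith
  have hrb : ∀ v : Sph, δ ≤ ‖R • (v : E3) - y‖ := fun v => nf_r_bound R hR y v
  have hBb : ∀ v : Sph, δ ≤ R + ⟪y, (v : E3)⟫ := fun v => by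
    have := (abs_le.1 (nf_inner_bound y v)).1
    linarith
  obtain ⟨K, hKd⟩ : ∃ K, K = 1 / (2 * δ) := ⟨_, rfl⟩
  have hK0 : 0 < K := by rw [hKd]; positivity
  have hK : 2 * δ * K = 1 := by rw [hKd]; field_simp
  let J : Sph → ℝ → ℝ := fun v t =>
    p2 (R • (v : E3)) t / (2 * max t δ) - p1 (R • (v : E3)) t / (2 * (max t δ)^2)
  have hmax : ∀ t, 0 < max t δ := fun t => lt_max_of_lt_right hδ0
  have hJc : Continuous fun q : Sph × ℝ => J q.1 q.2 := by
    refine Continuous.sub (Continuous.div ?_ (by fun_prop) fun q => ?_)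
      (Continuous.div ?_ (by fun_prop) fun q => ?_)
    · exact hc2.comp (by fun_prop : Continuous fun q : Sph × ℝ => (R • (q.1 : E3), q.2))
    · have := hmax q.2; positivity
    · exact hc1.comp (by fun_prop : Continuous fun q : Sph × ℝ => (R • (q.1 : E3), q.2))
    · have := hmax q.2; positivity
  let FL : ℝ → Sph → ℝ → ℝ := fun ε v κ => (R - ⟪y, (v : E3)⟫) *
    (J v (‖R • (v : E3) - y‖ + ε * κ) * ψ0 (2 * ‖R • (v : E3) - y‖ * κ + ε * κ^2))
  let FR : ℝ → Sph → ℝ → ℝ := fun ε θ κ => S (y + (ε * κ) • (θ : E3)) *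
      (κ * (R + ⟪y, (θ : E3)⟫) * ψ1 (2 * (R + ⟪y, (θ : E3)⟫) * κ + ε * κ^2) / (2 * R)
        - ⟪y, (θ : E3)⟫ * ψ0 (2 * (R + ⟪y, (θ : E3)⟫) * κ + ε * κ^2) / (4 * R^2))
  have cL : Continuous fun ε : ℝ => ∫ v : Sph, (∫ κ in (0:ℝ)..K, FL ε v κ) ∂sig := by
    refine nf_cont2 FL ?_ K
    have := hJc.comp (by fun_prop : Continuous fun q : (ℝ × Sph) × ℝ =>
      (q.1.2, ‖R • (q.1.2 : E3) - y‖ + q.1.1 * q.2))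
    simp only [Function.comp_def] at this
    simp only [FL]
    fun_prop
  have cR : Continuous fun ε : ℝ => ∫ v : Sph, (∫ κ in (0:ℝ)..K, FR ε v κ) ∂sig := by
    refine nf_cont2 FR ?_ K
    simp only [FR]
    fun_prop
  have hpos : ∀ ε > 0, ∫ v : Sph, (∫ κ in (0:ℝ)..K, FL ε v κ) ∂sig =
      ∫ v : Sph, (∫ κ in (0:ℝ)..K, FR ε v κ) ∂sig := by
    intro ε hε
    have hq : ∀ t, HasDerivAt (fun t : ℝ => t / ε) (1 / ε) t := fun t => by
      simpa using (hasDerivAt_id t).div_const ε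
    have hz : ∀ t, t ≤ 0 ∨ ε ≤ t → t / ε ≤ 0 ∨ 1 ≤ t / ε := fun t ht =>
      ht.imp (fun h => div_nonpos_of_nonpos_of_nonneg h hε.le) (fun h => (one_le_div hε).2 h)
    have key := nf_identity S hS hsupp R hR hsub p p1 p2 hp d1 d2 hc2 y hy
      (fun t => ψ0 (t / ε)) (fun t => ψ1 (t / ε) * (1 / ε)) (fun t => ψ2 (t / ε) * (1 / ε) * (1 / ε))
      (fun t => (h0 _).comp t (hq t)) (fun t => ((h1 _).comp t (hq t)).mul_const _)
      (by fun_prop) ε (ε * K) (by positivity) (by nlinarith)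
      (fun t ht => z0 _ (hz t ht)) (fun t ht => by rw [z1 _ (hz t ht), zero_mul])
      (fun t ht => by rw [z2 _ (hz t ht), zero_mul, zero_mul])
    have eL : ∀ v : Sph, (R - ⟪y, (v : E3)⟫) *
      (∫ t in ‖R • (v : E3) - y‖..(‖R • (v : E3) - y‖ + ε * K),
      (p2 (R • (v : E3)) t / (2 * t) - p1 (R • (v : E3)) t / (2 * t^2)) *
        ψ0 ((t^2 - ‖R • (v : E3) - y‖^2) / ε)) = ε * ∫ κ in (0:ℝ)..K, FL ε v κ := fun v => by
      simp only [FL]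
      rw [intervalIntegral.integral_const_mul]
      have := hrb v
      set r := ‖R • (v : E3) - y‖
      have e := intervalIntegral.smul_integral_comp_add_mul (a := 0) (b := K)
        (fun t => (p2 (R • (v : E3)) t / (2 * t) - p1 (R • (v : E3)) t / (2 * t^2)) *
        ψ0 ((t^2 - r^2) / ε)) ε r
      rw [mul_zero, add_zero] at e
      rw [← e, smul_eq_mul, mul_left_comm]
      congr 2
      refine intervalIntegral.integral_congr fun κ hκ => ?_
      rw [Set.uIcc_of_le hK0.le] at hκ
      have hge : δ ≤ r + ε * κ := by nlinarith [mul_nonneg hε.le hκ.1]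
      simp only [J, max_eq_left hge]
      rw [show ((r + ε * κ)^2 - r^2) / ε = 2 * r * κ + ε * κ^2 by field_simp; ring]
    have eR : ∀ θ : Sph, (∫ ρ in (0:ℝ)..(ε * K), S (y + ρ • (θ : E3)) *
      (ρ * (R + ⟪y, (θ : E3)⟫) * (ψ1 ((ρ^2 + 2 * (R + ⟪y, (θ : E3)⟫) * ρ) / ε) * (1 / ε)) / (2 * R)
        - ⟪y, (θ : E3)⟫ * ψ0 ((ρ^2 + 2 * (R + ⟪y, (θ : E3)⟫) * ρ) / ε) / (4 * R^2))) =
        ε * ∫ κ in (0:ℝ)..K, FR ε θ κ := fun θ => by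
      simp only [FR]
      set β := ⟪y, (θ : E3)⟫
      have e := intervalIntegral.smul_integral_comp_mul_left (a := 0) (b := K)
        (fun ρ => S (y + ρ • (θ : E3)) *
      (ρ * (R + β) * (ψ1 ((ρ^2 + 2 * (R + β) * ρ) / ε) * (1 / ε)) / (2 * R)
        - β * ψ0 ((ρ^2 + 2 * (R + β) * ρ) / ε) / (4 * R^2))) ε
      rw [mul_zero] at e
      rw [← e, smul_eq_mul]
      congr 1
      refine intervalIntegral.integral_congr fun κ hκ => ?_
      rw [show ((ε * κ)^2 + 2 * (R + β) * (ε * κ)) / ε = 2 * (R + β) * κ + ε * κ^2 by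
        field_simp; ring]
      field_simp
    simp only [eL, eR, integral_const_mul] at key
    exact mul_left_cancel₀ hε.ne' key
  have hzero : ∫ v : Sph, (∫ κ in (0:ℝ)..K, FL 0 v κ) ∂sig =
      ∫ v : Sph, (∫ κ in (0:ℝ)..K, FR 0 v κ) ∂sig := by
    have t1 := (cL.tendsto 0).mono_left (nhdsWithin_le_nhds (s := Set.Ioi 0))
    have t2 := (cR.tendsto 0).mono_left (nhdsWithin_le_nhds (s := Set.Ioi 0))
    refine tendsto_nhds_unique (t1.congr' ?_) t2
    filter_upwards [self_mem_nhdsWithin] with ε hε using hpos ε hε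
  have eL0 : ∀ v : Sph, ∫ κ in (0:ℝ)..K, FL 0 v κ = m * ((R - ⟪y, (v : E3)⟫) *
      ((p2 (R • (v : E3)) ‖R • (v : E3) - y‖ / (2 * ‖R • (v : E3) - y‖)
      - p1 (R • (v : E3)) ‖R • (v : E3) - y‖ / (2 * ‖R • (v : E3) - y‖^2)) /
        (2 * ‖R • (v : E3) - y‖))) := fun v => by
    have hr := hrb v
    simp only [FL, zero_mul, add_zero]
    rw [intervalIntegral.integral_const_mul, intervalIntegral.integral_const_mul,
      nf_m0 ψ0 c0 z0 _ K (by linarith) (by nlinarith)]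
    simp only [J, max_eq_left hr]
    ring
  have eR0 : ∀ θ : Sph, ∫ κ in (0:ℝ)..K, FR 0 θ κ = S y * (- (m / (8 * R^2))) := fun θ => by
    have hB := hBb θ
    simp only [FR, zero_mul, add_zero, zero_smul]
    set β := ⟪y, (θ : E3)⟫
    have hB0 : 0 < R + β := by linarith
    have e : ∀ κ : ℝ, κ * (R + β) * ψ1 (2 * (R + β) * κ) / (2 * R)
        - β * ψ0 (2 * (R + β) * κ) / (4 * R^2) =
        ((R + β) / (2 * R)) * (κ * ψ1 (2 * (R + β) * κ)) - (β / (4 * R^2)) * ψ0 (2 * (R + β) * κ) :=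
      fun κ => by ring
    simp only [e]
    rw [intervalIntegral.integral_const_mul,
      intervalIntegral.integral_sub (Continuous.intervalIntegrable (by fun_prop) _ _)
      (Continuous.intervalIntegrable (by fun_prop) _ _), intervalIntegral.integral_const_mul,
      intervalIntegral.integral_const_mul, nf_m0 ψ0 c0 z0 _ K hB0 (by nlinarith),
      nf_m1 ψ0 ψ1 h0 c1 z0 _ K hB0 (by nlinarith), ← hmd]
    congr 1
    field_simp
    ring
  simp only [eL0, eR0, integral_const_mul, integral_const, nf_total, smul_eq_mul] at hzero
  apply mul_left_cancel₀ hm.ne'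
  rw [hzero]
  field_simp
  ring

theorem near_field_reconstruction_3d (R : ℝ) (hR : 0 < R)
    (σ : Measure (Metric.sphere (0 : EuclideanSpace ℝ (Fin 3)) 1))
    (hσ : σ = (volume : Measure (EuclideanSpace ℝ (Fin 3))).toSphere)
    (S : EuclideanSpace ℝ (Fin 3) → ℝ)
    (hS : ContDiff ℝ (⊤ : ℕ∞) S) (hsupp : HasCompactSupport S)
    (hsub : tsupport S ⊆ Metric.ball (0 : EuclideanSpace ℝ (Fin 3)) R)
    (p : EuclideanSpace ℝ (Fin 3) → ℝ → ℝ)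
    (hp : ∀ x t, p x t = (t / (4 * π)) *
      ∫ ω : Metric.sphere (0 : EuclideanSpace ℝ (Fin 3)) 1,
        S (x + t • (ω : EuclideanSpace ℝ (Fin 3))) ∂σ)
    (y : EuclideanSpace ℝ (Fin 3))
    (hy : y ∈ Metric.ball (0 : EuclideanSpace ℝ (Fin 3)) R) :
    S y = ∫ ω : Metric.sphere (0 : EuclideanSpace ℝ (Fin 3)) 1,
      (R ^ 2 : ℝ) *
        ((⟪R • (ω : EuclideanSpace ℝ (Fin 3)) - y, (ω : EuclideanSpace ℝ (Fin 3))⟫ /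
            (2 * π * ‖R • (ω : EuclideanSpace ℝ (Fin 3)) - y‖ ^ 2)) *
          (deriv (p (R • (ω : EuclideanSpace ℝ (Fin 3))))
              ‖R • (ω : EuclideanSpace ℝ (Fin 3)) - y‖ /
              ‖R • (ω : EuclideanSpace ℝ (Fin 3)) - y‖ -
            deriv (deriv (p (R • (ω : EuclideanSpace ℝ (Fin 3)))))
              ‖R • (ω : EuclideanSpace ℝ (Fin 3)) - y‖)) ∂σ := by
  subst hσ
  have hy' : ‖y‖ < R := by simpa using hy
  obtain ⟨p1, p2, -, hc1, hc2, d1, d2⟩ := nf_p_derivs S hS p hp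
  have key := nf_limit S hS.continuous hsupp R hR hsub p p1 p2 hp d1 d2 hc1 hc2 y hy'
  have e1 : ∀ x, deriv (p x) = p1 x := fun x => funext fun t => (d1 x t).deriv
  have e2 : ∀ x, deriv (p1 x) = p2 x := fun x => funext fun t => (d2 x t).deriv
  simp only [e1, e2]
  have e : ∀ v : Sph, (R ^ 2 : ℝ) * ((⟪R • (v : E3) - y, (v : E3)⟫ /
      (2 * π * ‖R • (v : E3) - y‖ ^ 2)) * (p1 (R • (v : E3)) ‖R • (v : E3) - y‖ / ‖R • (v : E3) - y‖ -
            p2 (R • (v : E3)) ‖R • (v : E3) - y‖)) =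
      (-(2 * R^2 / π)) * ((R - ⟪y, (v : E3)⟫) *
      ((p2 (R • (v : E3)) ‖R • (v : E3) - y‖ / (2 * ‖R • (v : E3) - y‖)
      - p1 (R • (v : E3)) ‖R • (v : E3) - y‖ / (2 * ‖R • (v : E3) - y‖^2)) /
        (2 * ‖R • (v : E3) - y‖))) := fun v => by
    have hr := nf_r_bound R hR y v
    have hr0 : 0 < ‖R • (v : E3) - y‖ := by linarith
    rw [inner_sub_left, real_inner_smul_left, real_inner_self_eq_norm_sq,
      show ‖(v : E3)‖ = 1 by simp]
    field_simp
    ring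
  simp only [e]
  rw [integral_const_mul, key]
  field_simp
end

section
/- Let S : ℝ³ → ℝ be smooth with compact support contained in the open ball B_R(0), and let p(x,t) := (t/(4π)) ∫_{S²} S(x + tω) dσ(ω). For x ∈ ∂B_R(0) and k > 0 define u(x,k) := ∫_0^∞ p(x,t) e^{ikt} dt (a finite integral, since t ↦ p(x,t) has compact support), and let h₀(z) := −i e^{iz}/z denote the zeroth-order spherical Hankel function of the first kind. Then for every y ∈ B_R(0), S(y) = lim_{ε→0⁺} (1/(2π²)) ∫_0^∞ e^{−εk} k² ( ∫_{∂B_R(0)} Re[ D_ν[x ↦ h₀(k|x−y|)](x) · conj(u(x,k)) ] ds(x) ) dk, where D_ν denotes the directional derivative along the outward unit normal ν_x = x/R of the sphere ∂B_R(0). -/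
open MeasureTheory Real Filter
open scoped RealInnerProductSpace Topology

local notation "E3" => EuclideanSpace ℝ (Fin 3)
local notation "S2" => Metric.sphere (0 : EuclideanSpace ℝ (Fin 3)) 1

lemma nf_polar_aux (f : E3 → ℝ) : ∫ x, f x =
    ∫ q : S2 × Set.Ioi (0:ℝ), f ((q.2:ℝ) • (q.1 : E3))
      ∂((volume : Measure E3).toSphere.prod (Measure.volumeIoiPow 2)) := by
  have h1 : ∫ x, f x = ∫ x : ({(0)}ᶜ : Set E3), f x.1 ∂((volume : Measure E3).comap (↑)) := by
    rw [integral_subtype_comap (measurableSet_singleton _).compl fun x ↦ f x,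
        restrict_compl_singleton]
  rw [h1]
  have := (volume : Measure E3).measurePreserving_homeomorphUnitSphereProd.integral_comp
        (Homeomorph.measurableEmbedding _) (fun q => f ((q.2:ℝ) • (q.1 : E3)))
  simp only [finrank_euclideanSpace, Fintype.card_fin] at this
  rw [← this]
  congr 1
  ext x
  congr 1
  have hx : ‖(x : E3)‖ ≠ 0 := norm_ne_zero_iff.2 x.2
  simp [smul_smul, mul_inv_cancel₀ hx]

lemma nf_map_vip : Measure.map (Subtype.val : Set.Ioi (0:ℝ) → ℝ) (Measure.volumeIoiPow 2) =
    ((volume : Measure ℝ).restrict (Set.Ioi 0)).withDensity (fun r => ENNReal.ofReal (r^2)) := by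
  rw [Measure.volumeIoiPow]
  ext s hs
  rw [Measure.map_apply measurable_subtype_coe hs, withDensity_apply _ (measurable_subtype_coe hs),
    withDensity_apply _ hs]
  rw [← map_comap_subtype_coe measurableSet_Ioi, 
   setLIntegral_map hs (by fun_prop) measurable_subtype_coe]

lemma nf_polar_s2 (f : E3 → ℝ) : ∫ x, f x =
    ∫ q : S2 × ℝ, q.2^2 * f (q.2 • (q.1 : E3))
      ∂((volume : Measure E3).toSphere.prod ((volume : Measure ℝ).restrict (Set.Ioi 0))) := by
  rw [nf_polar_aux]
  have h1 : MeasurePreserving (Prod.map (id : S2 → S2) (Subtype.val : Set.Ioi (0:ℝ) → ℝ)) 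
    ((volume : Measure E3).toSphere.prod (Measure.volumeIoiPow 2))
    ((volume : Measure E3).toSphere.prod (((volume : Measure ℝ).restrict (Set.Ioi 0)).withDensity (fun r => ENNReal.ofReal (r^2)))) := 
    (MeasurePreserving.id _).prod ⟨measurable_subtype_coe, nf_map_vip⟩
  have := h1.integral_comp (MeasurableEmbedding.id.prodMap (MeasurableEmbedding.subtype_coe measurableSet_Ioi)) (fun q => f ((q.2:ℝ) • (q.1 : E3)))
  simp only [Prod.map_snd, Prod.map_fst, id] at this
  rw [this, prod_withDensity_right (by fun_prop), integral_withDensity_eq_integral_toReal_smul (by fun_prop) (by simp)]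
  congr 1
  ext q
  rw [ENNReal.toReal_ofReal (by positivity), smul_eq_mul]

lemma nf_cap_fubini (g : E3 → ℝ) (hg : Continuous g) (T : ℝ) (hT : 0 < T) :
   ∫ x in Metric.ball 0 T, g x = ∫ t in (0:ℝ)..T, t^2 * ∫ ω : S2, g (t • (ω : E3)) ∂((volume : Measure E3).toSphere) := by
  rw [← integral_indicator measurableSet_ball, nf_polar_s2]
  have : ∀ q : S2 × ℝ, q.2 ∈ Set.Ioi (0:ℝ) → q.2^2 * (Metric.ball (0:E3) T).indicator g (q.2 • (q.1 : E3)) 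
     = (Set.univ ×ˢ Set.Iio T).indicator (fun q : S2 × ℝ => q.2^2 * g (q.2 • (q.1 : E3))) q := by
    intro q hq
    have h1 : ‖(q.1 : E3)‖ = 1 := by simpa using q.1.2
    by_cases h : q.2 < T
    · rw [Set.indicator_of_mem, Set.indicator_of_mem]
      · exact ⟨trivial, h⟩
      · simp [norm_smul, h1, abs_of_pos hq.out, h]
    · rw [Set.indicator_of_notMem, Set.indicator_of_notMem]
      · exact mul_zero _
      · simpa using h
      · simpa [norm_smul, h1, abs_of_pos hq.out] using h
  have h2 : (volume : Measure E3).toSphere.prod ((volume : Measure ℝ).restrict (Set.Ioi 0)) = 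
     ((volume : Measure E3).toSphere.prod (volume : Measure ℝ)).restrict (Set.univ ×ˢ (Set.Ioi 0)) := by
    rw [← Measure.prod_restrict, Measure.restrict_univ]
  rw [h2, setIntegral_congr_fun (MeasurableSet.univ.prod measurableSet_Ioi) (fun q hq => this q hq.2),
    setIntegral_indicator (MeasurableSet.univ.prod measurableSet_Iio), Set.prod_inter_prod, Set.univ_inter, Set.Ioi_inter_Iio,
    intervalIntegral.integral_of_le hT.le, integral_Ioc_eq_integral_Ioo, ← Measure.prod_restrict, Measure.restrict_univ, integral_prod_symm]
  · congr 1; ext t; exact integral_const_mul (t^2) (fun ω : S2 => g (t • (ω : E3)))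
  · have : Integrable (fun q : S2 × ℝ => q.2^2 * g (q.2 • (q.1 : E3))) (((volume : Measure E3).toSphere.prod (volume : Measure ℝ)).restrict (Set.univ ×ˢ Set.Icc 0 T)) :=
      ContinuousOn.integrableOn_compact (isCompact_univ.prod isCompact_Icc) (by fun_prop)
    rw [← Measure.restrict_univ (μ := (volume : Measure E3).toSphere), Measure.prod_restrict]
    exact this.mono_measure (Measure.restrict_mono (Set.prod_mono le_rfl Set.Ioo_subset_Icc_self) le_rfl)

lemma nf_sph_of_deriv (g : E3 → ℝ) (hg : Continuous g) (Φ : ℝ → ℝ) (Φ' : ℝ)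
    (h : ∀ T > 0, ∫ x in Metric.ball 0 T, g x = Φ T) (hΦ : HasDerivAt Φ Φ' 1) :
    ∫ ω : S2, g ω ∂((volume : Measure E3).toSphere) = Φ' := by
  have hc : Continuous (fun t : ℝ => t^2 * ∫ ω : S2, g (t • (ω : E3)) ∂((volume : Measure E3).toSphere)) := by
    refine (continuous_id.pow 2).mul ?_
    have := continuous_parametric_integral_of_continuous (μ := (volume : Measure E3).toSphere) (f := fun (t:ℝ) (ω : S2) => g (t • (ω : E3))) (by fun_prop) isCompact_univ
    simpa using this
  have h1 := intervalIntegral.integral_hasDerivAt_right (hc.intervalIntegrable 0 1) hc.stronglyMeasurable.stronglyMeasurableAtFilter hc.continuousAt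
  have h2 : HasDerivAt Φ ((1:ℝ)^2 * ∫ ω : S2, g ((1:ℝ) • (ω : E3)) ∂((volume : Measure E3).toSphere)) 1 := by
    refine h1.congr_of_eventuallyEq ?_
    filter_upwards [lt_mem_nhds (show (0:ℝ) < 1 by norm_num)] with T hT
    rw [← h T hT, nf_cap_fubini g hg T hT]
  have := h2.unique hΦ
  simpa using this

lemma nf_inv_perp (θ y : E3) (hy : ⟪y, θ⟫ = 0) (f : ℝ → ℝ) (hf : Continuous f) :
    ∫ ω : S2, ⟪(ω:E3), y⟫ * f ⟪(ω:E3), θ⟫ ∂((volume : Measure E3).toSphere) = 0 := by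
  refine nf_sph_of_deriv (fun x => ⟪x, y⟫ * f ⟪x, θ⟫) (by fun_prop) (fun _ => 0) 0 ?_ (hasDerivAt_const _ _)
  intro T hT
  let A := (ℝ ∙ y)ᗮ.reflection
  have hAy : A y = -y := Submodule.reflection_orthogonalComplement_singleton_eq_neg y
  have hAθ : A θ = θ := by
    rw [Submodule.reflection_eq_self_iff, Submodule.mem_orthogonal_singleton_iff_inner_right]
    exact hy
  rw [← integral_indicator measurableSet_ball]
  set F := (Metric.ball (0:E3) T).indicator (fun x => ⟪x, y⟫ * f ⟪x, θ⟫) with hF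
  have h1 : ∫ x, F (A x) = ∫ x, F x := A.measurePreserving.integral_comp A.toHomeomorph.measurableEmbedding F
  have h2 : ∀ x, F (A x) = - F x := by
    intro x
    have e1 : ⟪A x, y⟫ = - ⟪x, y⟫ := by
      have := A.inner_map_map x (-y)
      rw [map_neg, hAy, neg_neg] at this
      rw [this, inner_neg_right]
    have e2 : ⟪A x, θ⟫ = ⟪x, θ⟫ := by
      have := A.inner_map_map x θ
      rwa [hAθ] at this
    by_cases h : ‖x‖ < T
    · rw [hF, Set.indicator_of_mem, Set.indicator_of_mem, e1, e2]
      · ring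
      · simpa using h
      · simpa using h
    · rw [hF, Set.indicator_of_notMem, Set.indicator_of_notMem]
      · simp
      · simpa using h
      · simpa using h
  simp only [h2, integral_neg] at h1
  linarith

lemma nf_slice (f : ℝ → ℝ) (hf : Continuous f) (T : ℝ) (hT : 0 < T) :
    ∫ x in Metric.ball (0:E3) T, f (x 0) = ∫ s in (-T)..T, π * (T^2 - s^2) * f s := by
  rw [← integral_indicator measurableSet_ball]
  set F := (Metric.ball (0:E3) T).indicator (fun x => f (x 0)) with hF
  let H : ℝ × EuclideanSpace ℝ (Fin 2) → ℝ := {q | q.1^2 + ‖q.2‖^2 < T^2}.indicator (fun q => f q.1)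
  let e : E3 → ℝ × EuclideanSpace ℝ (Fin 2) := fun x => (x 0, WithLp.toLp 2 (fun j => x (Fin.succ j)))
  have he : MeasurePreserving e := by
    have h1 := (PiLp.volume_preserving_ofLp (Fin 3))
    have h2 := volume_preserving_piFinSuccAbove (fun _ : Fin 3 => ℝ) 0
    have h3 := (MeasurePreserving.id (volume : Measure ℝ)).prod (PiLp.volume_preserving_toLp (Fin 2))
    have := h3.comp (h2.comp h1)
    exact this
  have hms : MeasurableSet {q : ℝ × EuclideanSpace ℝ (Fin 2) | q.1^2 + ‖q.2‖^2 < T^2} := 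
    measurableSet_lt (by fun_prop) (by fun_prop)
  have hH : Measurable H := Measurable.indicator (by fun_prop) hms
  have hFH : ∀ x, F x = H (e x) := by
    intro x
    have : ‖x‖^2 = (e x).1^2 + ‖(e x).2‖^2 := by
      simp [EuclideanSpace.norm_sq_eq, Fin.sum_univ_succ, e]
    have h1 : x ∈ Metric.ball (0:E3) T ↔ e x ∈ {q : ℝ × EuclideanSpace ℝ (Fin 2) | q.1^2 + ‖q.2‖^2 < T^2} := by
      rw [Set.mem_ofPred_eq, ← this, mem_ball_zero_iff]
      exact (sq_lt_sq₀ (norm_nonneg _) hT.le).symm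
    by_cases h : x ∈ Metric.ball (0:E3) T
    · rw [hF, Set.indicator_of_mem h]
      exact (Set.indicator_of_mem (h1.1 h) (fun q : ℝ × EuclideanSpace ℝ (Fin 2) => f q.1)).symm
    · rw [hF, Set.indicator_of_notMem h]
      exact (Set.indicator_of_notMem (fun h' => h (h1.2 h')) (fun q : ℝ × EuclideanSpace ℝ (Fin 2) => f q.1)).symm
  simp only [hFH]
  have hcomp : ∫ x, H (e x) = ∫ q, H q := by
    rw [← he.map_eq, integral_map he.measurable.aemeasurable]
    exact hH.aestronglyMeasurable
  have hHi : Integrable H := by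
    refine (integrable_indicator_iff hms).2 ?_
    have : IntegrableOn (fun q : ℝ × EuclideanSpace ℝ (Fin 2) => f q.1) (Metric.closedBall 0 T) := 
      ContinuousOn.integrableOn_compact (isCompact_closedBall _ _) (by fun_prop)
    refine this.mono_set ?_
    rintro ⟨a, b⟩ hq
    simp only [Set.mem_ofPred_eq] at hq
    rw [mem_closedBall_zero_iff, Prod.norm_def]
    refine max_le ?_ ?_
    · exact abs_le_of_sq_le_sq (by nlinarith [sq_nonneg ‖b‖]) hT.le
    · exact abs_le_of_sq_le_sq (by nlinarith [sq_nonneg a]) hT.le |> le_trans (le_abs_self _)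
  rw [hcomp, Measure.volume_eq_prod, integral_prod _ hHi, intervalIntegral.integral_of_le (by linarith), integral_Ioc_eq_integral_Ioo,
    ← integral_indicator measurableSet_Ioo]
  congr 1
  ext s
  by_cases hs : s ∈ Set.Ioo (-T) T
  · rw [Set.indicator_of_mem hs]
    have h0 : 0 < T^2 - s^2 := by nlinarith [hs.1, hs.2]
    have : ∀ v : EuclideanSpace ℝ (Fin 2), H (s, v) = (Metric.ball (0: EuclideanSpace ℝ (Fin 2)) (√(T^2-s^2))).indicator (fun _ => f s) v := by
      intro v
      have h1 : v ∈ Metric.ball (0: EuclideanSpace ℝ (Fin 2)) (√(T^2-s^2)) ↔ (s, v) ∈ {q : ℝ × EuclideanSpace ℝ (Fin 2) | q.1^2 + ‖q.2‖^2 < T^2} := by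
        rw [Set.mem_ofPred_eq, mem_ball_zero_iff, Real.lt_sqrt (norm_nonneg _)]
        constructor <;> intro h <;> simp only at * <;> linarith
      by_cases h : v ∈ Metric.ball (0: EuclideanSpace ℝ (Fin 2)) (√(T^2-s^2))
      · rw [Set.indicator_of_mem h]
        exact (Set.indicator_of_mem (h1.1 h) _)
      · rw [Set.indicator_of_notMem h]
        exact (Set.indicator_of_notMem (fun h' => h (h1.2 h')) _)
    simp only [this]
    rw [integral_indicator measurableSet_ball, setIntegral_const, measureReal_def, EuclideanSpace.volume_ball_fin_two]
    have hq : √(T^2-s^2)^2 = T^2-s^2 := Real.sq_sqrt h0.le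
    rw [← ENNReal.ofReal_pow (Real.sqrt_nonneg _), hq]
    simp [h0.le, Real.pi_pos.le]
    left; ring
  · rw [Set.indicator_of_notMem hs]
    have : ∀ v : EuclideanSpace ℝ (Fin 2), H (s, v) = 0 := by
      intro v
      refine (Set.indicator_of_notMem ?_ _)
      intro h
      simp only [Set.mem_ofPred_eq] at h
      exact hs (abs_lt.1 (abs_lt_of_sq_lt_sq (by nlinarith [sq_nonneg ‖v‖]) hT.le))
    simp [this]

lemma nf_arch0_s2 (θ : E3) (hθ : ‖θ‖ = 1) (f : ℝ → ℝ) (hf : Continuous f) :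
    ∫ ω : S2, f ⟪(ω:E3), θ⟫ ∂((volume : Measure E3).toSphere) = 2 * π * ∫ c in (-1:ℝ)..1, f c := by
  refine nf_sph_of_deriv (fun x => f ⟪x, θ⟫) (by fun_prop)
    (fun T => π * (T^2 * (∫ s in (-T)..T, f s) - ∫ s in (-T)..T, s^2 * f s)) _ ?_ ?_
  · intro T hT
    obtain ⟨b, hb⟩ := Orthonormal.exists_orthonormalBasis_extension_of_card_eq (𝕜 := ℝ) (E := E3) (ι := Fin 3) (by simp)
      (v := fun _ => θ) (s := {0}) (by
        constructor
        · intro i; simpa using hθ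
        · intro i j hij; exact absurd (Subsingleton.elim i j) hij)
    have hb0 : b 0 = θ := hb 0 rfl
    have h1 := b.repr.measurePreserving.integral_comp b.repr.toHomeomorph.measurableEmbedding ((Metric.ball (0:E3) T).indicator (fun x => f (x 0)))
    rw [integral_indicator measurableSet_ball, nf_slice f hf T hT] at h1
    have h2 : ∀ x, (Metric.ball (0:E3) T).indicator (fun x => f (x 0)) (b.repr x) = (Metric.ball (0:E3) T).indicator (fun x => f ⟪x, θ⟫) x := by
      intro x
      have e : b.repr x 0 = ⟪x, θ⟫ := by rw [b.repr_apply_apply, hb0, real_inner_comm]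
      by_cases h : ‖x‖ < T
      · rw [Set.indicator_of_mem, Set.indicator_of_mem, e]
        · simpa using h
        · simpa using h
      · rw [Set.indicator_of_notMem, Set.indicator_of_notMem]
        · simpa using h
        · simpa using h
    simp only [h2] at h1
    rw [integral_indicator measurableSet_ball] at h1
    rw [h1]
    have : ∀ s, π * (T^2 - s^2) * f s = π * (T^2 * f s - s^2 * f s) := fun s => by ring
    simp only [this]
    rw [intervalIntegral.integral_const_mul, intervalIntegral.integral_sub, intervalIntegral.integral_const_mul]
    · exact Continuous.intervalIntegrable (by fun_prop) _ _
    · exact Continuous.intervalIntegrable (by fun_prop) _ _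
  · have key : ∀ g : ℝ → ℝ, Continuous g → HasDerivAt (fun T : ℝ => ∫ s in (-T)..T, g s) (g 1 + g (-1)) 1 := by
      intro g hg
      have a1 : ∀ T : ℝ, ∫ s in (-T)..T, g s = (∫ s in (0:ℝ)..T, g s) - ∫ s in (0:ℝ)..(-T), g s := fun T =>
        (intervalIntegral.integral_interval_sub_left (hg.intervalIntegrable _ _) (hg.intervalIntegrable _ _)).symm
      simp only [a1]
      have d : ∀ u, HasDerivAt (fun T : ℝ => ∫ s in (0:ℝ)..T, g s) (g u) u := fun u =>
        intervalIntegral.integral_hasDerivAt_right (hg.intervalIntegrable _ _) hg.stronglyMeasurable.stronglyMeasurableAtFilter hg.continuousAt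
      have := (d 1).sub ((d (-1)).comp (1:ℝ) (hasDerivAt_neg (1:ℝ)))
      convert! this using 1
      ring
    have h := ((((hasDerivAt_pow 2 (1:ℝ)).mul (key f hf)).sub (key (fun s => s^2 * f s) (by fun_prop))).const_mul π)
    convert! h using 1
    simp; ring

lemma nf_arch_s2 (θ : E3) (hθ : ‖θ‖ = 1) (y : E3) (R : ℝ) (f : ℝ → ℝ) (hf : Continuous f) :
    ∫ ω : S2, (R - ⟪(ω:E3), y⟫) * f ⟪(ω:E3), θ⟫ ∂((volume : Measure E3).toSphere)
      = 2 * π * ∫ c in (-1:ℝ)..1, (R - ⟪y, θ⟫ * c) * f c := by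
  rw [← nf_arch0_s2 θ hθ (fun c => (R - ⟪y, θ⟫ * c) * f c) (by fun_prop)]
  have hp : ⟪y - ⟪y, θ⟫ • θ, θ⟫ = 0 := by
    rw [inner_sub_left, inner_smul_left, real_inner_self_eq_norm_sq, hθ]; simp
  have h0 := nf_inv_perp θ (y - ⟪y, θ⟫ • θ) hp f hf
  rw [← sub_eq_zero, ← integral_sub, ← neg_eq_zero, ← h0, ← integral_neg]
  · congr 1; ext ω
    rw [inner_sub_right, inner_smul_right]; ring
  · exact Continuous.integrable_of_hasCompactSupport (by fun_prop) (HasCompactSupport.of_compactSpace _)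
  · exact Continuous.integrable_of_hasCompactSupport (by fun_prop) (HasCompactSupport.of_compactSpace _)

noncomputable def nfφ (δ s : ℝ) : ℝ := δ / (δ^2 + s^2)
noncomputable def nfφ1 (δ s : ℝ) : ℝ := -2 * δ * s / (δ^2 + s^2)^2
noncomputable def nfφ2 (δ s : ℝ) : ℝ := δ * (6 * s^2 - 2 * δ^2) / (δ^2 + s^2)^3

lemma nf_den {δ : ℝ} (hδ : 0 < δ) (s : ℝ) : 0 < δ^2 + s^2 := by positivity

lemma nfφ_cont {δ : ℝ} (hδ : 0 < δ) : Continuous (nfφ δ) := by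
  unfold nfφ
  exact continuous_const.div (by fun_prop) (fun s => (nf_den hδ s).ne')

lemma nfφ1_cont {δ : ℝ} (hδ : 0 < δ) : Continuous (nfφ1 δ) := by
  unfold nfφ1
  exact Continuous.div (by fun_prop) (by fun_prop) (fun s => (pow_pos (nf_den hδ s) 2).ne')

lemma nfφ2_cont {δ : ℝ} (hδ : 0 < δ) : Continuous (nfφ2 δ) := by
  unfold nfφ2
  exact Continuous.div (by fun_prop) (by fun_prop) (fun s => (pow_pos (nf_den hδ s) 3).ne')

lemma nfφ_deriv {δ : ℝ} (hδ : 0 < δ) (s : ℝ) : HasDerivAt (nfφ δ) (nfφ1 δ s) s := by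
  have h := nf_den hδ s
  have := (hasDerivAt_const s δ).div (((hasDerivAt_pow 2 s).const_add (δ^2))) h.ne'
  unfold nfφ1
  convert! this using 1
  simp; ring

lemma nfφ1_deriv {δ : ℝ} (hδ : 0 < δ) (s : ℝ) : HasDerivAt (nfφ1 δ) (nfφ2 δ s) s := by
  have h := nf_den hδ s
  have := ((hasDerivAt_id s).const_mul (-2 * δ)).div (((hasDerivAt_pow 2 s).const_add (δ^2)).pow 2) (pow_pos h 2).ne'
  unfold nfφ2
  convert! this using 1
  simp
  field_simp
  ring

lemma nf_peak_int (r : ℝ) {δ : ℝ} (hδ : 0 < δ) : ∀ a b : ℝ, ∫ t in a..b, nfφ δ (t - r) = arctan ((b - r)/δ) - arctan ((a-r)/δ) := by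
  intro a b
  refine intervalIntegral.integral_eq_sub_of_hasDerivAt (f := fun t => arctan ((t - r)/δ)) ?_ ?_
  · intro t _
    have := (((hasDerivAt_id t).sub_const r).div_const δ).arctan
    convert! this using 1
    unfold nfφ
    simp
    field_simp
  · exact ((nfφ_cont hδ).comp (by fun_prop)).intervalIntegrable _ _

lemma nf_peak_bound (g : ℝ → ℝ) (a T r C : ℝ) (haT : a ≤ T) (hC : ∀ t ∈ Set.Icc a T, |g t| ≤ C) {δ : ℝ} (hδ : 0 < δ) :
    ‖∫ t in a..T, g t * nfφ δ (t - r)‖ ≤ C * π := by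
  have hC0 : 0 ≤ C := (abs_nonneg _).trans (hC a ⟨le_rfl, haT⟩)
  have h1 : ‖∫ t in a..T, g t * nfφ δ (t - r)‖ ≤ ∫ t in a..T, C * nfφ δ (t - r) := by
    refine intervalIntegral.norm_integral_le_of_norm_le haT ?_ ?_
    · refine Eventually.of_forall (fun t ht => ?_)
      have : 0 ≤ nfφ δ (t - r) := by unfold nfφ; positivity
      rw [norm_mul, Real.norm_eq_abs, Real.norm_of_nonneg this]
      exact mul_le_mul_of_nonneg_right (hC t ⟨ht.1.le, ht.2⟩) this
    · exact (continuous_const.mul ((nfφ_cont hδ).comp (by fun_prop))).intervalIntegrable _ _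
  rw [intervalIntegral.integral_const_mul, nf_peak_int r hδ] at h1
  refine h1.trans (mul_le_mul_of_nonneg_left ?_ hC0)
  linarith [arctan_lt_pi_div_two ((T - r)/δ), neg_pi_div_two_lt_arctan ((a-r)/δ)]

lemma nf_peak (g : ℝ → ℝ) (a T r : ℝ) (har : a < r) (hrT : r < T) (hg : ContinuousOn g (Set.Icc a T)) :
    Tendsto (fun δ => ∫ t in a..T, g t * nfφ δ (t - r)) (𝓝[>] 0) (𝓝 (π * g r)) := by
  have hI : Integrable ((Set.Icc a T).indicator g) := by
    rw [integrable_indicator_iff measurableSet_Icc]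
    exact hg.integrableOn_compact isCompact_Icc
  have hn : Set.Icc a T ∈ 𝓝 r := Icc_mem_nhds har hrT
  have hCA : ContinuousAt ((Set.Icc a T).indicator g) r := by
    refine (hg.continuousAt hn).congr ?_
    filter_upwards [hn] with t ht
    rw [Set.indicator_of_mem ht]
  have key := tendsto_integral_comp_smul_smul_of_integrable' (μ := (volume : Measure ℝ)) (φ := fun x : ℝ => π⁻¹ * (1 + x^2)⁻¹)
    (by intro x; positivity) (by rw [integral_const_mul, integral_univ_inv_one_add_sq]; field_simp)
    (by
      have h1 : Tendsto (fun x : ℝ => ‖x‖⁻¹) (Bornology.cobounded ℝ) (𝓝 0) := 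
        tendsto_inv_atTop_zero.comp tendsto_norm_cobounded_atTop
      have h2 := h1.const_mul π⁻¹
      rw [mul_zero] at h2
      refine squeeze_zero' (Eventually.of_forall fun x => by positivity) ?_ h2
      filter_upwards [Bornology.eventually_ne_cobounded (0:ℝ)] with x hx
      have : 0 < ‖x‖ := norm_pos_iff.2 hx
      have e : x^2 = ‖x‖^2 := by rw [Real.norm_eq_abs, sq_abs]
      rw [e]
      simp only [Module.finrank_self, pow_one]
      rw [show ‖x‖ * (π⁻¹ * (1 + ‖x‖^2)⁻¹) = π⁻¹ * (‖x‖ * (1 + ‖x‖^2)⁻¹) by ring]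
      refine mul_le_mul_of_nonneg_left ?_ (by positivity)
      rw [← div_eq_mul_inv, div_le_iff₀ (by positivity)]
      field_simp
      linarith)
    hI hCA
  have key2 := (key.comp tendsto_inv_nhdsGT_zero).const_mul π
  rw [Set.indicator_of_mem (show r ∈ Set.Icc a T from ⟨har.le, hrT.le⟩)] at key2
  refine key2.congr' ?_
  filter_upwards [self_mem_nhdsWithin] with δ hδ
  have hδ : 0 < δ := hδ
  rw [intervalIntegral.integral_of_le (har.trans hrT).le, ← integral_Icc_eq_integral_Ioc, ← integral_indicator measurableSet_Icc]
  simp only [Function.comp]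
  rw [← integral_const_mul]
  congr 1; ext t
  by_cases ht : t ∈ Set.Icc a T
  · rw [Set.indicator_of_mem ht, Set.indicator_of_mem ht]
    have := nf_den hδ (t - r)
    have := nf_den hδ (r - t)
    have e : (r - t)^2 = (t-r)^2 := by ring
    simp [nfφ]
    field_simp
    rw [e]
    ring
  · rw [Set.indicator_of_notMem ht, Set.indicator_of_notMem ht]; simp

lemma nf_laplace (ε τ : ℝ) (hε : 0 < ε) : ∫ k in Set.Ioi (0:ℝ), exp (-ε * k) * cos (k * τ) = nfφ ε τ := by
  have h := integral_exp_mul_complex_Ioi (a := (-ε : ℂ) + τ * Complex.I) (by simp [hε]) 0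
  have hi := integrableOn_exp_mul_complex_Ioi (a := (-ε : ℂ) + τ * Complex.I) (by simp [hε]) 0
  have h2 := integral_re hi
  have e : ∀ k : ℝ, RCLike.re (Complex.exp (((-ε : ℂ) + τ * Complex.I) * k)) = exp (-ε * k) * cos (k * τ) := by
    intro k
    simp [Complex.exp_re, mul_comm τ k]
  simp only [e] at h2
  rw [h2, h]
  unfold nfφ
  simp [Complex.div_re, Complex.normSq_apply]
  field_simp

lemma nf_sph_deriv (f f' : ℝ → S2 → ℝ) (hf : Continuous f.uncurry) (hf' : Continuous f'.uncurry)
    (h : ∀ t ω, HasDerivAt (fun t => f t ω) (f' t ω) t) (t : ℝ) : 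
    HasDerivAt (fun t => ∫ ω, f t ω ∂((volume : Measure E3).toSphere)) (∫ ω, f' t ω ∂((volume : Measure E3).toSphere)) t := by
  obtain ⟨C, hC⟩ := ((isCompact_Icc (a := t - 1) (b := t + 1)).prod (isCompact_univ (X := S2))).exists_bound_of_continuousOn hf'.continuousOn
  refine (hasDerivAt_integral_of_dominated_loc_of_deriv_le (s := Set.Icc (t-1) (t+1)) (bound := fun _ => C) (Icc_mem_nhds (by linarith) (by linarith)) ?_ ?_ ?_ ?_ ?_ ?_).2
  · exact Eventually.of_forall fun s => Continuous.aestronglyMeasurable (by fun_prop)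
  · exact Continuous.integrable_of_hasCompactSupport (by fun_prop) (HasCompactSupport.of_compactSpace _)
  · exact Continuous.aestronglyMeasurable (by fun_prop)
  · exact Eventually.of_forall fun ω s hs => hC (s, ω) ⟨hs, trivial⟩
  · exact integrable_const _
  · exact Eventually.of_forall fun ω s hs => h s ω

noncomputable def nfN (R u η v : ℝ) : ℝ :=
  -1/(2*R) * ((R-u) * (η * nfφ1 1 (η*(v-2*R))) - (R+u) * (η * nfφ1 1 (η*(v+2*R))))
    + u/(4*R^2) * (nfφ 1 (η*(v-2*R)) - nfφ 1 (η*(v+2*R)))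

lemma nf_N_int (R u η v : ℝ) (hR : 0 < R) (hη : 0 < η) :
    η^2 * ∫ c in (-1:ℝ)..1, (R - u * c) * nfφ2 1 (η*(v - 2*R*c)) = nfN R u η v := by
  have h := intervalIntegral.integral_eq_sub_of_hasDerivAt (a := (-1:ℝ)) (b := 1)
    (f := fun c => -(R - u*c) * nfφ1 1 (η*(v - 2*R*c)) / (2*R*η) + u * nfφ 1 (η*(v - 2*R*c)) / (4*R^2*η^2))
    (f' := fun c => (R - u * c) * nfφ2 1 (η*(v - 2*R*c))) ?_ ?_
  · rw [h]
    unfold nfN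
    simp only [mul_one, mul_neg, sub_neg_eq_add]
    field_simp
    ring
  · intro c _
    have hs : HasDerivAt (fun c : ℝ => η*(v - 2*R*c)) (η * (-(2*R))) c := by
      have := (((hasDerivAt_id c).const_mul (2*R)).const_sub v).const_mul η
      simpa using this
    have h1 := (nfφ1_deriv one_pos (η*(v - 2*R*c))).comp c hs
    have h0 := (nfφ_deriv one_pos (η*(v - 2*R*c))).comp c hs
    have hl : HasDerivAt (fun c : ℝ => -(R - u*c)) u c := by
      have := (((hasDerivAt_id c).const_mul u).const_sub R).neg
      convert! this using 1
      simp
    have := ((hl.mul h1).div_const (2*R*η)).add ((h0.const_mul u).div_const (4*R^2*η^2))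
    convert! this using 1
    simp only [Function.comp]
    field_simp
    ring
  · refine Continuous.intervalIntegrable ?_ _ _
    exact (by fun_prop : Continuous fun c : ℝ => R - u * c).mul ((nfφ2_cont one_pos).comp (by fun_prop))

lemma nf_phi_le {κ η c : ℝ} (hκ : 0 < κ) (hc : κ ≤ |c|) : |nfφ 1 (η * c)| ≤ (1 + (κ*η)^2)⁻¹ := by
  unfold nfφ
  have h2 : κ^2 ≤ c^2 := by rw [← sq_abs c]; exact pow_le_pow_left₀ hκ.le hc 2
  rw [abs_of_nonneg (by positivity), one_div]
  refine inv_anti₀ (by positivity) ?_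
  nlinarith [sq_nonneg η, mul_le_mul_of_nonneg_right h2 (sq_nonneg η)]

lemma nf_phi1_le {κ η c : ℝ} (hκ : 0 < κ) (hc : κ ≤ |c|) :
    |η * nfφ1 1 (η * c)| ≤ 2/κ * (1 + (κ*η)^2)⁻¹ := by
  have h0 := nf_phi_le (η := η) hκ hc
  have hc0 : 0 < |c| := hκ.trans_le hc
  have hpos : 0 < 1 + (η*c)^2 := by positivity
  have e : |η * nfφ1 1 (η * c)| = 2/|c| * ((η*c)^2/(1+(η*c)^2)) * |nfφ 1 (η * c)| := by
    unfold nfφ1 nfφ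
    rw [← sq_abs (η * c), abs_mul η c]
    simp only [abs_div, abs_mul, abs_neg, abs_pow, one_pow]
    rw [← sq_abs (η * c), abs_mul η c] at hpos
    rw [abs_of_pos hpos]
    simp
    field_simp
  rw [e]
  have h3 : (η*c)^2/(1+(η*c)^2) ≤ 1 := by rw [div_le_one hpos]; linarith
  have h4 : 2/|c| ≤ 2/κ := div_le_div_of_nonneg_left (by norm_num) hκ hc
  refine mul_le_mul ?_ h0 (abs_nonneg _) (by positivity)
  calc 2/|c| * ((η*c)^2/(1+(η*c)^2)) ≤ 2/|c| * 1 := mul_le_mul_of_nonneg_left h3 (by positivity)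
    _ ≤ 2/κ := by linarith

lemma nf_N_le {R u η v κ : ℝ} (hR : 0 < R) (hκ : 0 < κ) (hu : |u| ≤ R) (hv : |v| ≤ 2*R - κ) :
    |nfN R u η v| ≤ (4/κ + 1/R) * (1 + (κ*η)^2)⁻¹ := by
  obtain ⟨hv1, hv2⟩ := abs_le.1 hv
  obtain ⟨hu1, hu2⟩ := abs_le.1 hu
  have c1 : κ ≤ |v - 2*R| := by rw [abs_of_neg (by linarith)]; linarith
  have c2 : κ ≤ |v + 2*R| := by rw [abs_of_pos (by linarith)]; linarith
  have a1 := nf_phi_le (η := η) hκ c1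
  have a2 := nf_phi_le (η := η) hκ c2
  have b1 := nf_phi1_le (η := η) hκ c1
  have b2 := nf_phi1_le (η := η) hκ c2
  set X := (1 + (κ*η)^2)⁻¹ with hX
  have hX0 : 0 ≤ X := by positivity
  unfold nfN
  set p1 := η * nfφ1 1 (η*(v-2*R))
  set p2 := η * nfφ1 1 (η*(v+2*R))
  set q1 := nfφ 1 (η*(v-2*R))
  set q2 := nfφ 1 (η*(v+2*R))
  have t1 : |(R-u) * p1 - (R+u) * p2| ≤ 2*R * (2/κ * X) := by
    calc _ ≤ |(R-u)*p1| + |(R+u)*p2| := abs_sub _ _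
      _ = (R-u)*|p1| + (R+u)*|p2| := by rw [abs_mul (R-u), abs_mul (R+u), abs_of_nonneg (by linarith : 0 ≤ R-u), abs_of_nonneg (by linarith : 0 ≤ R+u)]
      _ ≤ (R-u)*(2/κ * X) + (R+u)*(2/κ*X) := add_le_add (mul_le_mul_of_nonneg_left b1 (by linarith)) (mul_le_mul_of_nonneg_left b2 (by linarith))
      _ = _ := by ring
  have t2 : |q1 - q2| ≤ 2*X := (abs_sub _ _).trans (by linarith)
  calc _ ≤ |-1/(2*R) * ((R-u) * p1 - (R+u) * p2)| + |u/(4*R^2) * (q1-q2)| := abs_add_le _ _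
    _ = 1/(2*R) * |(R-u) * p1 - (R+u) * p2| + |u|/(4*R^2) * |q1-q2| := by
        rw [abs_mul, abs_mul, abs_div, abs_div, abs_of_pos (by positivity : 0 < 2*R), abs_of_pos (by positivity : 0 < 4*R^2)]; simp
    _ ≤ 1/(2*R) * (2*R * (2/κ * X)) + R/(4*R^2) * (2*X) := by gcongr
    _ = (2/κ + 1/(2*R)) * X := by field_simp; ring
    _ ≤ _ := by
        refine mul_le_mul_of_nonneg_right ?_ hX0
        refine add_le_add ?_ ?_
        · gcongr; norm_num
        · gcongr; linarith

lemma nf_N_cont (R : ℝ) : Continuous (fun q : ℝ × ℝ × ℝ => nfN R q.1 q.2.1 q.2.2) := by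
  have c0 := nfφ_cont one_pos
  have c1 := nfφ1_cont one_pos
  unfold nfN
  fun_prop

lemma nf_bound_int (C κ : ℝ) (hκ : 0 < κ) : Integrable (fun η : ℝ => C * (1 + (κ*η)^2)⁻¹) := by
  have := (integrable_inv_one_add_sq.comp_mul_left' hκ.ne').const_mul C
  exact this

lemma nf_N_Ioi (R u : ℝ) (hR : 0 < R) (hu : |u| < R) :
    ∫ η in Set.Ioi (0:ℝ), nfN R u η (2*u) = - π / (8*R^2) := by
  obtain ⟨hu1, hu2⟩ := abs_lt.1 hu
  have hA : 0 < R - u := by linarith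
  have hB : 0 < R + u := by linarith
  let P : ℝ → ℝ → ℝ := fun A η => η * nfφ 1 (2*A*η) / 2 - arctan (2*A*η) / (4*A)
  let W : ℝ → ℝ → ℝ := fun A η => arctan (2*A*η) / (2*A)
  have hlin : ∀ A η : ℝ, HasDerivAt (fun η => 2*A*η) (2*A) η := fun A η => by
    simpa using (hasDerivAt_id η).const_mul (2*A)
  have hφ : ∀ x : ℝ, nfφ 1 x = 1/(1+x^2) := fun x => by simp [nfφ]
  have dW : ∀ A η : ℝ, A ≠ 0 → HasDerivAt (W A) (nfφ 1 (2*A*η)) η := by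
    intro A η hA
    have := ((hlin A η).arctan).div_const (2*A)
    convert! this using 1
    rw [hφ]; field_simp
  have dP : ∀ A η : ℝ, A ≠ 0 → HasDerivAt (P A) (A * (η * nfφ1 1 (2*A*η))) η := by
    intro A η hA
    have h1 := ((nfφ_deriv one_pos (2*A*η)).comp η (hlin A η))
    have := (((hasDerivAt_id η).mul h1).div_const 2).sub (((hlin A η).arctan).div_const (4*A))
    convert! this using 1
    simp only [Function.comp, id]
    rw [hφ]
    field_simp
    ring
  have tl : ∀ A : ℝ, 0 < A → Tendsto (fun η : ℝ => 2*A*η) atTop atTop := fun A hA =>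
    tendsto_id.const_mul_atTop (by positivity)
  have tat : ∀ A : ℝ, 0 < A → Tendsto (fun η : ℝ => arctan (2*A*η)) atTop (𝓝 (π/2)) := fun A hA =>
    (tendsto_nhds_of_tendsto_nhdsWithin tendsto_arctan_atTop).comp (tl A hA)
  have tW : ∀ A : ℝ, 0 < A → Tendsto (W A) atTop (𝓝 (π/2/(2*A))) := fun A hA => (tat A hA).div_const _
  have tP : ∀ A : ℝ, 0 < A → Tendsto (P A) atTop (𝓝 (0/2 - π/2/(4*A))) := by
    intro A hA
    refine Tendsto.sub (Tendsto.div_const ?_ _) ((tat A hA).div_const _)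
    have h1 : Tendsto (fun η : ℝ => (4*A^2)⁻¹ * η⁻¹) atTop (𝓝 0) := by
      have := (tendsto_inv_atTop_zero (𝕜 := ℝ)).const_mul (4*A^2)⁻¹
      rwa [mul_zero] at this
    refine squeeze_zero' ?_ ?_ h1
    · filter_upwards [eventually_gt_atTop 0] with η hη
      rw [hφ]; positivity
    · filter_upwards [eventually_gt_atTop 0] with η hη
      rw [hφ, ← mul_inv, ← one_div, mul_one_div, div_le_div_iff₀ (by positivity) (by positivity)]
      nlinarith
  have hd : ∀ η : ℝ, HasDerivAt (fun η => 1/(2*R) * (P (R-u) η + P (R+u) η) + u/(4*R^2) * (W (R-u) η - W (R+u) η)) (nfN R u η (2*u)) η := by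
    intro η
    have := (((dP (R-u) η hA.ne').add (dP (R+u) η hB.ne')).const_mul (1/(2*R))).add (((dW (R-u) η hA.ne').sub (dW (R+u) η hB.ne')).const_mul (u/(4*R^2)))
    convert! this using 1
    unfold nfN
    rw [show η * (2*u - 2*R) = -(2*(R-u)*η) by ring, show η * (2*u+2*R) = 2*(R+u)*η by ring]
    have e1 : ∀ x, nfφ1 1 (-x) = - nfφ1 1 x := fun x => by unfold nfφ1; simp [neg_div]
    have e0 : ∀ x, nfφ 1 (-x) = nfφ 1 x := fun x => by unfold nfφ; simp
    rw [e1, e0]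
    ring
  have hint : IntegrableOn (fun η => nfN R u η (2*u)) (Set.Ioi 0) := by
    have hκ : 0 < 2*R - |2*u| := by rw [abs_mul]; norm_num; exact hu
    refine Integrable.mono' (nf_bound_int (4/(2*R - |2*u|) + 1/R) _ hκ).integrableOn ?_ ?_
    · exact ((nf_N_cont R).comp (by fun_prop : Continuous fun η : ℝ => (u, η, 2*u))).aestronglyMeasurable
    · exact Eventually.of_forall fun η => nf_N_le hR hκ hu.le (by linarith)
  rw [integral_Ioi_of_hasDerivAt_of_tendsto' (fun η _ => hd η) hint
    ((((tP _ hA).add (tP _ hB)).const_mul (1/(2*R))).add (((tW _ hA).sub (tW _ hB)).const_mul (u/(4*R^2))))]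
  simp only [P, W]
  simp
  have : R^2 - u^2 ≠ 0 := by nlinarith
  have hA' := hA.ne'
  have hB' := hB.ne'
  field_simp
  ring

lemma nfφ2_scale {δ : ℝ} (hδ : 0 < δ) (s : ℝ) : nfφ2 δ (δ * s) = (δ^3)⁻¹ * nfφ2 1 s := by
  unfold nfφ2
  have := nf_den hδ (δ * s)
  have h1 : (1:ℝ)^2 + s^2 ≠ 0 := by positivity
  rw [show δ^2 + (δ*s)^2 = δ^2 * (1^2 + s^2) by ring]
  field_simp

noncomputable def nfI (R : ℝ) (y : E3) (S : E3 → ℝ) (δ : ℝ) : ℝ :=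
  ∫ z, S z * ∫ ω : S2, (R - ⟪(ω:E3), y⟫) * nfφ2 δ (‖z - R • (ω:E3)‖^2 - ‖R • (ω:E3) - y‖^2)
    ∂((volume : Measure E3).toSphere)

lemma nf_I_eq (R : ℝ) (hR : 0 < R) (y : E3) (S : E3 → ℝ) {δ : ℝ} (hδ : 0 < δ) :
    nfI R y S δ = ∫ q : S2 × ℝ, 2 * π * (S (y + (δ * q.2) • (q.1:E3)) * nfN R ⟪y, q.1⟫ q.2 (δ * q.2 + 2 * ⟪y, q.1⟫))
      ∂((volume : Measure E3).toSphere.prod ((volume : Measure ℝ).restrict (Set.Ioi 0))) := by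
  unfold nfI
  rw [← integral_add_left_eq_self _ y]
  have h1 := Measure.integral_comp_smul (volume : Measure E3) (fun w => S (y + w) * ∫ ω : S2, (R - ⟪(ω:E3), y⟫) * nfφ2 δ (‖y + w - R • (ω:E3)‖^2 - ‖R • (ω:E3) - y‖^2)
    ∂((volume : Measure E3).toSphere)) δ
  simp only [finrank_euclideanSpace, Fintype.card_fin, smul_eq_mul] at h1
  rw [abs_of_pos (by positivity)] at h1
  have h2 : ∀ I : ℝ, I = δ^3 * ((δ^3)⁻¹ * I) := fun I => by field_simp
  rw [h2 (∫ w, S (y + w) * _), ← h1, nf_polar_s2, ← integral_const_mul]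
  have hr : (volume : Measure E3).toSphere.prod ((volume : Measure ℝ).restrict (Set.Ioi 0)) = 
     ((volume : Measure E3).toSphere.prod (volume : Measure ℝ)).restrict (Set.univ ×ˢ (Set.Ioi 0)) := by
    rw [← Measure.prod_restrict, Measure.restrict_univ]
  rw [hr]
  refine setIntegral_congr_fun (MeasurableSet.univ.prod measurableSet_Ioi) ?_
  rintro ⟨θ, η⟩ ⟨-, hη⟩
  have hη : 0 < η := hη
  have hθ : ‖(θ:E3)‖ = 1 := by simpa using θ.2
  dsimp only
  have e : ∀ ω : S2, (R - ⟪(ω:E3), y⟫) * nfφ2 δ (‖y + δ • η • (θ:E3) - R • (ω:E3)‖^2 - ‖R • (ω:E3) - y‖^2)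
      = (δ^3)⁻¹ * ((R - ⟪(ω:E3), y⟫) * (fun c => nfφ2 1 (η * ((δ * η + 2 * ⟪y, (θ:E3)⟫) - 2 * R * c))) ⟪(ω:E3), (θ:E3)⟫) := by
    intro ω
    have : ‖y + δ • η • (θ:E3) - R • (ω:E3)‖^2 - ‖R • (ω:E3) - y‖^2 = δ * (η * ((δ * η + 2 * ⟪y, (θ:E3)⟫) - 2 * R * ⟪(ω:E3), (θ:E3)⟫)) := by
      rw [show y + δ • η • (θ:E3) - R • (ω:E3) = (δ * η) • (θ:E3) - (R • (ω:E3) - y) by rw [smul_smul]; abel,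
        norm_sub_sq_real, norm_smul, hθ, inner_smul_left, inner_sub_right, inner_smul_right, real_inner_comm y, real_inner_comm (ω : E3)]
      simp only [Real.norm_eq_abs, mul_one, sq_abs, conj_trivial]
      ring
    rw [this, nfφ2_scale hδ]
    ring
  simp only [e]
  rw [integral_const_mul]
  have ha := nf_arch_s2 (θ:E3) hθ y R (fun c => nfφ2 1 (η * ((δ * η + 2 * ⟪y, (θ:E3)⟫) - 2 * R * c)))
    ((nfφ2_cont one_pos).comp (by fun_prop))
  rw [ha, ← nf_N_int R _ η _ hR hη, smul_smul]
  field_simp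

lemma nf_sigma_univ : ((volume : Measure E3).toSphere).real Set.univ = 4 * π := by
  obtain ⟨θ, hθ⟩ : ∃ θ : E3, ‖θ‖ = 1 := ⟨EuclideanSpace.single 0 1, by simp⟩
  have := nf_arch0_s2 θ hθ (fun _ => 1) continuous_const
  simp at this
  rw [Measure.toSphere_real_apply_univ]
  simp
  rw [this]; ring

lemma nf_I_lim (R : ℝ) (hR : 0 < R) (y : E3) (hy : ‖y‖ < R) (S : E3 → ℝ) (hS : Continuous S)
    (hsupp : ∀ z, R ≤ ‖z‖ → S z = 0) :
    Tendsto (nfI R y S) (𝓝[>] 0) (𝓝 (-(π^3 / R^2) * S y)) := by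
  set μ := (volume : Measure E3).toSphere.prod ((volume : Measure ℝ).restrict (Set.Ioi 0)) with hμ
  set κ := R - ‖y‖ with hκd
  have hκ : 0 < κ := by linarith
  obtain ⟨C, hC⟩ : ∃ C, ∀ z, |S z| ≤ C := by
    have hcs : HasCompactSupport S := HasCompactSupport.intro (isCompact_closedBall (0:E3) R) (fun z hz => hsupp z (by
      simp at hz; exact hz.le))
    exact hcs.exists_bound_of_continuous hS
  have hC0 : 0 ≤ C := (abs_nonneg _).trans (hC 0)
  have hNc := nf_N_cont R
  let B : S2 × ℝ → ℝ := fun q => 2 * π * (C * ((4/κ + 1/R) * (1 + (κ*q.2)^2)⁻¹))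
  have hB : Integrable B μ := by
    have h1 : Integrable (fun η : ℝ => 2 * π * (C * ((4/κ + 1/R) * (1 + (κ*η)^2)⁻¹))) (volume.restrict (Set.Ioi 0)) :=
      (((nf_bound_int (4/κ + 1/R) κ hκ).const_mul C).const_mul (2*π)).integrableOn
    exact h1.comp_snd _
  have hu : ∀ θ : S2, |⟪y, (θ:E3)⟫| ≤ ‖y‖ := fun θ => by
    have := abs_real_inner_le_norm y (θ:E3)
    rwa [show ‖(θ:E3)‖ = 1 by simpa using θ.2, mul_one] at this
  have hpt : ∀ δ : ℝ, ∀ q : S2 × ℝ, |2 * π * (S (y + (δ * q.2) • (q.1:E3)) * nfN R ⟪y, q.1⟫ q.2 (δ * q.2 + 2 * ⟪y, q.1⟫))| ≤ B q := by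
    rintro δ ⟨θ, η⟩
    have hθ : ‖(θ:E3)‖ = 1 := by simpa using θ.2
    simp only [B]
    rw [abs_mul, abs_of_pos (by positivity : 0 < 2*π)]
    refine mul_le_mul_of_nonneg_left ?_ (by positivity)
    by_cases h : R ≤ ‖y + (δ * η) • (θ:E3)‖
    · rw [hsupp _ h]; simp only [zero_mul, abs_zero]; positivity
    · push Not at h
      rw [abs_mul]
      refine mul_le_mul (hC _) ?_ (abs_nonneg _) hC0
      refine nf_N_le hR hκ ((hu θ).trans hy.le) ?_
      have : δ * η + 2 * ⟪y, (θ:E3)⟫ = ⟪y + (y + (δ * η) • (θ:E3)), (θ:E3)⟫ := by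
        rw [inner_add_left, inner_add_left, inner_smul_left, real_inner_self_eq_norm_sq, hθ]
        simp; ring
      rw [this]
      refine (abs_real_inner_le_norm _ _).trans ?_
      rw [hθ, mul_one]
      refine (norm_add_le _ _).trans ?_
      linarith
  have hlim : Tendsto (fun δ : ℝ => ∫ q : S2 × ℝ, 2 * π * (S (y + (δ * q.2) • (q.1:E3)) * nfN R ⟪y, q.1⟫ q.2 (δ * q.2 + 2 * ⟪y, q.1⟫)) ∂μ)
      (𝓝[>] 0) (𝓝 (∫ q : S2 × ℝ, 2 * π * (S (y + (0 * q.2) • (q.1:E3)) * nfN R ⟪y, q.1⟫ q.2 (0 * q.2 + 2 * ⟪y, q.1⟫)) ∂μ)) := by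
    refine tendsto_integral_filter_of_dominated_convergence B ?_ ?_ hB ?_
    · refine Eventually.of_forall fun δ => Continuous.aestronglyMeasurable ?_
      refine continuous_const.mul ((by fun_prop : Continuous _).mul ?_)
      exact hNc.comp (by fun_prop : Continuous fun q : S2 × ℝ => ((⟪y, (q.1:E3)⟫ : ℝ), q.2, δ * q.2 + 2 * ⟪y, (q.1:E3)⟫))
    · exact Eventually.of_forall fun δ => Eventually.of_forall fun q => hpt δ q
    · refine Eventually.of_forall fun q => ?_
      have hc : Continuous (fun δ : ℝ => 2 * π * (S (y + (δ * q.2) • (q.1:E3)) * nfN R ⟪y, q.1⟫ q.2 (δ * q.2 + 2 * ⟪y, q.1⟫))) := by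
        refine continuous_const.mul ((by fun_prop : Continuous _).mul ?_)
        exact hNc.comp (by fun_prop : Continuous fun δ : ℝ => ((⟪y, (q.1:E3)⟫ : ℝ), q.2, δ * q.2 + 2 * ⟪y, (q.1:E3)⟫))
      exact (hc.tendsto 0).mono_left nhdsWithin_le_nhds
  have hval : ∫ q : S2 × ℝ, 2 * π * (S (y + (0 * q.2) • (q.1:E3)) * nfN R ⟪y, q.1⟫ q.2 (0 * q.2 + 2 * ⟪y, q.1⟫)) ∂μ = -(π^3 / R^2) * S y := by
    rw [hμ, integral_prod]
    · simp only [zero_mul, zero_smul, add_zero, zero_add, integral_const_mul]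
      have : ∀ θ : S2, ∫ η in Set.Ioi (0:ℝ), nfN R ⟪y, (θ:E3)⟫ η (2 * ⟪y, (θ:E3)⟫) = - π / (8*R^2) := fun θ =>
        nf_N_Ioi R _ hR ((hu θ).trans_lt hy)
      simp only [this]
      rw [integral_const, nf_sigma_univ]
      simp only [smul_eq_mul]
      field_simp
      ring
    · refine Integrable.mono' hB ?_ (Eventually.of_forall fun q => hpt 0 q)
      refine Continuous.aestronglyMeasurable ?_
      refine continuous_const.mul ((by fun_prop : Continuous _).mul ?_)
      exact hNc.comp (by fun_prop : Continuous fun q : S2 × ℝ => ((⟪y, (q.1:E3)⟫ : ℝ), q.2, (0:ℝ) * q.2 + 2 * ⟪y, (q.1:E3)⟫))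
  rw [hval] at hlim
  refine hlim.congr' ?_
  filter_upwards [self_mem_nhdsWithin] with δ hδ
  exact (nf_I_eq R hR y S hδ).symm
lemma nf_sph_cont {X : Type*} [TopologicalSpace X] [FirstCountableTopology X] [LocallyCompactSpace X] (f : X → S2 → ℝ) (hf : Continuous f.uncurry) :
    Continuous (fun x => ∫ ω, f x ω ∂((volume : Measure E3).toSphere)) := by
  have := continuous_parametric_integral_of_continuous (μ := (volume : Measure E3).toSphere) (f := f) hf isCompact_univ
  simpa using this

lemma nf_p_data (R R' : ℝ) (hR' : 0 < R') (hRR : R' < R) (S : E3 → ℝ) (hS : ContDiff ℝ (⊤ : ℕ∞) S)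
    (h0 : ∀ z, R' ≤ ‖z‖ → S z = 0) (p : S2 → ℝ → ℝ)
    (hp : ∀ ω t, p ω t = (t / (4 * π)) * ∫ ω' : S2, S (R • (ω : E3) + t • (ω' : E3)) ∂((volume : Measure E3).toSphere)) :
    ∃ p1 p2 : S2 → ℝ → ℝ, Continuous p.uncurry ∧ Continuous p1.uncurry ∧ Continuous p2.uncurry ∧
      (∀ ω t, HasDerivAt (p ω) (p1 ω t) t) ∧ (∀ ω t, HasDerivAt (p1 ω) (p2 ω t) t) ∧
      (∀ ω t, 0 ≤ t → t < R - R' → p ω t = 0 ∧ p1 ω t = 0) ∧ (∀ ω t, R + R' < t → p ω t = 0 ∧ p1 ω t = 0) := by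
  have hc0 : Continuous S := hS.continuous
  have hd0 : Differentiable ℝ S := hS.differentiable (by simp)
  have hS1 : ContDiff ℝ (⊤ : ℕ∞) (fderiv ℝ S) := hS.fderiv_right (by simp)
  have hc1 : Continuous (fderiv ℝ S) := hS1.continuous
  have hd1 : Differentiable ℝ (fderiv ℝ S) := hS1.differentiable (by simp)
  have hS2 : ContDiff ℝ (⊤ : ℕ∞) (fderiv ℝ (fderiv ℝ S)) := hS1.fderiv_right (by simp)
  have hc2 : Continuous (fderiv ℝ (fderiv ℝ S)) := hS2.continuous
  have hline : ∀ (x v : E3) (t : ℝ), HasDerivAt (fun t : ℝ => x + t • v) v t := fun x v t => by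
    simpa using ((hasDerivAt_id t).smul_const v).const_add x
  have hD0 : ∀ (x v : E3) (t : ℝ), HasDerivAt (fun t : ℝ => S (x + t • v)) (fderiv ℝ S (x + t • v) v) t := fun x v t =>
    (hd0 _).hasFDerivAt.comp_hasDerivAt t (hline x v t)
  have hD1 : ∀ (x v : E3) (t : ℝ), HasDerivAt (fun t : ℝ => fderiv ℝ S (x + t • v) v) (fderiv ℝ (fderiv ℝ S) (x + t • v) v v) t := fun x v t => by
    have := (hd1 _).hasFDerivAt.comp_hasDerivAt t (hline x v t)
    simpa using this.clm_apply (hasDerivAt_const t v)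
  let A0 : S2 → ℝ → ℝ := fun ω t => ∫ ω' : S2, S (R • (ω : E3) + t • (ω' : E3)) ∂((volume : Measure E3).toSphere)
  let A1 : S2 → ℝ → ℝ := fun ω t => ∫ ω' : S2, fderiv ℝ S (R • (ω : E3) + t • (ω' : E3)) ω' ∂((volume : Measure E3).toSphere)
  let A2 : S2 → ℝ → ℝ := fun ω t => ∫ ω' : S2, fderiv ℝ (fderiv ℝ S) (R • (ω : E3) + t • (ω' : E3)) ω' ω' ∂((volume : Measure E3).toSphere)
  have hA0 : Continuous A0.uncurry := nf_sph_cont (X := S2 × ℝ) (fun q ω' => S (R • (q.1 : E3) + q.2 • (ω' : E3))) (by fun_prop)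
  have hA1 : Continuous A1.uncurry := nf_sph_cont (X := S2 × ℝ) (fun q ω' => fderiv ℝ S (R • (q.1 : E3) + q.2 • (ω' : E3)) ω') (by fun_prop)
  have hA2 : Continuous A2.uncurry := nf_sph_cont (X := S2 × ℝ) (fun q ω' => fderiv ℝ (fderiv ℝ S) (R • (q.1 : E3) + q.2 • (ω' : E3)) ω' ω') (by fun_prop)
  have hdA0 : ∀ ω t, HasDerivAt (A0 ω) (A1 ω t) t := fun ω t =>
    nf_sph_deriv (fun t ω' => S (R • (ω : E3) + t • (ω' : E3))) (fun t ω' => fderiv ℝ S (R • (ω : E3) + t • (ω' : E3)) ω')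
      (by fun_prop) (by fun_prop) (fun t ω' => hD0 _ _ t) t
  have hdA1 : ∀ ω t, HasDerivAt (A1 ω) (A2 ω t) t := fun ω t =>
    nf_sph_deriv (fun t ω' => fderiv ℝ S (R • (ω : E3) + t • (ω' : E3)) ω') (fun t ω' => fderiv ℝ (fderiv ℝ S) (R • (ω : E3) + t • (ω' : E3)) ω' ω')
      (by fun_prop) (by fun_prop) (fun t ω' => hD1 _ _ t) t
  have hpe : p = fun ω t => t / (4 * π) * A0 ω t := by
    funext ω t; exact hp ω t
  have hdp : ∀ ω t, HasDerivAt (p ω) ((A0 ω t + t * A1 ω t) / (4 * π)) t := by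
    intro ω t
    rw [hpe]
    convert! ((hasDerivAt_id t).div_const (4 * π)).mul (hdA0 ω t) using 1
    simp; ring
  have hdp1 : ∀ ω t, HasDerivAt (fun t => (A0 ω t + t * A1 ω t) / (4 * π)) ((2 * A1 ω t + t * A2 ω t) / (4 * π)) t := by
    intro ω t
    convert! ((hdA0 ω t).add ((hasDerivAt_id t).mul (hdA1 ω t))).div_const (4 * π) using 1
    simp; ring
  have hnω : ∀ ω : S2, ‖R • (ω : E3)‖ = R := fun ω => by
    rw [norm_smul, show ‖(ω:E3)‖ = 1 by simpa using ω.2]; simp; linarith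
  have hnt : ∀ (t : ℝ) (ω : S2), ‖t • (ω : E3)‖ = |t| := fun t ω => by
    rw [norm_smul, show ‖(ω:E3)‖ = 1 by simpa using ω.2]; simp
  have hz : ∀ ω t, (|t| < R - R' ∨ R + R' < t) → p ω t = 0 := by
    intro ω t ht
    rw [hp]
    have : ∀ ω' : S2, S (R • (ω : E3) + t • (ω' : E3)) = 0 := by
      intro ω'
      apply h0
      rcases ht with ht | ht
      · have := norm_sub_le_norm_add (R • (ω : E3)) (t • (ω' : E3))
        rw [hnω, hnt] at this; linarith
      · have := norm_sub_le_norm_add (t • (ω' : E3)) (R • (ω : E3))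
        rw [hnω, hnt, add_comm (t • (ω' : E3))] at this
        have := le_abs_self t
        linarith
    simp [this]
  have hz1 : ∀ ω t, (|t| < R - R' ∨ R + R' < t) → (A0 ω t + t * A1 ω t) / (4 * π) = 0 := by
    intro ω t ht
    have hop : IsOpen {t : ℝ | |t| < R - R' ∨ R + R' < t} :=
      (isOpen_lt continuous_abs continuous_const).union (isOpen_lt continuous_const continuous_id)
    have he : p ω =ᶠ[𝓝 t] fun _ => 0 := by
      filter_upwards [hop.mem_nhds ht] with s hs using hz ω s hs
    exact (hdp ω t).unique ((hasDerivAt_const t (0:ℝ)).congr_of_eventuallyEq he)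
  refine ⟨fun ω t => (A0 ω t + t * A1 ω t) / (4 * π), fun ω t => (2 * A1 ω t + t * A2 ω t) / (4 * π), ?_, ?_, ?_, hdp, hdp1, ?_, ?_⟩
  · rw [hpe]
    exact (continuous_snd.div_const _).mul hA0
  · exact (hA0.add (continuous_snd.mul hA1)).div_const _
  · exact ((continuous_const.mul hA1).add (continuous_snd.mul hA2)).div_const _
  · intro ω t h1 h2
    have : |t| < R - R' := by rwa [abs_of_nonneg h1]
    exact ⟨hz ω t (Or.inl this), hz1 ω t (Or.inl this)⟩
  · intro ω t h
    exact ⟨hz ω t (Or.inr h), hz1 ω t (Or.inr h)⟩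

lemma nf_norm_deriv (y x : E3) (hxy : x ≠ y) :
    HasFDerivAt (fun x : E3 => ‖x - y‖) ((‖x - y‖)⁻¹ • innerSL ℝ (x - y)) x := by
  have h1 : HasFDerivAt (fun x : E3 => x - y) (ContinuousLinearMap.id ℝ E3) x := (hasFDerivAt_id x).sub_const y
  have hn : 0 < ‖x - y‖ := norm_pos_iff.2 (sub_ne_zero.2 hxy)
  have h2 := h1.norm_sq.sqrt (by positivity)
  simp only [Real.sqrt_sq (norm_nonneg _)] at h2
  convert! h2 using 1
  ext v
  simp
  field_simp

lemma nf_h_deriv (h₀ : ℝ → ℂ)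
    (hh₀ : ∀ z : ℝ, h₀ z = -Complex.I * Complex.exp (Complex.I * (z : ℂ)) / (z : ℂ)) (k : ℝ) (hk : 0 < k)
    (y x v : E3) (hxy : x ≠ y) :
    fderiv ℝ (fun x : E3 => h₀ (k * ‖x - y‖)) x v =
      ((⟪x - y, v⟫ / ‖x - y‖ : ℝ) : ℂ) * (Complex.exp (Complex.I * k * ‖x - y‖) / ‖x - y‖
        + Complex.I * Complex.exp (Complex.I * k * ‖x - y‖) / (k * ‖x - y‖^2)) := by
  have hn : 0 < ‖x - y‖ := norm_pos_iff.2 (sub_ne_zero.2 hxy)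
  set r := ‖x - y‖ with hr
  have hg : HasDerivAt (fun ρ : ℝ => h₀ (k * ρ)) (Complex.exp (Complex.I * k * r) / r
        + Complex.I * Complex.exp (Complex.I * k * r) / (k * r^2)) r := by
    have hid : HasDerivAt (fun ρ : ℝ => ((k * ρ : ℝ) : ℂ)) (k : ℂ) r := by
      have := ((hasDerivAt_id r).const_mul k).ofReal_comp
      simpa using this
    have he := ((hid.const_mul Complex.I).cexp).const_mul (-Complex.I)
    have hne : ((k * r : ℝ) : ℂ) ≠ 0 := by
      exact_mod_cast (mul_pos hk hn).ne'
    have := he.div hid hne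
    have hfe : (fun ρ : ℝ => h₀ (k * ρ)) = fun ρ : ℝ => -Complex.I * Complex.exp (Complex.I * ((k * ρ : ℝ):ℂ)) / ((k * ρ : ℝ):ℂ) := by
      funext ρ; exact hh₀ _
    rw [hfe]
    convert! this using 1
    have hk' : (k:ℂ) ≠ 0 := by exact_mod_cast hk.ne'
    have hr' : (r:ℂ) ≠ 0 := by exact_mod_cast hn.ne'
    push_cast
    rw [show Complex.I * ((k:ℂ) * (r:ℂ)) = Complex.I * k * r by ring]
    generalize Complex.exp (Complex.I * k * r) = e
    field_simp
    ring_nf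
    simp [Complex.I_sq]
  have h4 := (HasFDerivAt.comp (g := fun ρ : ℝ => h₀ (k * ρ)) (f := fun x : E3 => ‖x - y‖) x hg.hasFDerivAt (nf_norm_deriv y x hxy)).fderiv
  have h5 : fderiv ℝ (fun x : E3 => h₀ (k * ‖x - y‖)) x = _ := h4
  rw [h5]
  simp [← hr, div_eq_inv_mul]
  rw [inner_sub_left]
  push_cast
  ring

lemma nf_reU (P P1 P2 : ℝ → ℝ) (hP : Continuous P) (hP1 : Continuous P1) (hP2 : Continuous P2)
    (hd : ∀ t, HasDerivAt P (P1 t) t) (hd1 : ∀ t, HasDerivAt P1 (P2 t) t) (a T : ℝ) (ha : 0 < a) (haT : a < T)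
    (hza : ∀ t, 0 ≤ t → t ≤ a → P t = 0 ∧ P1 t = 0) (hzT : ∀ t, T ≤ t → P t = 0 ∧ P1 t = 0)
    (k r F : ℝ) (hk : 0 < k) (hr : 0 < r) :
    k^2 * (((F:ℂ) * (Complex.exp (Complex.I * k * r) / r
        + Complex.I * Complex.exp (Complex.I * k * r) / (k * r^2))) *
        (starRingEnd ℂ) (∫ t in Set.Ioi (0 : ℝ), (P t : ℂ) * Complex.exp (Complex.I * (k : ℂ) * (t : ℂ)))).re
      = ∫ t in a..T, (F * (- P2 t / r + P1 t / r^2)) * cos (k * (t - r)) := by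
  have h1 : ∫ t in Set.Ioi (0 : ℝ), (P t : ℂ) * Complex.exp (Complex.I * (k : ℂ) * (t : ℂ))
     = ∫ t in a..T, (P t : ℂ) * Complex.exp (Complex.I * (k : ℂ) * (t : ℂ)) := by
    rw [intervalIntegral.integral_of_le haT.le]
    refine (setIntegral_eq_of_subset_of_forall_sdiff_eq_zero measurableSet_Ioi (fun t ht => ha.trans ht.1) ?_)
    rintro t ⟨ht0, ht⟩
    have ht0 : 0 < t := ht0
    have : P t = 0 := by
      by_cases h : t ≤ a
      · exact (hza t ht0.le h).1
      · refine (hzT t ?_).1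
        by_contra h'
        exact ht ⟨lt_of_not_ge h, le_of_not_ge h'⟩
    simp [this]
  rw [h1]
  have hcI : ∀ f : ℝ → ℂ, (starRingEnd ℂ) (∫ t in a..T, f t) = ∫ t in a..T, (starRingEnd ℂ) (f t) := by
    intro f
    rw [intervalIntegral.integral_of_le haT.le, intervalIntegral.integral_of_le haT.le, integral_conj]
  rw [hcI, ← intervalIntegral.integral_const_mul]
  have h2 := Complex.reCLM.intervalIntegral_comp_comm (μ := volume) (a := a) (b := T) (f := fun t : ℝ => ((F:ℂ) * (Complex.exp (Complex.I * k * r) / r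
        + Complex.I * Complex.exp (Complex.I * k * r) / (k * r^2))) * (starRingEnd ℂ) ((P t : ℂ) * Complex.exp (Complex.I * (k : ℂ) * (t : ℂ))))
      (by
        apply Continuous.intervalIntegrable
        refine continuous_const.mul (Complex.continuous_conj.comp ?_)
        fun_prop)
  simp only [Complex.reCLM_apply] at h2
  rw [← h2, ← intervalIntegral.integral_const_mul]
  have h3 : ∀ t : ℝ, k^2 * (((F:ℂ) * (Complex.exp (Complex.I * k * r) / r
        + Complex.I * Complex.exp (Complex.I * k * r) / (k * r^2))) * (starRingEnd ℂ) ((P t : ℂ) * Complex.exp (Complex.I * (k : ℂ) * (t : ℂ)))).re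
      = F * (P t * (k^2 / r * cos (k * (t - r)) + k / r^2 * sin (k * (t - r)))) := by
    intro t
    have e1 : Complex.exp (Complex.I * k * r) = (cos (k*r) : ℂ) + (sin (k*r) : ℂ) * Complex.I := by
      rw [show Complex.I * k * r = ((k * r : ℝ) : ℂ) * Complex.I by push_cast; ring, Complex.exp_mul_I]
      push_cast; rfl
    have e2 : Complex.exp (Complex.I * k * t) = (cos (k*t) : ℂ) + (sin (k*t) : ℂ) * Complex.I := by
      rw [show Complex.I * k * t = ((k * t : ℝ) : ℂ) * Complex.I by push_cast; ring, Complex.exp_mul_I]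
      push_cast; rfl
    have e3 : ((F:ℂ) * (Complex.exp (Complex.I * k * r) / r
        + Complex.I * Complex.exp (Complex.I * k * r) / (k * r^2))) 
        = ((F * (cos (k*r) / r - sin (k*r) / (k*r^2)) : ℝ) : ℂ) + ((F * (sin (k*r) / r + cos (k*r) / (k * r^2)) : ℝ) : ℂ) * Complex.I := by
      rw [e1]
      push_cast
      linear_combination (F * Complex.sin (k*r) / (k * r^2)) * Complex.I_sq
    rw [e3, e2, mul_sub k t r, sin_sub, cos_sub]
    simp only [map_mul, map_add, Complex.conj_ofReal, Complex.conj_I, Complex.mul_re, Complex.add_re, Complex.add_im, Complex.mul_im, Complex.ofReal_re, Complex.ofReal_im, Complex.I_re, Complex.I_im, Complex.neg_re, Complex.neg_im]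
    field_simp
    ring
  simp only [h3]
  have h4 := intervalIntegral.integral_eq_sub_of_hasDerivAt (a := a) (b := T)
    (f := fun t => F * ((1/r) * (P1 t * cos (k * (t - r)) + P t * (k * sin (k * (t - r)))) - (1/r^2) * (P t * cos (k * (t - r)))))
    (f' := fun t => F * (P t * (k^2 / r * cos (k * (t - r)) + k / r^2 * sin (k * (t - r)))) - (F * (- P2 t / r + P1 t / r^2)) * cos (k * (t - r)))
    (by
      intro t _
      have hl : HasDerivAt (fun t => k * (t - r)) k t := by simpa using ((hasDerivAt_id t).sub_const r).const_mul k
      have hc := hl.cos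
      have hs := hl.sin
      convert! ((((((hd1 t).mul hc).add ((hd t).mul (hs.const_mul k))).const_mul (1/r)).sub (((hd t).mul hc).const_mul (1/r^2))).const_mul F) using 1
      field_simp
      ring)
    (by apply Continuous.intervalIntegrable; fun_prop)
  rw [intervalIntegral.integral_sub (by apply Continuous.intervalIntegrable; fun_prop) (by apply Continuous.intervalIntegrable; fun_prop)] at h4
  rw [(hza a ha.le le_rfl).1, (hza a ha.le le_rfl).2, (hzT T le_rfl).1, (hzT T le_rfl).2] at h4
  simp only [zero_mul, add_zero, mul_zero, sub_zero] at h4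
  linarith

lemma nf_fub {X : Type*} [TopologicalSpace X] [MeasurableSpace X] [BorelSpace X] [SecondCountableTopology X] (ν : Measure X) [SFinite ν]
    (G τ : X → ℝ) (hG : Integrable G ν) (hτ : Continuous τ) (ε : ℝ) (hε : 0 < ε) :
    ∫ k in Set.Ioi (0:ℝ), exp (-ε * k) * ∫ q, G q * cos (k * τ q) ∂ν = ∫ q, G q * nfφ ε (τ q) ∂ν := by
  have h1 : ∀ k : ℝ, exp (-ε * k) * ∫ q, G q * cos (k * τ q) ∂ν = ∫ q, exp (-ε * k) * (G q * cos (k * τ q)) ∂ν := fun k => by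
    rw [integral_const_mul]
  simp only [h1]
  rw [integral_integral_swap]
  · congr 1
    funext q
    rw [← nf_laplace ε (τ q) hε, ← integral_const_mul]
    congr 1; funext k; ring
  · have hE : Integrable (fun k : ℝ => exp (-ε * k)) (volume.restrict (Set.Ioi 0)) := exp_neg_integrableOn_Ioi 0 hε
    have hpr := hE.mul_prod hG
    have hm : AEStronglyMeasurable (fun z : ℝ × X => cos (z.1 * τ z.2)) ((volume.restrict (Set.Ioi (0:ℝ))).prod ν) :=
      (Continuous.aestronglyMeasurable (by fun_prop))
    refine (hpr.mul_bdd (c := 1) hm (Eventually.of_forall fun z => ?_)).congr (Eventually.of_forall fun z => ?_)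
    · simpa using abs_cos_le_one _
    · simp [Function.uncurry]; ring

lemma nf_lim_sph (G : S2 → ℝ → ℝ) (hG : Continuous G.uncurry) (r : S2 → ℝ) (hr : Continuous r) (a T : ℝ)
    (har : ∀ ω, a < r ω) (hrT : ∀ ω, r ω < T) :
    Tendsto (fun δ => ∫ ω, (∫ t in a..T, G ω t * nfφ δ (t - r ω)) ∂((volume : Measure E3).toSphere))
      (𝓝[>] 0) (𝓝 (∫ ω, π * G ω (r ω) ∂((volume : Measure E3).toSphere))) := by
  obtain ⟨C, hC⟩ := ((isCompact_univ (X := S2)).prod (isCompact_Icc (a := a) (b := T))).exists_bound_of_continuousOn hG.continuousOn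
  refine tendsto_integral_filter_of_dominated_convergence (fun _ => C * π) ?_ ?_ (integrable_const _) ?_
  · filter_upwards [self_mem_nhdsWithin] with δ hδ
    have hδ : 0 < δ := hδ
    have hφ := nfφ_cont hδ
    refine Continuous.aestronglyMeasurable ?_
    exact intervalIntegral.continuous_parametric_intervalIntegral_of_continuous' (f := fun ω t => G ω t * nfφ δ (t - r ω)) (by
      refine hG.mul ?_
      fun_prop) a T
  · filter_upwards [self_mem_nhdsWithin] with δ hδ
    refine Eventually.of_forall fun ω => ?_
    exact nf_peak_bound (G ω) a T (r ω) C ((har ω).trans (hrT ω)).le (fun t ht => hC (ω, t) ⟨Set.mem_univ _, ht⟩) hδ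
  · refine Eventually.of_forall fun ω => ?_
    exact nf_peak (G ω) a T (r ω) (har ω) (hrT ω) (by
      have : Continuous (G ω) := hG.comp (by fun_prop : Continuous fun t : ℝ => (ω, t))
      exact this.continuousOn)

lemma nf_polar_p (S : E3 → ℝ) (hS : Continuous S) (R : ℝ) (h0 : ∀ z, R ≤ ‖z‖ → S z = 0) (x : E3)
    (Ψ : ℝ → ℝ) (hΨ : Continuous Ψ) :
    ∫ z, S z * Ψ ‖z - x‖ = ∫ t in Set.Ioi (0:ℝ), t^2 * Ψ t * ∫ ω' : S2, S (x + t • (ω':E3)) ∂((volume : Measure E3).toSphere) := by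
  rw [← integral_add_left_eq_self _ x]
  simp only [add_sub_cancel_left]
  rw [nf_polar_s2, integral_prod_symm]
  · refine setIntegral_congr_fun measurableSet_Ioi fun t ht => ?_
    have ht : 0 < t := ht
    simp only
    rw [← integral_const_mul]
    congr 1; funext ω
    rw [norm_smul, show ‖(ω:E3)‖ = 1 by simp, Real.norm_eq_abs, abs_of_pos ht, mul_one]
    ring
  · refine Continuous.integrable_of_hasCompactSupport (by fun_prop) ?_
    refine HasCompactSupport.intro (K := Set.univ ×ˢ Set.Icc (-(R + ‖x‖)) (R + ‖x‖)) (isCompact_univ.prod isCompact_Icc) ?_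
    rintro ⟨ω, t⟩ hq
    simp only
    rw [h0, zero_mul, mul_zero]
    by_contra hc
    push Not at hc
    apply hq
    refine ⟨Set.mem_univ _, abs_le.1 ?_⟩
    have := norm_sub_le_norm_add (t • (ω:E3)) x
    rw [norm_smul, show ‖(ω:E3)‖ = 1 by simp, Real.norm_eq_abs, mul_one, add_comm (t • (ω:E3))] at this
    simp only
    linarith

lemma nf_parts (P P1 P2 : ℝ → ℝ) (hP : Continuous P) (hP1 : Continuous P1) (hP2 : Continuous P2)
    (hd : ∀ t, HasDerivAt P (P1 t) t) (hd1 : ∀ t, HasDerivAt P1 (P2 t) t) (a T : ℝ) (ha : 0 < a) (haT : a < T)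
    (hza : P a = 0 ∧ P1 a = 0) (hzT : P T = 0 ∧ P1 T = 0) (r : ℝ) {δ : ℝ} (hδ : 0 < δ) :
    ∫ t in a..T, (P2 t / t - P1 t / t^2) * nfφ δ (t^2 - r^2) = 4 * ∫ t in a..T, P t * t * nfφ2 δ (t^2 - r^2) := by
  have c0 := nfφ_cont hδ
  have c2 := nfφ2_cont hδ
  have hi1 : IntervalIntegrable (fun t => (P2 t / t - P1 t / t^2) * nfφ δ (t^2 - r^2)) volume a T := by
    refine ContinuousOn.intervalIntegrable_of_Icc haT.le ?_
    refine ContinuousOn.mul (ContinuousOn.sub (hP2.continuousOn.div continuousOn_id fun t ht => (ha.trans_le ht.1).ne')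
      (hP1.continuousOn.div (by fun_prop) fun t ht => (pow_pos (ha.trans_le ht.1) 2).ne')) (by fun_prop)
  have hi2 : IntervalIntegrable (fun t => 4 * (P t * t * nfφ2 δ (t^2 - r^2))) volume a T :=
    Continuous.intervalIntegrable (by fun_prop) _ _
  have h := intervalIntegral.integral_eq_sub_of_hasDerivAt (a := a) (b := T)
    (f := fun t => P1 t / t * nfφ δ (t^2 - r^2) - 2 * (P t * nfφ1 δ (t^2 - r^2)))
    (f' := fun t => (P2 t / t - P1 t / t^2) * nfφ δ (t^2 - r^2) - 4 * (P t * t * nfφ2 δ (t^2 - r^2)))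
    (by
      intro t ht
      rw [Set.uIcc_of_le haT.le] at ht
      have ht0 : t ≠ 0 := (ha.trans_le ht.1).ne'
      have hq : HasDerivAt (fun t : ℝ => t^2 - r^2) (2 * t) t := by
        simpa using (hasDerivAt_pow 2 t).sub_const (r^2)
      have e0 := (nfφ_deriv hδ (t^2 - r^2)).comp t hq
      have e1 := (nfφ1_deriv hδ (t^2 - r^2)).comp t hq
      convert! (((hd1 t).div (hasDerivAt_id t) ht0).mul e0).sub (((hd t).mul e1).const_mul 2) using 1
      simp only [Function.comp, id, Pi.div_apply]
      field_simp
      ring) (hi1.sub hi2)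
  rw [intervalIntegral.integral_sub hi1 hi2, intervalIntegral.integral_const_mul] at h
  rw [hza.1, hza.2, hzT.1, hzT.2] at h
  simp only [zero_mul, zero_div, mul_zero, sub_zero] at h
  linarith

lemma nf_subst {a T : ℝ} (B : ℝ → ℝ) (hB : ContinuousOn B (Set.Ici a)) (ha : 0 < a) (haT : a < T) (r : ℝ) {δ : ℝ} (hδ : 0 < δ) :
    ∫ t in a..T, B t * nfφ δ (t^2 - r^2)
     = ∫ q in (a^2)..(T^2), (B (max a (√q)) / (2 * max a (√q))) * nfφ δ (q - r^2) := by
  have c0 := nfφ_cont hδ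
  have hg : Continuous (fun q => (B (max a (√q)) / (2 * max a (√q))) * nfφ δ (q - r^2)) := by
    refine Continuous.mul (Continuous.div ?_ (by fun_prop) ?_) (by fun_prop)
    · exact hB.comp_continuous (by fun_prop) (fun q => Set.mem_Ici.2 (le_max_left _ _))
    · intro q
      have : a ≤ max a (√q) := le_max_left _ _
      positivity
  have h := intervalIntegral.integral_comp_mul_deriv (a := a) (b := T) (f := fun t : ℝ => t^2) (f' := fun t => 2 * t)
    (g := fun q => (B (max a (√q)) / (2 * max a (√q))) * nfφ δ (q - r^2))
    (fun t _ => by simpa using hasDerivAt_pow 2 t) (by fun_prop) hg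
  rw [← h]
  refine intervalIntegral.integral_congr fun t ht => ?_
  rw [Set.uIcc_of_le haT.le] at ht
  have ht0 : 0 < t := ha.trans_le ht.1
  simp only [Function.comp]
  rw [Real.sqrt_sq ht0.le, max_eq_right ht.1]
  field_simp

lemma nf_step2 (R : ℝ) (hR : 0 < R) (y : E3) (hy : ‖y‖ < R) (S : E3 → ℝ) (hS : Continuous S)
    (h0 : ∀ z, R ≤ ‖z‖ → S z = 0) (p p1 p2 : S2 → ℝ → ℝ)
    (hp : ∀ ω t, p ω t = (t / (4 * π)) * ∫ ω' : S2, S (R • (ω : E3) + t • (ω' : E3)) ∂((volume : Measure E3).toSphere))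
    (hc : Continuous p.uncurry) (hc1 : Continuous p1.uncurry) (hc2 : Continuous p2.uncurry)
    (hd : ∀ ω t, HasDerivAt (p ω) (p1 ω t) t) (hd1 : ∀ ω t, HasDerivAt (p1 ω) (p2 ω t) t)
    (a T : ℝ) (ha : 0 < a) (haT : a < T)
    (hza : ∀ ω t, 0 ≤ t → t ≤ a → p ω t = 0 ∧ p1 ω t = 0) (hzT : ∀ ω t, T ≤ t → p ω t = 0 ∧ p1 ω t = 0)
    (har : ∀ ω : S2, a < ‖R • (ω:E3) - y‖) (hrT : ∀ ω : S2, ‖R • (ω:E3) - y‖ < T) :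
    ∫ ω : S2, π * ((R - ⟪(ω:E3), y⟫) * ((p2 ω ‖R • (ω:E3) - y‖ / ‖R • (ω:E3) - y‖ - p1 ω ‖R • (ω:E3) - y‖ / ‖R • (ω:E3) - y‖^2)
       / (2 * ‖R • (ω:E3) - y‖))) ∂((volume : Measure E3).toSphere)
      = - (π^2 / R^2) * S y := by
  have hpω : ∀ {f : S2 → ℝ → ℝ}, Continuous f.uncurry → ∀ ω, Continuous (f ω) := fun hf ω =>
    hf.comp (by fun_prop : Continuous fun t : ℝ => (ω, t))
  have hT0 : 0 < T := ha.trans haT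
  let G : S2 → ℝ → ℝ := fun ω q => (R - ⟪(ω:E3), y⟫) * ((p2 ω (max a (√q)) / max a (√q) - p1 ω (max a (√q)) / (max a (√q))^2) / (2 * max a (√q)))
  have hm : ∀ q, 0 < max a (√q) := fun q => lt_max_of_lt_left ha
  have hG : Continuous G.uncurry := by
    have hmc : Continuous (fun q : S2 × ℝ => max a (√q.2)) := by fun_prop
    have hmp : Continuous (fun q : S2 × ℝ => (q.1, max a (√q.2))) := by fun_prop
    refine Continuous.mul (by fun_prop) (Continuous.div (Continuous.sub ((hc2.comp hmp).div hmc fun q => (hm _).ne')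
      ((hc1.comp hmp).div (hmc.pow 2) fun q => (pow_pos (hm _) 2).ne')) (by fun_prop) fun q => (mul_pos two_pos (hm _)).ne')
  have hL := nf_lim_sph G hG (fun ω => ‖R • (ω:E3) - y‖^2) (by fun_prop) (a^2) (T^2)
    (fun ω => by have := har ω; gcongr) (fun ω => by have := hrT ω; gcongr)
  have hval : ∀ ω : S2, G ω (‖R • (ω:E3) - y‖^2) = (R - ⟪(ω:E3), y⟫) * ((p2 ω ‖R • (ω:E3) - y‖ / ‖R • (ω:E3) - y‖ - p1 ω ‖R • (ω:E3) - y‖ / ‖R • (ω:E3) - y‖^2)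
       / (2 * ‖R • (ω:E3) - y‖)) := by
    intro ω
    simp only [G]
    rw [Real.sqrt_sq (norm_nonneg _), max_eq_right (har ω).le]
  simp only [hval] at hL
  have hI := (nf_I_lim R hR y hy S hS h0).const_mul (1/π)
  have hev : (fun δ => ∫ ω, (∫ t in (a^2)..(T^2), G ω t * nfφ δ (t - ‖R • (ω:E3) - y‖^2)) ∂((volume : Measure E3).toSphere))
      =ᶠ[𝓝[>] 0] fun δ => (1/π) * nfI R y S δ := by
    filter_upwards [self_mem_nhdsWithin] with δ hδ
    have hδ : 0 < δ := hδ
    have c2 := nfφ2_cont hδ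
    have h1 : ∀ ω : S2, (∫ t in (a^2)..(T^2), G ω t * nfφ δ (t - ‖R • (ω:E3) - y‖^2))
        = (1/π) * ∫ z, S z * ((R - ⟪(ω:E3), y⟫) * nfφ2 δ (‖z - R • (ω:E3)‖^2 - ‖R • (ω:E3) - y‖^2)) := by
      intro ω
      set r := ‖R • (ω:E3) - y‖ with hr
      have e1 := nf_subst (a := a) (T := T) (fun t => p2 ω t / t - p1 ω t / t^2)
        (((hpω hc2 ω).continuousOn.div continuousOn_id fun t ht => (ha.trans_le ht).ne').sub
          ((hpω hc1 ω).continuousOn.div (by fun_prop) fun t ht => (pow_pos (ha.trans_le ht) 2).ne')) ha haT r hδ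
      have e2 := nf_parts (p ω) (p1 ω) (p2 ω) (hpω hc ω) (hpω hc1 ω) (hpω hc2 ω) (hd ω) (hd1 ω) a T ha haT
        (hza ω a ha.le le_rfl) (hzT ω T le_rfl) r hδ
      have e3 := nf_polar_p S hS R h0 (R • (ω:E3)) (fun t => nfφ2 δ (t^2 - r^2)) (by fun_prop)
      have e4 : ∫ t in Set.Ioi (0:ℝ), t^2 * nfφ2 δ (t^2 - r^2) * ∫ ω' : S2, S (R • (ω:E3) + t • (ω':E3)) ∂((volume : Measure E3).toSphere)
         = 4 * π * ∫ t in a..T, p ω t * t * nfφ2 δ (t^2 - r^2) := by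
        rw [← intervalIntegral.integral_const_mul, intervalIntegral.integral_of_le haT.le]
        have : ∀ t : ℝ, t^2 * nfφ2 δ (t^2 - r^2) * ∫ ω' : S2, S (R • (ω:E3) + t • (ω':E3)) ∂((volume : Measure E3).toSphere)
           = 4 * π * (p ω t * t * nfφ2 δ (t^2 - r^2)) := by
          intro t; rw [hp]; field_simp
        simp only [this]
        refine (setIntegral_eq_of_subset_of_forall_sdiff_eq_zero measurableSet_Ioi (fun t ht => ha.trans ht.1) ?_)
        rintro t ⟨ht0, ht⟩
        have ht0 : 0 < t := ht0
        have : p ω t = 0 := by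
          by_cases h : t ≤ a
          · exact (hza ω t ht0.le h).1
          · refine (hzT ω t ?_).1
            by_contra h'
            exact ht ⟨lt_of_not_ge h, le_of_not_ge h'⟩
        simp [this]
      have e5 : ∫ z, S z * ((R - ⟪(ω:E3), y⟫) * nfφ2 δ (‖z - R • (ω:E3)‖^2 - r^2))
         = (R - ⟪(ω:E3), y⟫) * ∫ z, S z * nfφ2 δ (‖z - R • (ω:E3)‖^2 - r^2) := by
        rw [← integral_const_mul]; congr 1; funext z; ring
      rw [e5, e3, e4]
      have e6 : (∫ t in (a^2)..(T^2), G ω t * nfφ δ (t - r^2)) = (R - ⟪(ω:E3), y⟫) * ∫ q in (a^2)..(T^2), ((p2 ω (max a (√q)) / max a (√q) - p1 ω (max a (√q)) / (max a (√q))^2) / (2 * max a (√q))) * nfφ δ (q - r^2) := by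
        rw [← intervalIntegral.integral_const_mul]; congr 1; funext q; simp only [G]; ring
      rw [e6, ← e1, e2]
      field_simp
    simp only [h1]
    rw [integral_const_mul, integral_integral_swap]
    · simp only [integral_const_mul]
      rfl
    · refine Continuous.integrable_of_hasCompactSupport (by fun_prop) ?_
      refine HasCompactSupport.intro (K := Set.univ ×ˢ Metric.closedBall 0 R) (isCompact_univ.prod (isCompact_closedBall _ _)) ?_
      rintro ⟨ω, z⟩ hq
      simp only [Function.uncurry]
      rw [h0, zero_mul]
      by_contra hcon
      push Not at hcon
      exact hq ⟨Set.mem_univ _, by simpa using hcon.le⟩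
  have := tendsto_nhds_unique (hL.congr' hev) hI
  rw [this]
  field_simp

/-- **Frequency-domain near-field reconstruction in 3D** (Theorem 2.5).
Let `S` be smooth with compact support in `B_R(0)`, `p` the Kirchhoff solution with
initial velocity `S`, and `u(x,k) = ∫_0^∞ p(x,t) e^{ikt} dt` the temporal Fourier
transform of the boundary data. With `h₀(z) = −i e^{iz}/z`, for every `y ∈ B_R(0)`,
`S(y) = lim_{ε→0⁺} (1/(2π²)) ∫_0^∞ e^{−εk} k² ∫_{∂B_R(0)}
  Re[ ∂_{ν_x} h₀(k|x−y|) conj(u(x,k)) ] ds(x) dk`,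
where the surface integral over the sphere of radius `R` is parametrized as `x = Rω`
with surface element `R² dσ(ω)` and outward unit normal `ν_x = ω`. -/
theorem near_field_reconstruction_freq_3d (R : ℝ) (hR : 0 < R)
    (σ : Measure (Metric.sphere (0 : EuclideanSpace ℝ (Fin 3)) 1))
    (hσ : σ = (volume : Measure (EuclideanSpace ℝ (Fin 3))).toSphere)
    (S : EuclideanSpace ℝ (Fin 3) → ℝ)
    (hS : ContDiff ℝ (⊤ : ℕ∞) S) (hsupp : HasCompactSupport S)
    (hsub : tsupport S ⊆ Metric.ball (0 : EuclideanSpace ℝ (Fin 3)) R)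
    (p : EuclideanSpace ℝ (Fin 3) → ℝ → ℝ)
    (hp : ∀ x t, p x t = (t / (4 * π)) *
      ∫ ω : Metric.sphere (0 : EuclideanSpace ℝ (Fin 3)) 1,
        S (x + t • (ω : EuclideanSpace ℝ (Fin 3))) ∂σ)
    (u : EuclideanSpace ℝ (Fin 3) → ℝ → ℂ)
    (hu : ∀ x k, u x k =
      ∫ t in Set.Ioi (0 : ℝ), (p x t : ℂ) * Complex.exp (Complex.I * (k : ℂ) * (t : ℂ)))
    (h₀ : ℝ → ℂ)
    (hh₀ : ∀ z : ℝ, h₀ z = -Complex.I * Complex.exp (Complex.I * (z : ℂ)) / (z : ℂ))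
    (y : EuclideanSpace ℝ (Fin 3))
    (hy : y ∈ Metric.ball (0 : EuclideanSpace ℝ (Fin 3)) R) :
    Tendsto (fun ε : ℝ =>
        (1 / (2 * π ^ 2)) *
          ∫ k in Set.Ioi (0 : ℝ), Real.exp (-ε * k) * k ^ 2 *
            ∫ ω : Metric.sphere (0 : EuclideanSpace ℝ (Fin 3)) 1,
              (R ^ 2 : ℝ) *
                (fderiv ℝ
                    (fun x : EuclideanSpace ℝ (Fin 3) => h₀ (k * ‖x - y‖))
                    (R • (ω : EuclideanSpace ℝ (Fin 3)))
                    (ω : EuclideanSpace ℝ (Fin 3)) *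
                  (starRingEnd ℂ) (u (R • (ω : EuclideanSpace ℝ (Fin 3))) k)).re ∂σ)
      (𝓝[>] (0 : ℝ)) (𝓝 (S y)) := by
  subst hσ
  have hyR : ‖y‖ < R := by simpa using hy
  obtain ⟨R', hR'0, hR'R, h0'⟩ : ∃ R' : ℝ, 0 < R' ∧ R' < R ∧ ∀ z, R' ≤ ‖z‖ → S z = 0 := by
    by_cases hne : (tsupport S).Nonempty
    · obtain ⟨m, hm, hmax⟩ := hsupp.isCompact.exists_isMaxOn hne continuous_norm.continuousOn
      have hmR : ‖m‖ < R := by simpa using hsub hm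
      refine ⟨(‖m‖ + R) / 2, by positivity, by linarith, fun z hz => ?_⟩
      refine image_eq_zero_of_notMem_tsupport fun hzm => ?_
      have : ‖z‖ ≤ ‖m‖ := hmax hzm
      linarith
    · refine ⟨R / 2, by linarith, by linarith, fun z _ => ?_⟩
      exact image_eq_zero_of_notMem_tsupport fun hzm => hne ⟨z, hzm⟩
  have h0 : ∀ z, R ≤ ‖z‖ → S z = 0 := fun z hz => h0' z (hR'R.le.trans hz)
  set P : S2 → ℝ → ℝ := fun ω t => p (R • (ω : E3)) t with hP
  obtain ⟨p1, p2, hc, hc1, hc2, hd, hd1, hz, hzT'⟩ := nf_p_data R R' hR'0 hR'R S hS h0' P (fun ω t => hp _ t)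
  obtain ⟨a, ha, ha1, ha2⟩ : ∃ a : ℝ, 0 < a ∧ a < R - R' ∧ a < R - ‖y‖ := by
    obtain ⟨a, h1, h2⟩ := exists_between (lt_min (sub_pos.2 hR'R) (sub_pos.2 hyR))
    exact ⟨a, h1, h2.trans_le (min_le_left _ _), h2.trans_le (min_le_right _ _)⟩
  set T := 2 * R + 1 with hT
  have haT : a < T := by linarith
  have hza : ∀ ω t, 0 ≤ t → t ≤ a → P ω t = 0 ∧ p1 ω t = 0 := fun ω t h1 h2 => hz ω t h1 (by linarith)
  have hzT : ∀ ω t, T ≤ t → P ω t = 0 ∧ p1 ω t = 0 := fun ω t h => hzT' ω t (by linarith)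
  have hnω : ∀ ω : S2, ‖R • (ω : E3)‖ = R := fun ω => by
    rw [norm_smul, show ‖(ω:E3)‖ = 1 by simp, Real.norm_eq_abs, abs_of_pos hR, mul_one]
  have har : ∀ ω : S2, a < ‖R • (ω:E3) - y‖ := fun ω => by
    have := norm_sub_norm_le (R • (ω:E3)) y
    rw [hnω] at this; linarith
  have hrT : ∀ ω : S2, ‖R • (ω:E3) - y‖ < T := fun ω => by
    have := norm_sub_le (R • (ω:E3)) y
    rw [hnω] at this; linarith
  have hpω : ∀ {f : S2 → ℝ → ℝ}, Continuous f.uncurry → ∀ ω, Continuous (f ω) := fun hf ω =>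
    hf.comp (by fun_prop : Continuous fun t : ℝ => (ω, t))
  have hstep2 := nf_step2 R hR y hyR S hS.continuous h0 P p1 p2 (fun ω t => hp _ t) hc hc1 hc2 hd hd1 a T ha haT hza hzT har hrT
  let r : S2 → ℝ := fun ω => ‖R • (ω:E3) - y‖
  have hr0 : ∀ ω, 0 < r ω := fun ω => ha.trans (har ω)
  have hrc : Continuous r := by fun_prop
  let G : S2 → ℝ → ℝ := fun ω t => (⟪R • (ω:E3) - y, (ω:E3)⟫ / r ω) * (- p2 ω t / r ω + p1 ω t / (r ω)^2)
  have hG : Continuous G.uncurry := by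
    have hrc' : Continuous (fun q : S2 × ℝ => r q.1) := by fun_prop
    refine Continuous.mul (Continuous.div (by fun_prop) hrc' fun q => (hr0 _).ne')
      (Continuous.add (hc2.neg.div hrc' fun q => (hr0 _).ne') (hc1.div (hrc'.pow 2) fun q => (pow_pos (hr0 _) 2).ne'))
  have hlim := (nf_lim_sph G hG r hrc a T har hrT).const_mul (1 / (2 * π^2) * R^2)
  have hin : ∀ ω : S2, ⟪R • (ω:E3) - y, (ω:E3)⟫ = R - ⟪(ω:E3), y⟫ := fun ω => by
    rw [inner_sub_left, inner_smul_left, real_inner_self_eq_norm_sq, show ‖(ω:E3)‖ = 1 by simp, real_inner_comm]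
    simp
  have hfin : 1 / (2 * π^2) * R^2 * ∫ ω, π * G ω (r ω) ∂((volume : Measure E3).toSphere) = S y := by
    have : ∀ ω : S2, π * G ω (r ω) = (-2) * (π * ((R - ⟪(ω:E3), y⟫) * ((p2 ω ‖R • (ω:E3) - y‖ / ‖R • (ω:E3) - y‖ - p1 ω ‖R • (ω:E3) - y‖ / ‖R • (ω:E3) - y‖^2)
       / (2 * ‖R • (ω:E3) - y‖)))) := by
      intro ω
      have := hr0 ω
      simp only [G, hin]
      simp only [r] at this ⊢
      field_simp
      ring
    simp only [this]
    rw [integral_const_mul, hstep2]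
    field_simp
  rw [hfin] at hlim
  refine hlim.congr' ?_
  filter_upwards [self_mem_nhdsWithin] with ε hε
  have hε : 0 < ε := hε
  rw [mul_assoc]
  congr 1
  have hGi : Integrable G.uncurry ((volume : Measure E3).toSphere.prod (volume.restrict (Set.Ioc a T))) := by
    obtain ⟨C, hC⟩ := ((isCompact_univ (X := S2)).prod (isCompact_Icc (a := a) (b := T))).exists_bound_of_continuousOn hG.continuousOn
    refine Integrable.mono' (integrable_const C) hG.aestronglyMeasurable ?_
    have : ((volume : Measure E3).toSphere.prod (volume.restrict (Set.Ioc a T))) = ((volume : Measure E3).toSphere.prod volume).restrict (Set.univ ×ˢ Set.Ioc a T) := by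
      rw [← Measure.prod_restrict, Measure.restrict_univ]
    rw [this]
    refine (ae_restrict_iff' (MeasurableSet.univ.prod measurableSet_Ioc)).2 (Eventually.of_forall ?_)
    rintro ⟨ω, t⟩ hq
    exact hC _ ⟨Set.mem_univ _, Set.Ioc_subset_Icc_self hq.2⟩
  have hτ : Continuous (fun q : S2 × ℝ => q.2 - r q.1) := by fun_prop
  have hfub := nf_fub _ G.uncurry (fun q => q.2 - r q.1) hGi hτ ε hε
  have hR1 : ∫ q, G.uncurry q * nfφ ε (q.2 - r q.1) ∂((volume : Measure E3).toSphere.prod (volume.restrict (Set.Ioc a T)))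
     = ∫ ω, (∫ t in a..T, G ω t * nfφ ε (t - r ω)) ∂((volume : Measure E3).toSphere) := by
    rw [integral_prod]
    · simp only [intervalIntegral.integral_of_le haT.le]; rfl
    · have hb : ∀ s, ‖nfφ ε s‖ ≤ 1 / ε := by
        intro s
        unfold nfφ
        rw [Real.norm_eq_abs, abs_of_nonneg (by positivity), div_le_div_iff₀ (by positivity) hε]
        nlinarith [sq_nonneg s]
      exact hGi.mul_bdd (c := 1/ε) ((nfφ_cont hε).comp hτ).aestronglyMeasurable (Eventually.of_forall fun q => hb _)
  rw [← hR1, ← hfub, ← integral_const_mul]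
  refine setIntegral_congr_fun measurableSet_Ioi fun k hk => ?_
  have hk : 0 < k := hk
  rw [integral_const_mul]
  have hGk : ∫ q, G.uncurry q * cos (k * (q.2 - r q.1)) ∂((volume : Measure E3).toSphere.prod (volume.restrict (Set.Ioc a T)))
     = ∫ ω, (∫ t in a..T, G ω t * cos (k * (t - r ω))) ∂((volume : Measure E3).toSphere) := by
    rw [integral_prod]
    · simp only [intervalIntegral.integral_of_le haT.le]; rfl
    · exact hGi.mul_bdd (c := 1) (Continuous.aestronglyMeasurable (by fun_prop)) (Eventually.of_forall fun q => by
        simpa using abs_cos_le_one _)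
  rw [hGk]
  have hpt : ∀ ω : S2, (∫ t in a..T, G ω t * cos (k * (t - r ω))) = k^2 * (fderiv ℝ
                    (fun x : EuclideanSpace ℝ (Fin 3) => h₀ (k * ‖x - y‖))
                    (R • (ω : EuclideanSpace ℝ (Fin 3)))
                    (ω : EuclideanSpace ℝ (Fin 3)) *
                  (starRingEnd ℂ) (u (R • (ω : EuclideanSpace ℝ (Fin 3))) k)).re := by
    intro ω
    have hne : R • (ω:E3) ≠ y := by
      have := hr0 ω
      simp only [r] at this
      exact sub_ne_zero.1 (norm_pos_iff.1 this)
    rw [nf_h_deriv h₀ hh₀ k hk y _ _ hne, hu]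
    exact (nf_reU (P ω) (p1 ω) (p2 ω) (hpω hc ω) (hpω hc1 ω) (hpω hc2 ω) (hd ω) (hd1 ω) a T ha haT (hza ω) (hzT ω) k (r ω) _ hk (hr0 ω)).symm
  simp only [hpt]
  rw [integral_const_mul]
  ring
end
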